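/- Let S be a quasi-hereditary algebra with Ringel dual S'. For every λ ∈ Λ⁺, the projective dimension of the standard module Δ(λ) of S equals the Δ-filtration dimension of the costandard module ∇'(λ) of S', and the ∇-filtration dimension of Δ(λ) equals the injective dimension of ∇'(λ): proj(Δ(λ)) = wfd(∇'(λ)) and gfd(Δ(λ)) = inj(∇'(λ)). -/

import Mathlib

/-!
Common definitions for formalizing "On the global and ∇-filtration dimensions of
quasi-hereditary algebras" by Erdmann and Parker.

We work with a finite-dimensional algebra `S` over a field `k`; since `S` is
finite dimensional over `k`, the finite-dimensional `S`-modules are exactly the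
finitely generated ones, so we express finite-dimensionality of a module `M` as
`Module.Finite S M`.
-/

open CategoryTheory

namespace QHPaper

variable (S : Type) [Ring S]

/-- The subquotient `B ⧸ A` associated to two submodules `A B` of `M`. -/
abbrev subquot {M : ModuleCat.{0} S} (A B : Submodule S ↥M) : Type :=
  ↥B ⧸ (Submodule.comap B.subtype A)

/-- A filtration `⊥ = f 0 ≤ f 1 ≤ ⋯ ≤ f n = ⊤` of `M` whose `i`-th section
`f (i+1) / f i` is isomorphic to the prescribed module `D i`. -/
def HasFiltrationWithSections (M : ModuleCat.{0} S) (n : ℕ)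
    (f : Fin (n + 1) → Submodule S ↥M) (D : Fin n → ModuleCat.{0} S) : Prop :=
  Monotone f ∧ f 0 = ⊥ ∧ f (Fin.last n) = ⊤ ∧
    ∀ i : Fin n, Nonempty ((subquot S (f i.castSucc) (f i.succ)) ≃ₗ[S] ↥(D i))

/-- `L` occurs as a (simple) subquotient of `M`; for `L` simple this says that `L`
is a composition factor of `M`. -/
def IsCompFactor (L M : ModuleCat.{0} S) : Prop :=
  ∃ (A B : Submodule S ↥M), A ≤ B ∧ Nonempty ((subquot S A B) ≃ₗ[S] ↥L)

/-- `L` occurs with multiplicity `m` among the sections of a composition series of `M`. -/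
def CompFactorMult (L M : ModuleCat.{0} S) (m : ℕ) : Prop :=
  ∃ (n : ℕ) (f : Fin (n + 1) → Submodule S ↥M),
    Monotone f ∧ f 0 = ⊥ ∧ f (Fin.last n) = ⊤ ∧
    (∀ i : Fin n, IsSimpleModule S (subquot S (f i.castSucc) (f i.succ))) ∧
    Nat.card {i : Fin n // Nonempty ((subquot S (f i.castSucc) (f i.succ)) ≃ₗ[S] ↥L)} = m

/-- `P` is a projective cover of `M`: `P` is projective and there is a surjection
`P → M` whose kernel is superfluous in `P`. -/
def IsProjCover (P M : ModuleCat.{0} S) : Prop :=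
  Module.Projective S ↥P ∧ ∃ π : ↥P →ₗ[S] ↥M, Function.Surjective π ∧
    ∀ N : Submodule S ↥P, N ⊔ LinearMap.ker π = ⊤ → N = ⊤

/-- `I` is an injective hull of `M`: `I` is injective and there is an injection
`M → I` with essential image. -/
def IsInjHull (I M : ModuleCat.{0} S) : Prop :=
  Module.Injective S ↥I ∧ ∃ ι : ↥M →ₗ[S] ↥I, Function.Injective ι ∧
    ∀ N : Submodule S ↥I, N ⊓ LinearMap.range ι = ⊥ → N = ⊥

/-- The data of a quasi-hereditary algebra structure on `S` with weight poset `Λ`: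
a full set `L` of pairwise non-isomorphic simple modules, their projective covers `P`
and injective hulls `I`, the standard modules `std` (largest quotient of `P lam` with
all composition factors `L mu`, `mu ≤ lam`), the costandard modules `costd`
(largest submodule of `I lam` with all composition factors `L mu`, `mu ≤ lam`),
such that `L lam` occurs exactly once in `std lam` and `P lam` is filtered by
standard modules `std mu` with `mu ≥ lam`, with `std lam` occurring exactly once. -/
structure QHData (Λ : Type) [Fintype Λ] [PartialOrder Λ] where
  L : Λ → ModuleCat.{0} S
  P : Λ → ModuleCat.{0} S
  I : Λ → ModuleCat.{0} S
  std : Λ → ModuleCat.{0} S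
  costd : Λ → ModuleCat.{0} S
  finiteL : ∀ lam, Module.Finite S ↥(L lam)
  simpleL : ∀ lam, IsSimpleModule S ↥(L lam)
  nonisoL : ∀ lam mu, lam ≠ mu → IsEmpty (↥(L lam) ≃ₗ[S] ↥(L mu))
  fullL : ∀ M : ModuleCat.{0} S, IsSimpleModule S ↥M → ∃ lam, Nonempty (↥M ≃ₗ[S] ↥(L lam))
  projCover : ∀ lam, IsProjCover S (P lam) (L lam)
  injHull : ∀ lam, IsInjHull S (I lam) (L lam)
  stdSpec : ∀ lam, ∃ K : Submodule S ↥(P lam),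
    Nonempty (↥(std lam) ≃ₗ[S] (↥(P lam) ⧸ K)) ∧
    (∀ mu, IsCompFactor S (L mu) (ModuleCat.of S (↥(P lam) ⧸ K)) → mu ≤ lam) ∧
    ∀ K' : Submodule S ↥(P lam),
      (∀ mu, IsCompFactor S (L mu) (ModuleCat.of S (↥(P lam) ⧸ K')) → mu ≤ lam) → K ≤ K'
  costdSpec : ∀ lam, ∃ V : Submodule S ↥(I lam),
    Nonempty (↥(costd lam) ≃ₗ[S] ↥V) ∧
    (∀ mu, IsCompFactor S (L mu) (ModuleCat.of S ↥V) → mu ≤ lam) ∧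
    ∀ V' : Submodule S ↥(I lam),
      (∀ mu, IsCompFactor S (L mu) (ModuleCat.of S ↥V') → mu ≤ lam) → V' ≤ V
  multOne : ∀ lam, CompFactorMult S (L lam) (std lam) 1
  projFilt : ∀ lam, ∃ (n : ℕ) (f : Fin (n + 1) → Submodule S ↥(P lam)) (g : Fin n → Λ),
    HasFiltrationWithSections S (P lam) n f (fun i => std (g i)) ∧
    (∀ i, lam ≤ g i) ∧ Nat.card {i : Fin n // g i = lam} = 1

variable {Λ : Type} [Fintype Λ] [PartialOrder Λ]

/-- `M` has a filtration with costandard sections, i.e. `M ∈ F(∇)`. -/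
def InCostdFilt (Q : QHData S Λ) (M : ModuleCat.{0} S) : Prop :=
  ∃ (n : ℕ) (f : Fin (n + 1) → Submodule S ↥M) (g : Fin n → Λ),
    HasFiltrationWithSections S M n f (fun i => Q.costd (g i))

/-- `M` has a filtration with standard sections, i.e. `M ∈ F(Δ)`. -/
def InStdFilt (Q : QHData S Λ) (M : ModuleCat.{0} S) : Prop :=
  ∃ (n : ℕ) (f : Fin (n + 1) → Submodule S ↥M) (g : Fin n → Λ),
    HasFiltrationWithSections S M n f (fun i => Q.std (g i))

/-- `0 → N 0 → N 1 → ⋯ → N (n+1) → 0` is exact. -/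
def IsExactSeq (n : ℕ) (N : Fin (n + 2) → ModuleCat.{0} S)
    (f : ∀ i : Fin (n + 1), ↥(N i.castSucc) →ₗ[S] ↥(N i.succ)) : Prop :=
  Function.Injective (f 0) ∧ Function.Surjective (f (Fin.last n)) ∧
    ∀ i : Fin n, LinearMap.range (f i.castSucc) = LinearMap.ker (f i.succ)

/-- `M` has a ∇-resolution (co-resolution by modules in `F(∇)`) of length `d`:
`0 → M → M₀ → ⋯ → M_d → 0` with each `Mᵢ ∈ F(∇)`. -/
def GfdLE (Q : QHData S Λ) (M : ModuleCat.{0} S) (d : ℕ) : Prop :=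
  ∃ (N : Fin (d + 2) → ModuleCat.{0} S)
    (f : ∀ i : Fin (d + 1), ↥(N i.castSucc) →ₗ[S] ↥(N i.succ)),
    IsExactSeq S d N f ∧ N 0 = M ∧ ∀ i : Fin (d + 1), InCostdFilt S Q (N i.succ)

/-- The ∇-filtration dimension (good filtration dimension) of a module. -/
noncomputable def gfd (Q : QHData S Λ) (M : ModuleCat.{0} S) : ℕ :=
  sInf {d | GfdLE S Q M d}

/-- `M` has a resolution `0 → M_d → ⋯ → M₀ → M → 0` with each `Mᵢ ∈ F(Δ)`. -/
def WfdLE (Q : QHData S Λ) (M : ModuleCat.{0} S) (d : ℕ) : Prop :=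
  ∃ (N : Fin (d + 2) → ModuleCat.{0} S)
    (f : ∀ i : Fin (d + 1), ↥(N i.castSucc) →ₗ[S] ↥(N i.succ)),
    IsExactSeq S d N f ∧ N (Fin.last (d + 1)) = M ∧
    ∀ i : Fin (d + 1), InStdFilt S Q (N i.castSucc)

/-- The Δ-filtration dimension of a module. -/
noncomputable def wfd (Q : QHData S Λ) (M : ModuleCat.{0} S) : ℕ :=
  sInf {d | WfdLE S Q M d}

/-- `M` has a projective resolution of length `d`. -/
def ProjdimLE (M : ModuleCat.{0} S) (d : ℕ) : Prop :=
  ∃ (N : Fin (d + 2) → ModuleCat.{0} S)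
    (f : ∀ i : Fin (d + 1), ↥(N i.castSucc) →ₗ[S] ↥(N i.succ)),
    IsExactSeq S d N f ∧ N (Fin.last (d + 1)) = M ∧
    ∀ i : Fin (d + 1), Module.Projective S ↥(N i.castSucc)

/-- The projective dimension of a module. -/
noncomputable def projdim (M : ModuleCat.{0} S) : ℕ :=
  sInf {d | ProjdimLE S M d}

/-- `M` has an injective resolution of length `d`. -/
def InjdimLE (M : ModuleCat.{0} S) (d : ℕ) : Prop :=
  ∃ (N : Fin (d + 2) → ModuleCat.{0} S)
    (f : ∀ i : Fin (d + 1), ↥(N i.castSucc) →ₗ[S] ↥(N i.succ)),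
    IsExactSeq S d N f ∧ N 0 = M ∧
    ∀ i : Fin (d + 1), Module.Injective S ↥(N i.succ)

/-- The injective dimension of a module. -/
noncomputable def injdim (M : ModuleCat.{0} S) : ℕ :=
  sInf {d | InjdimLE S M d}

/-- `gfd(S)`: the supremum of the ∇-filtration dimensions of all
finite-dimensional `S`-modules. -/
noncomputable def gfdAlg (Q : QHData S Λ) : ℕ :=
  sSup {d | ∃ M : ModuleCat.{0} S, Module.Finite S ↥M ∧ gfd S Q M = d}

/-- `wfd(S)`: the supremum of the Δ-filtration dimensions of all
finite-dimensional `S`-modules. -/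
noncomputable def wfdAlg (Q : QHData S Λ) : ℕ :=
  sSup {d | ∃ M : ModuleCat.{0} S, Module.Finite S ↥M ∧ wfd S Q M = d}

/-- The global dimension of `S`: the supremum of the projective dimensions of all
finite-dimensional `S`-modules. -/
noncomputable def globdim : ℕ :=
  sSup {d | ∃ M : ModuleCat.{0} S, Module.Finite S ↥M ∧ projdim S M = d}

/-- `Ext^n_S(A, B) ≠ 0`. -/
noncomputable def extNe (A B : ModuleCat.{0} S) (n : ℕ) : Prop :=
  Nontrivial ↥(((Ext ℤ (ModuleCat.{0} S) n).obj (Opposite.op A)).obj B)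

/-- A simple-preserving duality on `S`: a contravariant, exact, fully faithful,
additive self-functor `D` on the category of finite-dimensional `S`-modules with
`D (D M) ≅ M` and `D (L lam) ≅ L lam` for all `lam`. -/
structure Duality (Q : QHData S Λ) where
  D : ModuleCat.{0} S → ModuleCat.{0} S
  Dmap : ∀ {A B : ModuleCat.{0} S}, (↥A →ₗ[S] ↥B) → (↥(D B) →ₗ[S] ↥(D A))
  finD : ∀ M : ModuleCat.{0} S, Module.Finite S ↥M → Module.Finite S ↥(D M)
  Did : ∀ A : ModuleCat.{0} S, Module.Finite S ↥A →
    Dmap (LinearMap.id : ↥A →ₗ[S] ↥A) = LinearMap.id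
  Dcomp : ∀ {A B C : ModuleCat.{0} S}, Module.Finite S ↥A → Module.Finite S ↥B →
    Module.Finite S ↥C → ∀ (f : ↥A →ₗ[S] ↥B) (g : ↥B →ₗ[S] ↥C),
      Dmap (g ∘ₗ f) = Dmap f ∘ₗ Dmap g
  Dadd : ∀ {A B : ModuleCat.{0} S}, Module.Finite S ↥A → Module.Finite S ↥B →
    ∀ (f g : ↥A →ₗ[S] ↥B), Dmap (f + g) = Dmap f + Dmap g
  Dfull : ∀ {A B : ModuleCat.{0} S}, Module.Finite S ↥A → Module.Finite S ↥B →
    Function.Bijective (fun f : ↥A →ₗ[S] ↥B => Dmap f)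
  Dexact : ∀ {A B C : ModuleCat.{0} S}, Module.Finite S ↥A → Module.Finite S ↥B →
    Module.Finite S ↥C → ∀ (f : ↥A →ₗ[S] ↥B) (g : ↥B →ₗ[S] ↥C),
      Function.Injective f → Function.Surjective g →
      LinearMap.range f = LinearMap.ker g →
      Function.Injective (Dmap g) ∧ Function.Surjective (Dmap f) ∧
        LinearMap.range (Dmap g) = LinearMap.ker (Dmap f)
  Dinvol : ∀ M : ModuleCat.{0} S, Module.Finite S ↥M → Nonempty (↥(D (D M)) ≃ₗ[S] ↥M)
  DL : ∀ lam, Nonempty (↥(D (Q.L lam)) ≃ₗ[S] ↥(Q.L lam))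

/-- Strong property A: `mu < lam` implies `gfd (L mu) < gfd (L lam)`. -/
def StrongPropA (Q : QHData S Λ) : Prop :=
  ∀ mu lam : Λ, mu < lam → gfd S Q (Q.L mu) < gfd S Q (Q.L lam)

/-- Property A: `mu < lam` implies `gfd (L mu) ≤ gfd (L lam)`. -/
def PropA (Q : QHData S Λ) : Prop :=
  ∀ mu lam : Λ, mu < lam → gfd S Q (Q.L mu) ≤ gfd S Q (Q.L lam)

/-- Property B: `mu < lam` implies `wfd (∇ mu) ≤ wfd (∇ lam)`. -/
def PropB (Q : QHData S Λ) : Prop :=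
  ∀ mu lam : Λ, mu < lam → wfd S Q (Q.costd mu) ≤ wfd S Q (Q.costd lam)

/-- Property C: `wfd (∇ lam) = gfd S - inj (∇ lam)` for all `lam`. -/
def PropC (Q : QHData S Λ) : Prop :=
  ∀ lam : Λ, wfd S Q (Q.costd lam) = gfdAlg S Q - injdim S (Q.costd lam)

/-- Property D: `wfd (∇ lam) = wfd (L lam)` for all `lam`. -/
def PropD (Q : QHData S Λ) : Prop :=
  ∀ lam : Λ, wfd S Q (Q.costd lam) = wfd S Q (Q.L lam)

/-- Property E: `mu < lam` implies `inj (∇ mu) ≥ inj (∇ lam)`. -/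
def PropE (Q : QHData S Λ) : Prop :=
  ∀ mu lam : Λ, mu < lam → injdim S (Q.costd lam) ≤ injdim S (Q.costd mu)

/-- The partial order is minimal for the quasi-hereditary structure: whenever
`mu < lam` are adjacent, `L mu` is a composition factor of `Δ lam` or of `∇ lam`. -/
def MinimalOrder (Q : QHData S Λ) : Prop :=
  ∀ mu lam : Λ, mu < lam → (¬ ∃ nu, mu < nu ∧ nu < lam) →
    IsCompFactor S (Q.L mu) (Q.std lam) ∨ IsCompFactor S (Q.L mu) (Q.costd lam)

/-- `S` is connected (indecomposable as an algebra, i.e. one block): the only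
central idempotents are `0` and `1`. -/
def ConnectedRing : Prop :=
  ∀ c : S, c * c = c → (∀ s : S, c * s = s * c) → c = 0 ∨ c = 1

/-- A tilting module: a module in `F(Δ) ∩ F(∇)`. -/
def IsTilting (Q : QHData S Λ) (T : ModuleCat.{0} S) : Prop :=
  InStdFilt S Q T ∧ InCostdFilt S Q T

/-- The indecomposable tilting module `T(lam)`: an indecomposable tilting module in
which `L lam` occurs exactly once and all other composition factors `L mu` have
`mu < lam`. -/
def IsIndecTilting (Q : QHData S Λ) (lam : Λ) (T : ModuleCat.{0} S) : Prop :=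
  IsTilting S Q T ∧ Nontrivial ↥T ∧
    (∀ A B : Submodule S ↥T, IsCompl A B → A = ⊥ ∨ B = ⊥) ∧
    CompFactorMult S (Q.L lam) T 1 ∧
    ∀ mu, IsCompFactor S (Q.L mu) T → mu = lam ∨ mu < lam

/-- A full tilting module: a (finite-dimensional) tilting module having every
indecomposable tilting module as a direct summand. -/
def IsFullTilting (Q : QHData S Λ) (T : ModuleCat.{0} S) : Prop :=
  IsTilting S Q T ∧ Module.Finite S ↥T ∧
    ∀ (lam : Λ) (Tl : ModuleCat.{0} S), IsIndecTilting S Q lam Tl →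
      ∃ Cc : ModuleCat.{0} S, Nonempty (↥T ≃ₗ[S] (↥Tl × ↥Cc))

/-- The Ringel dual ring `S' = End_S(T)^op`. -/
abbrev RingelDualRing (T : ModuleCat.{0} S) : Type := (Module.End S ↥T)ᵐᵒᵖ

/-- `Hom_S(T, X)` is a module over `S' = End_S(T)^op` via `f • φ = φ ∘ f`. -/
instance homTModule (T X : ModuleCat.{0} S) :
    Module (RingelDualRing S T) (↥T →ₗ[S] ↥X) where
  smul a φ := φ ∘ₗ a.unop
  one_smul φ := rfl
  mul_smul a b φ := rfl
  smul_zero a := rfl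
  smul_add a φ ψ := rfl
  add_smul a b φ := by
    ext x
    show φ ((a.unop + b.unop) x) = φ (a.unop x) + φ (b.unop x)
    rw [LinearMap.add_apply, map_add]
  zero_smul φ := by
    ext x
    show φ ((0 : Module.End S ↥T) x) = 0
    rw [LinearMap.zero_apply, map_zero]

/-- The `S'`-module `Hom_S(T, X)`, i.e. the image of `X` under the functor
`F = Hom_S(T, -)`. -/
noncomputable def homTMod (T X : ModuleCat.{0} S) :
    ModuleCat.{0} (RingelDualRing S T) :=
  ModuleCat.of (RingelDualRing S T) (↥T →ₗ[S] ↥X)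

/-- `Q'` is a Ringel dual quasi-hereditary structure for `(Q, T)`:
`T` is a full tilting module, `Q'` is a quasi-hereditary structure on
`S' = End_S(T)^op` for the opposite poset, and its standard modules are
`Δ'(lam) = Hom_S(T, ∇(lam))`. -/
def IsRingelDualData (Q : QHData S Λ) (T : ModuleCat.{0} S)
    (Q' : QHData (RingelDualRing S T) Λᵒᵈ) : Prop :=
  IsFullTilting S Q T ∧
    ∀ lam : Λ, Nonempty
      (↥(Q'.std (OrderDual.toDual lam)) ≃ₗ[RingelDualRing S T]
        (↥T →ₗ[S] ↥(Q.costd lam)))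

/-- `0 → T_d → ⋯ → T_0 → M → 0` exact with all `T_i` tilting modules. -/
def TiltResLE (Q : QHData S Λ) (M : ModuleCat.{0} S) (d : ℕ) : Prop :=
  ∃ (N : Fin (d + 2) → ModuleCat.{0} S)
    (f : ∀ i : Fin (d + 1), ↥(N i.castSucc) →ₗ[S] ↥(N i.succ)),
    IsExactSeq S d N f ∧ N (Fin.last (d + 1)) = M ∧
    ∀ i : Fin (d + 1), IsTilting S Q (N i.castSucc)

/-- An idempotent `e` is primitive if it is nonzero and is not the sum of two
nonzero orthogonal idempotents. -/
def IsPrimitiveIdempotent (e : S) : Prop :=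
  e * e = e ∧ e ≠ 0 ∧ ∀ a b : S, a * a = a → b * b = b → a * b = 0 → b * a = 0 →
    e = a + b → a = 0 ∨ b = 0

/-- The additive subgroup `e•M = {m | e • m = m}` of `M` (for `e` idempotent). -/
def cornerSet (eG : S) (M : ModuleCat.{0} S) : AddSubgroup ↥M where
  carrier := {m | eG • m = m}
  add_mem' := by
    intro a b ha hb
    simp only [Set.mem_setOf_eq] at *
    rw [smul_add, ha, hb]
  zero_mem' := by
    simp only [Set.mem_setOf_eq]
    rw [smul_zero]
  neg_mem' := by
    intro a ha
    simp only [Set.mem_setOf_eq] at *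
    rw [smul_neg, ha]

/-- The `R`-module structure on `e•M`, where `ι : R → S` identifies `R` with the
corner ring `eSe` (as a non-unital ring, with `ι 1 = e`). -/
def cornerModuleStructure (R : Type) [Ring R] (ι : R →ₙ+* S) (eG : S)
    (hone : ι 1 = eG) (hrange : ∀ r : R, eG * ι r * eG = ι r)
    (M : ModuleCat.{0} S) : Module R ↥(cornerSet S eG M) where
  smul r m := ⟨ι r • (m : ↥M), by
    have hm : eG • (m : ↥M) = (m : ↥M) := m.2
    show eG • (ι r • (m : ↥M)) = ι r • (m : ↥M)
    have h : eG • (ι r • (m : ↥M)) = (eG * ι r * eG) • (m : ↥M) := by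
      rw [mul_assoc, mul_smul, mul_smul, hm]
    rw [h, hrange]⟩
  one_smul m := by
    apply Subtype.ext
    show ι 1 • (m : ↥M) = (m : ↥M)
    rw [hone]
    exact m.2
  mul_smul r s m := by
    apply Subtype.ext
    show ι (r * s) • (m : ↥M) = ι r • (ι s • (m : ↥M))
    rw [map_mul, mul_smul]
  smul_zero r := by
    apply Subtype.ext
    show ι r • (0 : ↥M) = 0
    rw [smul_zero]
  smul_add r m n := by
    apply Subtype.ext
    show ι r • ((m : ↥M) + (n : ↥M)) = ι r • (m : ↥M) + ι r • (n : ↥M)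
    rw [smul_add]
  add_smul r s m := by
    apply Subtype.ext
    show ι (r + s) • (m : ↥M) = ι r • (m : ↥M) + ι s • (m : ↥M)
    rw [map_add, add_smul]
  zero_smul m := by
    apply Subtype.ext
    show ι 0 • (m : ↥M) = 0
    rw [map_zero, zero_smul]

/-- The `R`-module `e•M`, where `R ≅ eSe` via `ι`. -/
noncomputable def cornerMod (R : Type) [Ring R] (ι : R →ₙ+* S) (eG : S)
    (hone : ι 1 = eG) (hrange : ∀ r : R, eG * ι r * eG = ι r)
    (M : ModuleCat.{0} S) : ModuleCat.{0} R :=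
  @ModuleCat.of R _ ↥(cornerSet S eG M) _
    (cornerModuleStructure S R ι eG hone hrange M)

end QHPaper

namespace QHPaper
open CategoryTheory
noncomputable section

section ExtLayer
variable {S : Type} [Ring S]

/-- Vanishing of `Ext^n_S(M,N)`. -/
def EV (S : Type) [Ring S] (M N : Type) [AddCommGroup M] [Module S M] [AddCommGroup N]
    [Module S N] (n : ℕ) : Prop :=
  Subsingleton (Abelian.Ext (ModuleCat.of S M) (ModuleCat.of S N) n)

variable {A B C M N X Y : Type} [AddCommGroup A] [Module S A] [AddCommGroup B] [Module S B]
  [AddCommGroup C] [Module S C] [AddCommGroup M] [Module S M] [AddCommGroup N] [Module S N]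
  [AddCommGroup X] [Module S X] [AddCommGroup Y] [Module S Y]

/-- Short exact sequences of modules. -/
structure SES (f : A →ₗ[S] B) (g : B →ₗ[S] C) : Prop where
  inj : Function.Injective f
  surj : Function.Surjective g
  ex : ∀ b, g b = 0 ↔ ∃ a, f a = b

theorem SES.comp_zero {f : A →ₗ[S] B} {g : B →ₗ[S] C} (h : SES f g) (a : A) : g (f a) = 0 :=
  (h.ex _).2 ⟨a, rfl⟩

theorem SES.ofSub (N : Submodule S M) : SES N.subtype N.mkQ where
  inj := N.injective_subtype
  surj := N.mkQ_surjective
  ex b := by simp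

theorem SES.ofSurj (g : B →ₗ[S] C) (hg : Function.Surjective g) :
    SES (LinearMap.ker g).subtype g where
  inj := Submodule.injective_subtype _
  surj := hg
  ex b := by simp

theorem SES.ofInj (f : A →ₗ[S] B) (hf : Function.Injective f) :
    SES f (LinearMap.range f).mkQ where
  inj := hf
  surj := Submodule.mkQ_surjective _
  ex b := by simp

/-- lift along a mono -/
theorem SES.factor {f : A →ₗ[S] B} {g : B →ₗ[S] C} (h : SES f g) (u : X →ₗ[S] B)
    (hu : ∀ x, g (u x) = 0) : ∃ v : X →ₗ[S] A, ∀ x, f (v x) = u x := by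
  let e := LinearEquiv.ofInjective f h.inj
  refine ⟨e.symm.toLinearMap ∘ₗ u.codRestrict (LinearMap.range f) (fun x => ?_), fun x => ?_⟩
  · obtain ⟨a, ha⟩ := (h.ex _).1 (hu x)
    exact ⟨a, ha⟩
  · have := e.apply_symm_apply (u.codRestrict (LinearMap.range f) (fun x => by
      obtain ⟨a, ha⟩ := (h.ex _).1 (hu x)
      exact ⟨a, ha⟩) x)
    have h2 := congrArg Subtype.val this
    simpa [e] using h2

/-- descend along an epi -/
theorem SES.desc {f : A →ₗ[S] B} {g : B →ₗ[S] C} (h : SES f g) (u : B →ₗ[S] X)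
    (hu : ∀ a, u (f a) = 0) : ∃ v : C →ₗ[S] X, ∀ b, v (g b) = u b := by
  let e := g.quotKerEquivOfSurjective h.surj
  refine ⟨(LinearMap.ker g).liftQ u ?_ ∘ₗ e.symm.toLinearMap, fun b => ?_⟩
  · intro b hb
    obtain ⟨a, rfl⟩ := (h.ex _).1 hb
    exact hu a
  · have : e.symm (g b) = (LinearMap.ker g).mkQ b := by
      rw [LinearEquiv.symm_apply_eq]; rfl
    simp [this]

theorem SES.shortExact {f : A →ₗ[S] B} {g : B →ₗ[S] C} (h : SES f g) :
    ∃ w, (ShortComplex.mk (ModuleCat.ofHom f) (ModuleCat.ofHom g) w).ShortExact := by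
  refine ⟨?_, ?_⟩
  · ext a; exact h.comp_zero a
  · exact
      { exact := by
          rw [ShortComplex.moduleCat_exact_iff]
          intro x hx
          exact (h.ex x).1 hx
        mono_f := (ModuleCat.mono_iff_injective _).2 h.inj
        epi_g := (ModuleCat.epi_iff_surjective _).2 h.surj }

theorem EV.retract_left {n : ℕ} (i : M →ₗ[S] N) (r : N →ₗ[S] M) (h : ∀ x, r (i x) = x)
    (H : EV S N Y n) : EV S M Y n := by
  unfold EV at *
  have key : ModuleCat.ofHom i ≫ ModuleCat.ofHom r = 𝟙 _ := by ext x; exact h x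
  refine subsingleton_of_forall_eq 0 fun e => ?_
  have h1 : (Abelian.Ext.mk₀ (ModuleCat.ofHom i)).comp
    ((Abelian.Ext.mk₀ (ModuleCat.ofHom r)).comp e (zero_add n)) (zero_add n) = e := by
    rw [Abelian.Ext.mk₀_comp_mk₀_assoc, key, Abelian.Ext.mk₀_id_comp]
  rw [← h1, Subsingleton.elim ((Abelian.Ext.mk₀ (ModuleCat.ofHom r)).comp e (zero_add n)) 0,
    Abelian.Ext.comp_zero]

theorem EV.retract_right {n : ℕ} (i : M →ₗ[S] N) (r : N →ₗ[S] M) (h : ∀ x, r (i x) = x)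
    (H : EV S Y N n) : EV S Y M n := by
  unfold EV at *
  have key : ModuleCat.ofHom i ≫ ModuleCat.ofHom r = 𝟙 _ := by ext x; exact h x
  refine subsingleton_of_forall_eq 0 fun e => ?_
  have h1 : (e.comp (Abelian.Ext.mk₀ (ModuleCat.ofHom i)) (add_zero n)).comp
    (Abelian.Ext.mk₀ (ModuleCat.ofHom r)) (add_zero n) = e := by
    rw [Abelian.Ext.comp_assoc_of_third_deg_zero, Abelian.Ext.mk₀_comp_mk₀, key, Abelian.Ext.comp_mk₀_id]
  rw [← h1, Subsingleton.elim (e.comp (Abelian.Ext.mk₀ (ModuleCat.ofHom i)) (add_zero n)) 0,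
    Abelian.Ext.zero_comp]

theorem EV.congr_left {n : ℕ} (e : M ≃ₗ[S] N) (H : EV S N Y n) : EV S M Y n :=
  H.retract_left e.toLinearMap e.symm.toLinearMap (by simp)

theorem EV.congr_right {n : ℕ} (e : M ≃ₗ[S] N) (H : EV S Y N n) : EV S Y M n :=
  H.retract_right e.toLinearMap e.symm.toLinearMap (by simp)

theorem EV.zero_iff : EV S M N 0 ↔ ∀ u : M →ₗ[S] N, u = 0 := by
  unfold EV
  constructor
  · intro h u
    have : ModuleCat.ofHom u = 0 := Abelian.Ext.addEquiv₀.symm.injective (Subsingleton.elim _ _)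
    exact congrArg ModuleCat.Hom.hom this
  · intro h
    refine subsingleton_of_forall_eq 0 fun e => ?_
    obtain ⟨g, rfl⟩ := Abelian.Ext.addEquiv₀.symm.surjective e
    have : g = 0 := by ext x; exact congrArg (fun f => f x) (h g.hom)
    rw [this, map_zero]

section
variable {f : A →ₗ[S] B} {g : B →ₗ[S] C} {n : ℕ}

theorem SES.ev_mid_right (h : SES f g) (h1 : EV S X A n) (h3 : EV S X C n) : EV S X B n := by
  obtain ⟨w, hS⟩ := h.shortExact
  unfold EV at *
  refine subsingleton_of_forall_eq 0 fun e => ?_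
  obtain ⟨x, rfl⟩ := Abelian.Ext.covariant_sequence_exact₂ _ hS e (Subsingleton.elim (α := Abelian.Ext (ModuleCat.of S X) (ModuleCat.of S C) n) _ _)
  have : x = 0 := Subsingleton.elim (α := Abelian.Ext (ModuleCat.of S X) (ModuleCat.of S A) n) _ _
  rw [this, Abelian.Ext.zero_comp]

theorem SES.ev_mid_left (h : SES f g) (h1 : EV S A X n) (h3 : EV S C X n) : EV S B X n := by
  obtain ⟨w, hS⟩ := h.shortExact
  unfold EV at *
  refine subsingleton_of_forall_eq 0 fun e => ?_
  obtain ⟨x, rfl⟩ := Abelian.Ext.contravariant_sequence_exact₂ hS _ e (Subsingleton.elim (α := Abelian.Ext (ModuleCat.of S A) (ModuleCat.of S X) n) _ _)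
  have : x = 0 := Subsingleton.elim (α := Abelian.Ext (ModuleCat.of S C) (ModuleCat.of S X) n) _ _
  rw [this, Abelian.Ext.comp_zero]

theorem SES.ev_quot_right (h : SES f g) (h2 : EV S X B n) (h1 : EV S X A (n + 1)) :
    EV S X C n := by
  obtain ⟨w, hS⟩ := h.shortExact
  unfold EV at *
  refine subsingleton_of_forall_eq 0 fun e => ?_
  obtain ⟨x, rfl⟩ := Abelian.Ext.covariant_sequence_exact₃ _ hS e rfl (Subsingleton.elim (α := Abelian.Ext (ModuleCat.of S X) (ModuleCat.of S A) (n + 1)) _ _)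
  have : x = 0 := Subsingleton.elim (α := Abelian.Ext (ModuleCat.of S X) (ModuleCat.of S B) n) _ _
  rw [this, Abelian.Ext.zero_comp]

theorem SES.ev_sub_right (h : SES f g) (h3 : EV S X C n) (h2 : EV S X B (n + 1)) :
    EV S X A (n + 1) := by
  obtain ⟨w, hS⟩ := h.shortExact
  unfold EV at *
  refine subsingleton_of_forall_eq 0 fun e => ?_
  obtain ⟨x, rfl⟩ := Abelian.Ext.covariant_sequence_exact₁ _ hS e (Subsingleton.elim (α := Abelian.Ext (ModuleCat.of S X) (ModuleCat.of S B) (n + 1)) _ _) rfl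
  have : x = 0 := Subsingleton.elim (α := Abelian.Ext (ModuleCat.of S X) (ModuleCat.of S C) n) _ _
  rw [this, Abelian.Ext.zero_comp]

theorem SES.ev_sub_left (h : SES f g) (h2 : EV S B X n) (h3 : EV S C X (n + 1)) :
    EV S A X n := by
  obtain ⟨w, hS⟩ := h.shortExact
  unfold EV at *
  refine subsingleton_of_forall_eq 0 fun e => ?_
  obtain ⟨x, rfl⟩ := Abelian.Ext.contravariant_sequence_exact₁ hS _ e (add_comm 1 n) (Subsingleton.elim (α := Abelian.Ext (ModuleCat.of S C) (ModuleCat.of S X) (n + 1)) _ _)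
  have : x = 0 := Subsingleton.elim (α := Abelian.Ext (ModuleCat.of S B) (ModuleCat.of S X) n) _ _
  rw [this, Abelian.Ext.comp_zero]

theorem SES.ev_quot_left (h : SES f g) (h1 : EV S A X n) (h2 : EV S B X (n + 1)) :
    EV S C X (n + 1) := by
  obtain ⟨w, hS⟩ := h.shortExact
  unfold EV at *
  refine subsingleton_of_forall_eq 0 fun e => ?_
  obtain ⟨x, rfl⟩ := Abelian.Ext.contravariant_sequence_exact₃ hS _ e (Subsingleton.elim (α := Abelian.Ext (ModuleCat.of S B) (ModuleCat.of S X) (n + 1)) _ _) (add_comm 1 n)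
  have : x = 0 := Subsingleton.elim (α := Abelian.Ext (ModuleCat.of S A) (ModuleCat.of S X) n) _ _
  rw [this, Abelian.Ext.comp_zero]

theorem SES.lift (h : SES f g) (h1 : EV S X A 1) (u : X →ₗ[S] C) :
    ∃ v : X →ₗ[S] B, ∀ x, g (v x) = u x := by
  obtain ⟨w, hS⟩ := h.shortExact
  unfold EV at *
  obtain ⟨x, hx⟩ := Abelian.Ext.covariant_sequence_exact₃ _ hS (Abelian.Ext.mk₀ (ModuleCat.ofHom u)) rfl (Subsingleton.elim (α := Abelian.Ext (ModuleCat.of S X) (ModuleCat.of S A) 1) _ _)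
  obtain ⟨v, rfl⟩ := Abelian.Ext.addEquiv₀.symm.surjective x
  simp only [Abelian.Ext.addEquiv₀_symm_apply, Abelian.Ext.mk₀_comp_mk₀] at hx
  have h2 := Abelian.Ext.addEquiv₀.symm.injective hx
  exact ⟨v.hom, fun x => congrArg (fun (q : ModuleCat.of S X ⟶ ModuleCat.of S C) => q.hom x) h2⟩

theorem SES.extend (h : SES f g) (h1 : EV S C X 1) (u : A →ₗ[S] X) :
    ∃ v : B →ₗ[S] X, ∀ a, v (f a) = u a := by
  obtain ⟨w, hS⟩ := h.shortExact
  unfold EV at *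
  obtain ⟨x, hx⟩ := Abelian.Ext.contravariant_sequence_exact₁ hS _ (Abelian.Ext.mk₀ (ModuleCat.ofHom u)) rfl (Subsingleton.elim (α := Abelian.Ext (ModuleCat.of S C) (ModuleCat.of S X) 1) _ _)
  obtain ⟨v, rfl⟩ := Abelian.Ext.addEquiv₀.symm.surjective x
  simp only [Abelian.Ext.addEquiv₀_symm_apply, Abelian.Ext.mk₀_comp_mk₀] at hx
  have h2 := Abelian.Ext.addEquiv₀.symm.injective hx
  exact ⟨v.hom, fun x => congrArg (fun (q : ModuleCat.of S A ⟶ ModuleCat.of S X) => q.hom x) h2⟩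

theorem SES.ev_one_of_lift (h : SES f g) (h2 : EV S X B 1)
    (hl : ∀ u : X →ₗ[S] C, ∃ v : X →ₗ[S] B, ∀ x, g (v x) = u x) : EV S X A 1 := by
  obtain ⟨w, hS⟩ := h.shortExact
  unfold EV at *
  refine subsingleton_of_forall_eq 0 fun e => ?_
  obtain ⟨x, rfl⟩ := Abelian.Ext.covariant_sequence_exact₁ _ hS e (Subsingleton.elim (α := Abelian.Ext (ModuleCat.of S X) (ModuleCat.of S B) 1) _ _) (zero_add 1)
  obtain ⟨u, rfl⟩ := Abelian.Ext.addEquiv₀.symm.surjective x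
  obtain ⟨v, hv⟩ := hl u.hom
  have : u = ModuleCat.ofHom v ≫ ModuleCat.ofHom g := by ext x; exact (hv x).symm
  simp only [Abelian.Ext.addEquiv₀_symm_apply]
  rw [this, ← Abelian.Ext.mk₀_comp_mk₀, Abelian.Ext.comp_assoc_of_second_deg_zero]
  have := hS.comp_extClass
  dsimp at this
  rw [this, Abelian.Ext.comp_zero]

theorem SES.ev_one_of_extend (h : SES f g) (h2 : EV S B X 1)
    (hl : ∀ u : A →ₗ[S] X, ∃ v : B →ₗ[S] X, ∀ a, v (f a) = u a) : EV S C X 1 := by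
  obtain ⟨w, hS⟩ := h.shortExact
  unfold EV at *
  refine subsingleton_of_forall_eq 0 fun e => ?_
  obtain ⟨x, rfl⟩ := Abelian.Ext.contravariant_sequence_exact₃ hS _ e (Subsingleton.elim (α := Abelian.Ext (ModuleCat.of S B) (ModuleCat.of S X) 1) _ _) (add_zero 1)
  obtain ⟨u, rfl⟩ := Abelian.Ext.addEquiv₀.symm.surjective x
  obtain ⟨v, hv⟩ := hl u.hom
  have : u = ModuleCat.ofHom f ≫ ModuleCat.ofHom v := by ext x; exact (hv x).symm
  simp only [Abelian.Ext.addEquiv₀_symm_apply]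
  rw [this, ← Abelian.Ext.mk₀_comp_mk₀]
  exact hS.extClass_comp_assoc (Abelian.Ext.mk₀ (ModuleCat.ofHom v))

end

theorem EV.of_projective (h : Module.Projective S M) (n : ℕ) : EV S M N (n + 1) := by
  have : Projective (ModuleCat.of S M) := (IsProjective.iff_projective M).1 h
  exact Abelian.Ext.subsingleton_of_projective _ _ n

theorem EV.of_injective (h : Module.Injective S N) (n : ℕ) : EV S M N (n + 1) := by
  have : Injective (ModuleCat.of S N) := (Module.injective_iff_injective_object S N).1 h
  exact Abelian.Ext.subsingleton_of_injective _ _ n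

/-- a retraction from Ext vanishing -/
theorem SES.split {f : A →ₗ[S] B} {g : B →ₗ[S] C} (h : SES f g) (h1 : EV S C A 1) :
    (∃ r : B →ₗ[S] A, ∀ a, r (f a) = a) ∧ (∃ s : C →ₗ[S] B, ∀ c, g (s c) = c) :=
  ⟨h.extend h1 LinearMap.id, h.lift h1 LinearMap.id⟩

theorem projective_of_ev (h : ∀ (N : Type) [AddCommGroup N] [Module S N], EV S M N 1) :
    Module.Projective S M := by
  have hs : Function.Surjective (Finsupp.linearCombination S (id : M → M)) :=
    fun m => ⟨Finsupp.single m 1, by simp⟩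
  obtain ⟨s, hs'⟩ := (SES.ofSurj _ hs).lift (h _) LinearMap.id
  exact Module.Projective.of_lifting_property'' (fun f hf => by
    obtain ⟨s, hs⟩ := (SES.ofSurj f hf).lift (h _) LinearMap.id
    exact ⟨s, LinearMap.ext hs⟩)

theorem injective_of_ev (h : ∀ (N : Type) [AddCommGroup N] [Module S N], EV S N M 1) :
    Module.Injective S M := by
  constructor
  intro X Y _ _ _ _ f hf g
  exact (SES.ofInj f hf).extend (h _) g

end ExtLayer
end
end QHPaper

namespace QHPaper
open CategoryTheory
noncomputable section

section FiltLayer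
variable {S : Type} [Ring S]

/-- Iterated extensions of the modules `D i`, `p i`. -/
inductive Filt {ι : Type} (D : ι → ModuleCat.{0} S) (p : ι → Prop) : ModuleCat.{0} S → Prop
  | zero (M : ModuleCat.{0} S) (h : Subsingleton M) : Filt D p M
  | step (A M : ModuleCat.{0} S) (i : ι) (hi : p i) (f : A →ₗ[S] M) (g : M →ₗ[S] D i)
      (h : SES f g) (hA : Filt D p A) : Filt D p M

variable {ι : Type} {D : ι → ModuleCat.{0} S} {p q : ι → Prop}
variable {A B C M N X Y : Type} [AddCommGroup A] [Module S A] [AddCommGroup B] [Module S B]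
  [AddCommGroup C] [Module S C] [AddCommGroup M] [Module S M] [AddCommGroup N] [Module S N]
  [AddCommGroup X] [Module S X] [AddCommGroup Y] [Module S Y]

theorem Filt.congr {M N : ModuleCat.{0} S} (e : M ≃ₗ[S] N) (h : Filt D p M) : Filt D p N := by
  cases h with
  | zero _ h => exact .zero _ (e.symm.injective.subsingleton)
  | step A _ i hi f g h hA =>
    refine .step A N i hi (e.toLinearMap ∘ₗ f) (g ∘ₗ e.symm.toLinearMap) ⟨?_, ?_, ?_⟩ hA
    · exact e.injective.comp h.inj
    · exact h.surj.comp e.symm.surjective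
    · intro b
      simp only [LinearMap.comp_apply, LinearEquiv.coe_coe]
      rw [h.ex]
      constructor
      · rintro ⟨a, ha⟩; exact ⟨a, by simp [ha]⟩
      · rintro ⟨a, ha⟩; exact ⟨a, by simp [← ha]⟩

theorem Filt.mono {M : ModuleCat.{0} S} (h : Filt D p M) (hpq : ∀ i, p i → q i) : Filt D q M := by
  induction h with
  | zero M h => exact .zero _ h
  | step A M i hi f g h hA ih => exact .step A M i (hpq i hi) f g h ih

theorem Filt.single (i : ι) (hi : p i) : Filt D p (D i) := by
  refine .step (ModuleCat.of S PUnit) (D i) i hi 0 LinearMap.id ⟨?_, ?_, ?_⟩ (.zero _ inferInstance)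
  · exact Function.injective_of_subsingleton _
  · exact Function.surjective_id
  · intro b
    exact ⟨fun h => ⟨0, by simpa using h.symm⟩, fun ⟨a, h⟩ => by simpa using h.symm⟩

theorem Filt.ext {C : ModuleCat.{0} S} (hC : Filt D p C) : ∀ {A B : ModuleCat.{0} S}
    {f : A →ₗ[S] B} {g : B →ₗ[S] C}, SES f g → Filt D p A → Filt D p B := by
  induction hC with
  | zero C hC =>
    intro A B f g h hA
    have hs : Function.Surjective f := fun b => (h.ex b).1 (Subsingleton.elim _ _)
    exact hA.congr (LinearEquiv.ofBijective f ⟨h.inj, hs⟩)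
  | step C' C i hi f' g' h' hC' ih =>
    intro A B f g h hA
    let B' : Submodule S B := LinearMap.ker (g' ∘ₗ g)
    have hB' : ∀ b : B', g' (g b) = 0 := fun b => b.2
    obtain ⟨v, hv⟩ := h'.factor (g ∘ₗ B'.subtype) hB'
    have hB : Filt D p (ModuleCat.of S B') := by
      refine ih (A := A) (B := ModuleCat.of S B') (f := f.codRestrict B' (fun a => ?_)) (g := v)
        ⟨?_, ?_, ?_⟩ hA
      · simp [B', h.comp_zero]
      · intro a b hab
        exact h.inj (congrArg Subtype.val hab)
      · intro c
        obtain ⟨b, hb⟩ := h.surj (f' c)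
        refine ⟨⟨b, ?_⟩, h'.inj ?_⟩
        · simp [B', hb, h'.comp_zero]
        · rw [hv]; exact hb
      · intro b
        constructor
        · intro hb
          have : g b.1 = 0 := by
            have := hv b
            rw [hb, map_zero] at this
            exact this.symm
          obtain ⟨a, ha⟩ := (h.ex _).1 this
          exact ⟨a, Subtype.ext ha⟩
        · rintro ⟨a, rfl⟩
          apply h'.inj
          exact (hv _).trans ((h.comp_zero a).trans (map_zero f').symm)
    exact .step (ModuleCat.of S B') B i hi B'.subtype (g' ∘ₗ g)
      (SES.ofSurj _ (h'.surj.comp h.surj)) hB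

theorem Filt.of_sub {A B C : ModuleCat.{0} S} {f : A →ₗ[S] B} {g : B →ₗ[S] C} (h : SES f g)
    (hA : Filt D p A) (hC : Filt D p C) : Filt D p B := hC.ext h hA

theorem Filt.prod {A B : ModuleCat.{0} S} (hA : Filt D p A) (hB : Filt D p B) :
    Filt D p (ModuleCat.of S (A × B)) := by
  refine hB.ext (A := A) (f := LinearMap.inl S A B) (g := LinearMap.snd S A B) ⟨?_, ?_, ?_⟩ hA
  · exact LinearMap.inl_injective
  · exact LinearMap.snd_surjective
  · rintro ⟨a, b⟩
    simp [eq_comm]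

theorem Filt.finite {M : ModuleCat.{0} S} (h : Filt D p M) (hD : ∀ i, Module.Finite S (D i)) :
    Module.Finite S M := by
  induction h with
  | zero M h => infer_instance
  | step A M i hi f g h hA ih =>
    have := hD i
    have e : Function.Exact f g := fun b => by rw [h.ex]; rfl
    exact Module.Finite.of_exact e h.surj

/-- a section as a surjection -/
theorem subquot_iso_iff {M : ModuleCat.{0} S} (A B : Submodule S M) :
    Nonempty (subquot S A B ≃ₗ[S] X) ↔
      ∃ u : ↥B →ₗ[S] X, Function.Surjective u ∧ ∀ b, u b = 0 ↔ (b : M) ∈ A := by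
  constructor
  · rintro ⟨e⟩
    refine ⟨e.toLinearMap ∘ₗ (Submodule.mkQ _), e.surjective.comp (Submodule.mkQ_surjective _), ?_⟩
    intro b
    simp
  · rintro ⟨u, hu, hk⟩
    have : LinearMap.ker u = Submodule.comap B.subtype A := by
      ext b; simp [hk]
    exact ⟨(Submodule.quotEquivOfEq _ _ this.symm).trans (u.quotKerEquivOfSurjective hu)⟩

theorem Filt.of_sections {M : ModuleCat.{0} S} {n : ℕ} {f : Fin (n + 1) → Submodule S M}
    {g : Fin n → ι} (h : HasFiltrationWithSections S M n f (fun i => D (g i))) :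
    ∀ j : Fin (n + 1), (∀ i : Fin n, i.castSucc < j → p (g i)) →
      Filt D p (ModuleCat.of S (f j)) := by
  obtain ⟨hm, h0, h1, hs⟩ := h
  intro j
  induction j using Fin.induction with
  | zero =>
    intro _
    refine .zero _ ?_
    rw [h0]
    infer_instance
  | succ i ih =>
    intro hp
    obtain ⟨u, hu, hk⟩ := (subquot_iso_iff _ _).1 (hs i)
    have hle : f i.castSucc ≤ f i.succ := hm (Fin.castSucc_lt_succ).le
    refine .step _ _ (g i) (hp i Fin.castSucc_lt_succ) (Submodule.inclusion hle) u ⟨?_, hu, ?_⟩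
      (ih fun j hj => hp j (hj.trans Fin.castSucc_lt_succ))
    · exact Submodule.inclusion_injective hle
    · intro b
      rw [hk]
      constructor
      · intro hb; exact ⟨⟨b, hb⟩, rfl⟩
      · rintro ⟨a, rfl⟩; exact a.2

theorem Filt.of_hasFiltration {M : ModuleCat.{0} S} {n : ℕ} {f : Fin (n + 1) → Submodule S M}
    {g : Fin n → ι} (h : HasFiltrationWithSections S M n f (fun i => D (g i)))
    (hp : ∀ i, p (g i)) : Filt D p M := by
  have h1 := Filt.of_sections (p := p) h (Fin.last n) (fun i _ => hp i)
  rw [h.2.2.1] at h1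
  exact h1.congr (Submodule.topEquiv (R := S) (M := M))

theorem Filt.hasFiltration {M : ModuleCat.{0} S} (h : Filt D p M) :
    ∃ (n : ℕ) (f : Fin (n + 1) → Submodule S M) (g : Fin n → ι),
      HasFiltrationWithSections S M n f (fun i => D (g i)) := by
  induction h with
  | zero M h =>
    refine ⟨0, fun _ => ⊥, Fin.elim0, fun _ _ _ => le_rfl, rfl, Subsingleton.elim _ _, fun i => i.elim0⟩
  | step A M i hi f g h hA ih =>
    obtain ⟨n, F, G, hm, h0, h1, hs⟩ := ih
    refine ⟨n + 1, Fin.snoc (fun j => (F j).map f) ⊤, Fin.snoc G i, ?_, ?_, ?_, ?_⟩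
    · intro a b hab
      induction b using Fin.lastCases with
      | last => simp
      | cast b =>
        induction a using Fin.lastCases with
        | last =>
          exfalso
          exact absurd hab (not_le.2 (Fin.castSucc_lt_last b))
        | cast a =>
          simp only [Fin.snoc_castSucc]
          exact Submodule.map_mono (hm (by simpa using hab))
    · have : (0 : Fin (n + 1 + 1)) = Fin.castSucc 0 := rfl
      rw [this, Fin.snoc_castSucc, h0, Submodule.map_bot]
    · simp
    · intro j
      induction j using Fin.lastCases with
      | last =>
        suffices H : ∀ (U V : Submodule S M) (Z : ModuleCat.{0} S),
            U = (F (Fin.last n)).map f → V = ⊤ → Z = D i →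
            Nonempty (subquot S U V ≃ₗ[S] Z) by
          refine H _ _ _ ?_ ?_ ?_ <;> simp
        rintro _ _ _ rfl rfl rfl
        rw [subquot_iso_iff]
        refine ⟨g ∘ₗ Submodule.subtype _, ?_, ?_⟩
        · intro y
          obtain ⟨x, hx⟩ := h.surj y
          exact ⟨⟨x, trivial⟩, hx⟩
        · intro b
          simp only [LinearMap.comp_apply, Submodule.subtype_apply, h.ex, h1]
          simp
      | cast j =>
        have e1 : (Fin.castSucc j).succ = Fin.castSucc j.succ := rfl
        obtain ⟨u, hu, hk⟩ := (subquot_iso_iff _ _).1 (hs j)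
        suffices H : ∀ (U V : Submodule S M) (Z : ModuleCat.{0} S),
            U = (F j.castSucc).map f → V = (F j.succ).map f → Z = D (G j) →
            Nonempty (subquot S U V ≃ₗ[S] Z) by
          refine H _ _ _ ?_ ?_ ?_
          · simp
          · rw [e1, Fin.snoc_castSucc]
          · simp
        rintro _ _ _ rfl rfl rfl
        rw [subquot_iso_iff]
        let e := (F j.succ).equivMapOfInjective f h.inj
        refine ⟨u ∘ₗ e.symm.toLinearMap, hu.comp e.symm.surjective, ?_⟩
        intro b
        obtain ⟨a, rfl⟩ := e.surjective b
        simp only [LinearMap.comp_apply, LinearEquiv.coe_coe, LinearEquiv.symm_apply_apply, hk]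
        have : ((e a : _) : M) = f a := rfl
        rw [this]
        simp only [Submodule.mem_map]
        constructor
        · intro h'; exact ⟨_, h', rfl⟩
        · rintro ⟨y, hy, hy'⟩
          rwa [← h.inj hy']

theorem Filt.of_ses_ev_left {X : Type} [AddCommGroup X] [Module S X] {n : ℕ} {M : ModuleCat.{0} S}
    (h : Filt D p M) (hn : ∀ i, p i → EV S (D i) X n) : EV S M X n := by
  induction h with
  | zero M h =>
    cases n with
    | zero => 
      refine EV.zero_iff.2 fun u => LinearMap.ext fun x => ?_
      rw [Subsingleton.elim x 0, map_zero, map_zero]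
    | succ n =>
      have hf : Module.Free S M := Module.Free.of_subsingleton S M
      exact EV.of_projective Module.Projective.of_free n
  | step A M i hi f g h hA ih => exact h.ev_mid_left ih (hn i hi)

theorem Filt.of_ses_ev_right {X : Type} [AddCommGroup X] [Module S X] {n : ℕ} {M : ModuleCat.{0} S}
    (h : Filt D p M) (hn : ∀ i, p i → EV S X (D i) n) : EV S X M n := by
  induction h with
  | zero M h =>
    have e : M ≃ₗ[S] PUnit := LinearEquiv.ofSubsingleton _ _
    cases n with
    | zero => exact EV.zero_iff.2 fun u => LinearMap.ext fun x => Subsingleton.elim _ _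
    | succ n => 
      refine EV.of_injective ⟨fun X Y _ _ _ _ f hf g => ⟨0, fun x => Subsingleton.elim _ _⟩⟩ n
  | step A M i hi f g h hA ih => exact h.ev_mid_right ih (hn i hi)

/-- `L` is a subquotient. -/
def CF (L M : Type) [AddCommGroup L] [Module S L] [AddCommGroup M] [Module S M] : Prop :=
  ∃ (B : Submodule S M) (u : ↥B →ₗ[S] L), Function.Surjective u

variable {L : Type} [AddCommGroup L] [Module S L]

theorem isCompFactor_iff {L M : ModuleCat.{0} S} : IsCompFactor S L M ↔ CF (S := S) L M := by
  constructor
  · rintro ⟨A, B, hAB, h⟩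
    obtain ⟨u, hu, hk⟩ := (subquot_iso_iff _ _).1 h
    exact ⟨B, u, hu⟩
  · rintro ⟨B, u, hu⟩
    refine ⟨(LinearMap.ker u).map B.subtype, B, Submodule.map_subtype_le _ _, ?_⟩
    rw [subquot_iso_iff]
    exact ⟨u, hu, fun b => by simp⟩

theorem CF.of_inj (f : M →ₗ[S] N) (hf : Function.Injective f) (h : CF (S := S) L M) :
    CF (S := S) L N := by
  obtain ⟨B, u, hu⟩ := h
  let e := B.equivMapOfInjective f hf
  exact ⟨B.map f, u ∘ₗ e.symm.toLinearMap, hu.comp e.symm.surjective⟩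

theorem CF.of_surj (f : M →ₗ[S] N) (hf : Function.Surjective f) (h : CF (S := S) L N) :
    CF (S := S) L M := by
  obtain ⟨B, u, hu⟩ := h
  refine ⟨B.comap f, u ∘ₗ f.restrict (fun x hx => hx), hu.comp ?_⟩
  rintro ⟨b, hb⟩
  obtain ⟨a, rfl⟩ := hf b
  exact ⟨⟨a, hb⟩, rfl⟩

theorem CF.congr_left {L' : Type} [AddCommGroup L'] [Module S L'] (e : L →ₗ[S] L')
    (he : Function.Surjective e) (h : CF (S := S) L M) : CF (S := S) L' M := by
  obtain ⟨B, u, hu⟩ := h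
  exact ⟨B, e ∘ₗ u, he.comp hu⟩

theorem CF.of_quot (f : M →ₗ[S] L) (hf : Function.Surjective f) : CF (S := S) L M :=
  ⟨⊤, f ∘ₗ Submodule.subtype _, fun x => by
    obtain ⟨y, rfl⟩ := hf x
    exact ⟨⟨y, trivial⟩, rfl⟩⟩

theorem CF.of_sub (f : L →ₗ[S] M) (hf : Function.Injective f) : CF (S := S) L M :=
  CF.of_inj f hf (CF.of_quot LinearMap.id Function.surjective_id)

theorem surjective_of_ne_zero [IsSimpleModule S L] (f : M →ₗ[S] L) (h : f ≠ 0) :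
    Function.Surjective f := (LinearMap.surjective_or_eq_zero f).resolve_right h

theorem injective_of_ne_zero [IsSimpleModule S L] (f : L →ₗ[S] M) (h : f ≠ 0) :
    Function.Injective f := (LinearMap.injective_or_eq_zero f).resolve_right h

theorem CF.ses [IsSimpleModule S L] {f : A →ₗ[S] B} {g : B →ₗ[S] C} (h : SES f g)
    (hL : CF (S := S) L B) : CF (S := S) L A ∨ CF (S := S) L C := by
  obtain ⟨U, u, hu⟩ := hL
  by_cases hz : ∃ x : U, g x = 0 ∧ u x ≠ 0
  · left
    obtain ⟨x, hx, hx'⟩ := hz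
    let V : Submodule S A := U.comap f
    let w : V →ₗ[S] L := u ∘ₗ f.restrict (fun x hx => hx)
    obtain ⟨a, ha⟩ := (h.ex _).1 hx
    refine ⟨V, w, surjective_of_ne_zero w fun h0 => hx' ?_⟩
    have := congrArg (fun q => q ⟨a, show f a ∈ U by rw [ha]; exact x.2⟩) h0
    simp only [LinearMap.zero_apply] at this
    rw [← this]
    show u x = u _
    congr 1
    exact Subtype.ext ha.symm
  · right
    push Not at hz
    let g' : U →ₗ[S] U.map g := g.restrict (fun x hx => Submodule.mem_map_of_mem hx)
    have hg' : Function.Surjective g' := by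
      rintro ⟨c, b, hb, rfl⟩
      exact ⟨⟨b, hb⟩, rfl⟩
    obtain ⟨v, hv⟩ := (SES.ofSurj g' hg').desc u (fun a => hz a.1 (congrArg Subtype.val a.2))
    refine ⟨U.map g, v, fun y => ?_⟩
    obtain ⟨x, rfl⟩ := hu y
    exact ⟨g' x, hv x⟩

theorem CF.nontrivial [IsSimpleModule S L] (h : CF (S := S) L M) : Nontrivial M := by
  obtain ⟨B, u, hu⟩ := h
  have : Nontrivial L := IsSimpleModule.nontrivial S L
  obtain ⟨y, hy⟩ := exists_ne (0 : L)
  obtain ⟨x, rfl⟩ := hu y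
  refine ⟨⟨x, 0, fun h => hy ?_⟩⟩
  have : x = 0 := Subtype.ext h
  rw [this, map_zero]

theorem CF.iso_of_simple [IsSimpleModule S L] [IsSimpleModule S M] (h : CF (S := S) L M) :
    Nonempty (M ≃ₗ[S] L) := by
  obtain ⟨B, u, hu⟩ := h
  have : Nontrivial L := IsSimpleModule.nontrivial S L
  rcases eq_bot_or_eq_top B with rfl | rfl
  · exfalso
    obtain ⟨y, hy⟩ := exists_ne (0 : L)
    obtain ⟨x, rfl⟩ := hu y
    exact hy (by rw [Subsingleton.elim x 0, map_zero])
  · let v : M →ₗ[S] L := u ∘ₗ (Submodule.topEquiv (R := S) (M := M)).symm.toLinearMap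
    have hv : Function.Surjective v := hu.comp (LinearEquiv.surjective _)
    have hv0 : v ≠ 0 := by
      rintro h0
      obtain ⟨y, hy⟩ := exists_ne (0 : L)
      obtain ⟨x, rfl⟩ := hv y
      exact hy (by rw [h0]; rfl)
    exact ⟨LinearEquiv.ofBijective v ⟨injective_of_ne_zero v hv0, hv⟩⟩

theorem Filt.cf [IsSimpleModule S L] {M : ModuleCat.{0} S} (h : Filt D p M)
    (hL : CF (S := S) L M) : ∃ i, p i ∧ CF (S := S) L (D i) := by
  induction h with
  | zero M h => exact absurd hL.nontrivial (not_nontrivial M)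
  | step A M i hi f g h hA ih => exact (CF.ses h hL).elim ih (fun h => ⟨i, hi, h⟩)

end FiltLayer
end
end QHPaper

namespace QHPaper
open CategoryTheory
noncomputable section
set_option linter.unusedSectionVars false

/-- The properties of finite-dimensional algebras that we use. -/
class FD (S : Type) [Ring S] : Prop where
  noeth : IsNoetherianRing S
  art : IsArtinianRing S
  emb : ∀ (M : ModuleCat.{0} S), Module.Finite S M → ∃ J : ModuleCat.{0} S,
    Module.Finite S J ∧ Module.Injective S J ∧ ∃ f : M →ₗ[S] J, Function.Injective f

section QHLayer
variable {S : Type} [Ring S] [FD S] {Λ : Type} [Fintype Λ] [PartialOrder Λ] (Q : QHData S Λ)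
variable {A B C M N X Y : Type} [AddCommGroup A] [Module S A] [AddCommGroup B] [Module S B]
  [AddCommGroup C] [Module S C] [AddCommGroup M] [Module S M] [AddCommGroup N] [Module S N]
  [AddCommGroup X] [Module S X] [AddCommGroup Y] [Module S Y]
variable {L : Type} [AddCommGroup L] [Module S L]

theorem fg_noeth (h : Module.Finite S M) : IsNoetherian S M := by
  have := FD.noeth (S := S)
  infer_instance

theorem fg_art (h : Module.Finite S M) : IsArtinian S M := by
  have := FD.art (S := S)
  infer_instance

theorem fg_of_inj (f : M →ₗ[S] N) (hf : Function.Injective f) (h : Module.Finite S N) :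
    Module.Finite S M := by
  have := fg_noeth h
  exact Module.Finite.of_injective f hf

theorem fg_sub (B : Submodule S M) (h : Module.Finite S M) : Module.Finite S B :=
  fg_of_inj B.subtype B.injective_subtype h

theorem fg_surj (f : M →ₗ[S] N) (hf : Function.Surjective f) (h : Module.Finite S M) :
    Module.Finite S N := Module.Finite.of_surjective f hf

theorem fg_mid {f : A →ₗ[S] B} {g : B →ₗ[S] C} (h : SES f g) (hA : Module.Finite S A)
    (hC : Module.Finite S C) : Module.Finite S B := by
  have e : Function.Exact f g := fun b => by rw [h.ex]; rfl
  exact Module.Finite.of_exact e h.surj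

theorem len_fin (h : Module.Finite S M) : ∃ n : ℕ, Module.length S M ≤ n := by
  have := fg_noeth h
  have := fg_art h
  have h2 : Module.length S M ≠ ⊤ := Module.length_ne_top
  obtain ⟨n, hn⟩ := ENat.ne_top_iff_exists.1 h2
  exact ⟨n, hn.symm.le⟩

theorem len_quot [Nontrivial A] {f : A →ₗ[S] B} {g : B →ₗ[S] C} (h : SES f g) {n : ℕ}
    (hB : Module.length S B ≤ (n + 1 : ℕ)) : Module.length S C ≤ n := by
  have e : Function.Exact f g := fun b => by rw [h.ex]; rfl
  rw [Module.length_eq_add_of_exact f g h.inj h.surj e] at hB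
  have h1 : 1 ≤ Module.length S A := Order.one_le_iff_ne_zero.2 (fun h0 => by
    rw [Module.length_eq_zero_iff] at h0
    exact not_nontrivial A ‹_›)
  have h2 : 1 + Module.length S C ≤ 1 + (n : ℕ∞) :=
    (add_le_add_left h1 _).trans (hB.trans (by push_cast; rw [add_comm]))
  exact (ENat.add_le_add_iff_left (by simp)).1 h2

theorem len_sub [Nontrivial C] {f : A →ₗ[S] B} {g : B →ₗ[S] C} (h : SES f g) {n : ℕ}
    (hB : Module.length S B ≤ (n + 1 : ℕ)) : Module.length S A ≤ n := by
  have e : Function.Exact f g := fun b => by rw [h.ex]; rfl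
  rw [Module.length_eq_add_of_exact f g h.inj h.surj e] at hB
  have h1 : 1 ≤ Module.length S C := Order.one_le_iff_ne_zero.2 (fun h0 => by
    rw [Module.length_eq_zero_iff] at h0
    exact not_nontrivial C ‹_›)
  have h2 : Module.length S A + 1 ≤ (n : ℕ∞) + 1 :=
    (add_le_add_right h1 _).trans (hB.trans (by push_cast; rfl))
  exact (ENat.add_le_add_iff_right (by simp)).1 h2

theorem len_zero (h : Module.length S M ≤ (0 : ℕ)) : Subsingleton M :=
  Module.length_eq_zero_iff.1 (le_antisymm (by simpa using h) bot_le)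

theorem QHData.simple (l : Λ) : IsSimpleModule S (Q.L l) := Q.simpleL l

theorem QHData.L_eq {l m : Λ} (h : Nonempty (Q.L l ≃ₗ[S] Q.L m)) : l = m := by
  by_contra hne
  exact (Q.nonisoL l m hne).false h.some

theorem QHData.cf_L {l m : Λ} (h : CF (S := S) (Q.L l) (Q.L m)) : l = m := by
  have := Q.simpleL l
  have := Q.simpleL m
  exact (Q.L_eq (h.iso_of_simple)).symm

theorem QHData.exists_quot (hM : Module.Finite S M) [Nontrivial M] :
    ∃ (l : Λ) (f : M →ₗ[S] Q.L l), Function.Surjective f := by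
  obtain ⟨N, hN, -⟩ := (eq_top_or_exists_le_coatom (⊥ : Submodule S M)).resolve_left bot_ne_top
  have hs : IsSimpleModule S (M ⧸ N) := isSimpleModule_iff_isCoatom.2 hN
  obtain ⟨l, ⟨e⟩⟩ := Q.fullL (ModuleCat.of S (M ⧸ N)) hs
  exact ⟨l, e.toLinearMap ∘ₗ N.mkQ, e.surjective.comp N.mkQ_surjective⟩

theorem QHData.exists_sub (hM : Module.Finite S M) [Nontrivial M] :
    ∃ (l : Λ) (f : Q.L l →ₗ[S] M), Function.Injective f := by
  have := fg_art hM
  obtain ⟨N, hN, -⟩ := (eq_bot_or_exists_atom_le (⊤ : Submodule S M)).resolve_left top_ne_bot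
  have hs : IsSimpleModule S N := isSimpleModule_iff_isAtom.2 hN
  obtain ⟨l, ⟨e⟩⟩ := Q.fullL (ModuleCat.of S N) hs
  exact ⟨l, N.subtype ∘ₗ e.symm.toLinearMap, N.injective_subtype.comp e.symm.injective⟩

theorem range_nontrivial (f : M →ₗ[S] N) (h : f ≠ 0) : Nontrivial (LinearMap.range f) := by
  rw [Submodule.nontrivial_iff_ne_bot]
  exact fun h0 => h (LinearMap.range_eq_bot.1 h0)

/-- a nonzero map gives a simple sub of target which is a CF of source -/
theorem QHData.hom_sub (hM : Module.Finite S M) (u : M →ₗ[S] X) (hu : u ≠ 0) :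
    ∃ (l : Λ) (f : Q.L l →ₗ[S] X), Function.Injective f ∧ CF (S := S) (Q.L l) M := by
  have := range_nontrivial u hu
  obtain ⟨l, f, hf⟩ := Q.exists_sub (M := LinearMap.range u)
    (fg_surj u.rangeRestrict u.surjective_rangeRestrict hM)
  refine ⟨l, (Submodule.subtype _) ∘ₗ f, (Submodule.injective_subtype _).comp hf, ?_⟩
  exact (CF.of_sub f hf).of_surj u.rangeRestrict u.surjective_rangeRestrict

theorem QHData.hom_quot (hM : Module.Finite S M) (u : M →ₗ[S] X) (hu : u ≠ 0) :
    ∃ (l : Λ) (f : M →ₗ[S] Q.L l), Function.Surjective f ∧ CF (S := S) (Q.L l) X := by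
  have := range_nontrivial u hu
  obtain ⟨l, f, hf⟩ := Q.exists_quot (M := LinearMap.range u)
    (fg_surj u.rangeRestrict u.surjective_rangeRestrict hM)
  refine ⟨l, f ∘ₗ u.rangeRestrict, hf.comp u.surjective_rangeRestrict, ?_⟩
  exact (CF.of_quot f hf).of_inj (Submodule.subtype _) (Submodule.injective_subtype _)

theorem cf_of_top (p : X →ₗ[S] L) (hp : Function.Surjective p)
    (ht : ∀ N : Submodule S X, N ≠ ⊤ → N ≤ LinearMap.ker p) (f : X →ₗ[S] M) (hf : f ≠ 0) :
    CF (S := S) L M := by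
  have hk : LinearMap.ker f ≤ LinearMap.ker p :=
    ht _ (fun h => hf (LinearMap.ker_eq_top.1 h))
  obtain ⟨v, hv⟩ := (SES.ofSurj f.rangeRestrict f.surjective_rangeRestrict).desc p
    (fun a => hk (show f a = 0 from congrArg Subtype.val (show f.rangeRestrict a = 0 from a.2)))
  refine ⟨LinearMap.range f, v, fun y => ?_⟩
  obtain ⟨x, rfl⟩ := hp y
  exact ⟨f.rangeRestrict x, hv x⟩

theorem cf_of_soc (s : L →ₗ[S] X) (hs : Function.Injective s)
    (ht : ∀ N : Submodule S X, N ≠ ⊥ → LinearMap.range s ≤ N) (f : M →ₗ[S] X) (hf : f ≠ 0) :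
    CF (S := S) L M := by
  have hk : LinearMap.range s ≤ LinearMap.range f :=
    ht _ (fun h => hf (LinearMap.range_eq_bot.1 h))
  obtain ⟨v, hv⟩ := (SES.ofInj f.rangeRestrict.ker.subtype (Submodule.injective_subtype _)).desc
    (f.rangeRestrict) (fun a => a.2)
  have h1 : CF (S := S) L (LinearMap.range f) :=
    CF.of_sub (s.codRestrict _ (fun x => hk ⟨x, rfl⟩)) (fun a b hab => hs (congrArg Subtype.val hab))
  exact h1.of_surj _ f.surjective_rangeRestrict

theorem QHData.P_top (l : Λ) : ∃ p : Q.P l →ₗ[S] Q.L l, Function.Surjective p ∧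
    ∀ N : Submodule S (Q.P l), N ≠ ⊤ → N ≤ LinearMap.ker p := by
  obtain ⟨-, p, hp, hN⟩ := Q.projCover l
  have := Q.simpleL l
  refine ⟨p, hp, fun N hNt => ?_⟩
  by_contra hle
  apply hNt
  apply hN
  have h1 : N.map p = ⊤ := by
    refine (eq_bot_or_eq_top _).resolve_left fun h0 => hle ?_
    intro x hx
    have : p x ∈ N.map p := Submodule.mem_map_of_mem hx
    rw [h0] at this
    exact this
  rw [eq_top_iff]
  intro x _
  have : p x ∈ N.map p := by rw [h1]; trivial
  obtain ⟨y, hy, hxy⟩ := this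
  have hx : x = y + (x - y) := by abel
  rw [hx]
  exact Submodule.add_mem_sup hy (by simp [hxy])

theorem QHData.P_proj (l : Λ) : Module.Projective S (Q.P l) := (Q.projCover l).1

theorem QHData.P_fg (l : Λ) : Module.Finite S (Q.P l) := by
  obtain ⟨-, p, hp, hN⟩ := Q.projCover l
  have := Q.simpleL l
  have : Nontrivial (Q.L l) := IsSimpleModule.nontrivial S _
  obtain ⟨x, hx⟩ := exists_ne (0 : Q.L l)
  obtain ⟨y, rfl⟩ := hp x
  have h1 := hN (LinearMap.range (LinearMap.toSpanSingleton S _ y)) (by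
    have h2 : Function.Surjective (p ∘ₗ LinearMap.toSpanSingleton S _ y) := by
      apply surjective_of_ne_zero
      intro h0
      have := congrArg (fun q => q 1) h0
      simp at this
      exact hx this
    rw [eq_top_iff]
    intro z _
    obtain ⟨a, ha⟩ := h2 (p z)
    have hx : z = a • y + (z - a • y) := by abel
    rw [hx]
    refine Submodule.add_mem_sup ⟨a, by simp⟩ ?_
    simp at ha
    simp [ha])
  exact Module.Finite.of_surjective _ (LinearMap.range_eq_top.1 h1)

theorem QHData.P_cf {l : Λ} (f : Q.P l →ₗ[S] M) (hf : f ≠ 0) : CF (S := S) (Q.L l) M := by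
  obtain ⟨p, hp, ht⟩ := Q.P_top l
  exact cf_of_top p hp ht f hf

theorem QHData.P_of_cf {l : Λ} (h : CF (S := S) (Q.L l) M) : ∃ f : Q.P l →ₗ[S] M, f ≠ 0 := by
  obtain ⟨B, u, hu⟩ := h
  obtain ⟨p, hp, ht⟩ := Q.P_top l
  have := Q.P_proj l
  have := Q.simpleL l
  have : Nontrivial (Q.L l) := IsSimpleModule.nontrivial S _
  obtain ⟨v, hv⟩ := Module.projective_lifting_property u p hu
  refine ⟨B.subtype ∘ₗ v, fun h0 => ?_⟩
  obtain ⟨y, hy⟩ := exists_ne (0 : Q.L l)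
  obtain ⟨x, rfl⟩ := hp y
  apply hy
  rw [← hv]
  have h1 : v x = 0 := Subtype.ext (congrArg (fun q => q x) h0)
  simp [h1]

end QHLayer
end
end QHPaper

namespace QHPaper
open CategoryTheory
noncomputable section
set_option linter.unusedSectionVars false

section QHLayer
variable {S : Type} [Ring S] [FD S] {Λ : Type} [Fintype Λ] [PartialOrder Λ] (Q : QHData S Λ)
variable {A B C M N X Y : Type} [AddCommGroup A] [Module S A] [AddCommGroup B] [Module S B]
  [AddCommGroup C] [Module S C] [AddCommGroup M] [Module S M] [AddCommGroup N] [Module S N]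
  [AddCommGroup X] [Module S X] [AddCommGroup Y] [Module S Y]
variable {L : Type} [AddCommGroup L] [Module S L]

theorem QHData.std_quot (l : Λ) : ∃ q : Q.P l →ₗ[S] Q.std l, Function.Surjective q ∧
    (∀ m, CF (S := S) (Q.L m) (Q.std l) → m ≤ l) ∧
    ∀ {M : Type} [AddCommGroup M] [Module S M] (f : Q.P l →ₗ[S] M),
      (∀ m, CF (S := S) (Q.L m) M → m ≤ l) → ∃ g : Q.std l →ₗ[S] M, ∀ x, g (q x) = f x := by
  obtain ⟨K, ⟨e⟩, h1, h2⟩ := Q.stdSpec l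
  have hq : Function.Surjective (e.symm.toLinearMap ∘ₗ K.mkQ) :=
    e.symm.surjective.comp K.mkQ_surjective
  refine ⟨e.symm.toLinearMap ∘ₗ K.mkQ, hq, ?_, ?_⟩
  · intro m hm
    exact h1 m (isCompFactor_iff.2 (hm.of_surj e.symm.toLinearMap e.symm.surjective))
  · intro M _ _ f hf
    have hK : K ≤ LinearMap.ker f := by
      apply h2
      intro m hm
      apply hf m
      refine CF.of_inj (M := Q.P l ⧸ LinearMap.ker f) (((LinearMap.ker f).liftQ f le_rfl)) ?_
        (isCompFactor_iff.1 hm)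
      rw [← LinearMap.ker_eq_bot, Submodule.ker_liftQ_eq_bot _ _ _ le_rfl]
    refine (SES.ofSurj _ hq).desc f fun a => hK ?_
    have := a.2
    simpa using this

theorem QHData.std_cf {l m : Λ} (h : CF (S := S) (Q.L m) (Q.std l)) : m ≤ l := by
  obtain ⟨q, -, h1, -⟩ := Q.std_quot l
  exact h1 m h

theorem QHData.std_fg (l : Λ) : Module.Finite S (Q.std l) := by
  obtain ⟨q, hq, -⟩ := Q.std_quot l
  exact fg_surj q hq (Q.P_fg l)

theorem QHData.std_top (l : Λ) : ∃ p : Q.std l →ₗ[S] Q.L l, Function.Surjective p ∧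
    (∀ N : Submodule S (Q.std l), N ≠ ⊤ → N ≤ LinearMap.ker p) ∧
    ¬ CF (S := S) (Q.L l) (LinearMap.ker p) := by
  have hsim := Q.simpleL l
  have hLn : Nontrivial (Q.L l) := IsSimpleModule.nontrivial S _
  obtain ⟨n, f, hm, h0, h1, hs, hc⟩ := Q.multOne l
  obtain ⟨q, hq, -, -⟩ := Q.std_quot l
  obtain ⟨π, hπ, hπt⟩ := Q.P_top l
  have hcard := Nat.card_eq_one_iff_unique.1 hc
  obtain ⟨⟨i0, hi0⟩⟩ := hcard.2
  have hn : n ≠ 0 := by rintro rfl; exact i0.elim0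
  obtain ⟨n, rfl⟩ := Nat.exists_eq_succ_of_ne_zero hn
  -- nontriviality
  have hqt : LinearMap.ker q ≠ ⊤ := by
    intro hk
    rw [LinearMap.ker_eq_top] at hk
    have hsub : Subsingleton (Q.std l) := by
      refine ⟨fun a b => ?_⟩
      obtain ⟨a, rfl⟩ := hq a
      obtain ⟨b, rfl⟩ := hq b
      rw [hk]; rfl
    have := hs i0
    have := IsSimpleModule.nontrivial S (subquot S (f i0.castSucc) (f i0.succ))
    obtain ⟨⟨x, y, hxy⟩⟩ := this
    apply hxy
    obtain ⟨x, rfl⟩ := Submodule.mkQ_surjective _ x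
    obtain ⟨y, rfl⟩ := Submodule.mkQ_surjective _ y
    rw [Subsingleton.elim x y]
  obtain ⟨p, hp⟩ := (SES.ofSurj q hq).desc π (fun a => hπt _ hqt a.2)
  have hps : Function.Surjective p := fun y => by
    obtain ⟨x, rfl⟩ := hπ y
    exact ⟨q x, hp x⟩
  have hpt : ∀ N : Submodule S (Q.std l), N ≠ ⊤ → N ≤ LinearMap.ker p := by
    intro N hN x hx
    obtain ⟨y, rfl⟩ := hq x
    have h3 : N.comap q ≠ ⊤ := fun h => hN (by
      rw [eq_top_iff]
      intro z _
      obtain ⟨z, rfl⟩ := hq z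
      have : z ∈ N.comap q := by rw [h]; trivial
      exact this)
    have h4 : π y = 0 := hπt _ h3 hx
    show p (q y) = 0
    rw [hp, h4]
  have hkp : LinearMap.ker p ≠ ⊤ := by
    intro hk
    rw [LinearMap.ker_eq_top] at hk
    obtain ⟨y, hy⟩ := exists_ne (0 : Q.L l)
    obtain ⟨x, rfl⟩ := hps y
    exact hy (by rw [hk]; rfl)
  -- the last section
  set F := f (Fin.last n).castSucc with hF
  have hlt : f (Fin.last n).succ = ⊤ := h1
  have hsl := hs (Fin.last n)
  have hFt : F ≠ ⊤ := by
    intro h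
    have := IsSimpleModule.nontrivial S (subquot S (f (Fin.last n).castSucc) (f (Fin.last n).succ))
    obtain ⟨⟨x, y, hxy⟩⟩ := this
    apply hxy
    obtain ⟨x, rfl⟩ := Submodule.mkQ_surjective _ x
    obtain ⟨y, rfl⟩ := Submodule.mkQ_surjective _ y
    rw [← sub_eq_zero, ← map_sub, Submodule.mkQ_apply, Submodule.Quotient.mk_eq_zero]
    show _ ∈ f (Fin.last n).castSucc
    rw [← hF, h]; trivial
  have hFp : F = LinearMap.ker p := by
    refine le_antisymm (hpt _ hFt) ?_
    obtain ⟨u, hu, hk⟩ := (subquot_iso_iff (X := subquot S (f (Fin.last n).castSucc)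
      (f (Fin.last n).succ)) _ _).1 ⟨LinearEquiv.refl _ _⟩
    intro x hx
    by_contra hxF
    have hux : u ⟨x, by rw [hlt]; trivial⟩ ≠ 0 := fun h => hxF ((hk _).1 h)
    apply hkp
    rw [eq_top_iff]
    intro z _
    have hsu : Function.Surjective (u ∘ₗ LinearMap.toSpanSingleton S _
        (⟨x, by rw [hlt]; trivial⟩ : ↥(f (Fin.last n).succ))) := by
      apply surjective_of_ne_zero
      intro h0
      apply hux
      have := congrArg (fun q => q 1) h0
      simpa using this
    obtain ⟨a, ha⟩ := hsu (u ⟨z, by rw [hlt]; trivial⟩)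
    have h5 : u (⟨z, by rw [hlt]; trivial⟩ - a • (⟨x, by rw [hlt]; trivial⟩)) = 0 := by
      rw [map_sub, ← ha]
      simp
    have h6 : z - a • x ∈ F := (hk _).1 h5
    have h7 : z = (z - a • x) + a • x := by abel
    rw [h7]
    exact add_mem (hpt _ hFt h6) (Submodule.smul_mem _ _ hx)
  have hiso : Nonempty ((subquot S (f (Fin.last n).castSucc) (f (Fin.last n).succ)) ≃ₗ[S] Q.L l) := by
    rw [subquot_iso_iff]
    refine ⟨p ∘ₗ Submodule.subtype _, ?_, ?_⟩
    · intro y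
      obtain ⟨x, rfl⟩ := hps y
      exact ⟨⟨x, by rw [hlt]; trivial⟩, rfl⟩
    · intro b
      rw [← hF, hFp]; rfl
  have hno : ∀ j : Fin (n + 1), ¬ CF (S := S) (Q.L l) (f j.castSucc) := by
    intro j
    induction j using Fin.induction with
    | zero =>
      intro h
      have := h.nontrivial
      have h0' : f (Fin.castSucc 0) = ⊥ := h0
      rw [h0'] at this
      exact not_nontrivial _ this
    | succ i ih =>
      intro h
      have hle : f i.castSucc.castSucc ≤ f i.castSucc.succ := hm (Fin.castSucc_lt_succ).le
      have := hs i.castSucc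
      obtain ⟨u, hu, hk⟩ := (subquot_iso_iff (X := subquot S (f i.castSucc.castSucc)
        (f i.castSucc.succ)) _ _).1 ⟨LinearEquiv.refl _ _⟩
      have hses : SES (Submodule.inclusion hle) u := ⟨Submodule.inclusion_injective hle, hu, by
        intro b
        rw [hk]
        constructor
        · intro hb; exact ⟨⟨b, hb⟩, rfl⟩
        · rintro ⟨a, rfl⟩; exact a.2⟩
      rcases CF.ses hses h with h' | h'
      · exact ih h'
      · have e1 := h'.iso_of_simple
        have := congrArg Subtype.val (hcard.1.elim ⟨i.castSucc, e1⟩ ⟨Fin.last n, hiso⟩)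
        exact absurd this (Fin.castSucc_lt_last i).ne
  refine ⟨p, hps, hpt, ?_⟩
  rw [← hFp]
  exact hno (Fin.last n)

theorem QHData.std_hom_cf {l : Λ} (f : Q.std l →ₗ[S] M) (hf : f ≠ 0) : CF (S := S) (Q.L l) M := by
  obtain ⟨p, hp, ht, -⟩ := Q.std_top l
  exact cf_of_top p hp ht f hf

theorem QHData.costd_sub (l : Λ) : ∃ j : Q.costd l →ₗ[S] Q.I l, Function.Injective j ∧
    (∀ m, CF (S := S) (Q.L m) (Q.costd l) → m ≤ l) ∧
    ∀ {M : Type} [AddCommGroup M] [Module S M] (f : M →ₗ[S] Q.I l),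
      (∀ m, CF (S := S) (Q.L m) M → m ≤ l) → ∃ g : M →ₗ[S] Q.costd l, ∀ x, j (g x) = f x := by
  obtain ⟨V, ⟨e⟩, h1, h2⟩ := Q.costdSpec l
  have hq : Function.Injective (V.subtype ∘ₗ e.toLinearMap) :=
    V.injective_subtype.comp e.injective
  refine ⟨V.subtype ∘ₗ e.toLinearMap, hq, ?_, ?_⟩
  · intro m hm
    exact h1 m (isCompFactor_iff.2 (hm.of_inj e.toLinearMap e.injective))
  · intro M _ _ f hf
    have hK : LinearMap.range f ≤ V := by
      apply h2
      intro m hm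
      exact hf m (CF.of_surj f.rangeRestrict f.surjective_rangeRestrict (isCompFactor_iff.1 hm))
    refine ⟨e.symm.toLinearMap ∘ₗ f.codRestrict V (fun x => hK ⟨x, rfl⟩), fun x => ?_⟩
    simp

theorem QHData.costd_cf {l m : Λ} (h : CF (S := S) (Q.L m) (Q.costd l)) : m ≤ l := by
  obtain ⟨q, -, h1, -⟩ := Q.costd_sub l
  exact h1 m h

theorem QHData.I_fg (l : Λ) : Module.Finite S (Q.I l) := by
  obtain ⟨-, i, hi, he⟩ := Q.injHull l
  obtain ⟨J, hJ, hJi, f, hf⟩ := FD.emb (Q.L l) (Q.finiteL l)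
  obtain ⟨v, hv⟩ := hJi.out i hi f
  refine fg_of_inj v ?_ hJ
  rw [← LinearMap.ker_eq_bot]
  apply he
  rw [eq_bot_iff]
  rintro x ⟨hx, ⟨y, rfl⟩⟩
  have : v (i y) = 0 := hx
  rw [hv] at this
  have : y = 0 := hf (by rw [this, map_zero])
  simp [this]

theorem QHData.costd_fg (l : Λ) : Module.Finite S (Q.costd l) := by
  obtain ⟨j, hj, -⟩ := Q.costd_sub l
  exact fg_of_inj j hj (Q.I_fg l)

theorem QHData.costd_soc (l : Λ) : ∃ s : Q.L l →ₗ[S] Q.costd l, Function.Injective s ∧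
    (∀ N : Submodule S (Q.costd l), N ≠ ⊥ → LinearMap.range s ≤ N) ∧
    ¬ CF (S := S) (Q.L l) (Q.costd l ⧸ LinearMap.range s) := by
  obtain ⟨-, i, hi, he⟩ := Q.injHull l
  obtain ⟨j, hj, hc, hmax⟩ := Q.costd_sub l
  have hsim := Q.simpleL l
  have hLn : Nontrivial (Q.L l) := IsSimpleModule.nontrivial S _
  obtain ⟨s, hs⟩ := hmax i (fun m hm => (Q.cf_L hm).le)
  have hsi : Function.Injective s := fun a b hab => hi (by rw [← hs, ← hs, hab])
  have hsoc : ∀ N : Submodule S (Q.costd l), N ≠ ⊥ → LinearMap.range s ≤ N := by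
    intro N hN
    have h1 : N.map j ⊓ LinearMap.range i ≠ ⊥ := fun h => hN (by
      have := he _ h
      rw [eq_bot_iff]
      intro x hx
      have hx' : j x ∈ N.map j := Submodule.mem_map_of_mem hx
      rw [this, Submodule.mem_bot] at hx'
      exact hj (by rw [hx', map_zero]))
    obtain ⟨x, ⟨⟨y, hy, rfl⟩, z, hz⟩, hx0⟩ := Submodule.exists_mem_ne_zero_of_ne_bot h1
    rw [← hs] at hz
    have hyz : s z = y := hj hz
    have h2 : N.comap s = ⊤ := by
      refine (eq_bot_or_eq_top _).resolve_left fun h0 => hx0 ?_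
      have : z ∈ N.comap s := by show s z ∈ N; rw [hyz]; exact hy
      rw [h0, Submodule.mem_bot] at this
      rw [← hyz, this, map_zero, map_zero]
    rintro _ ⟨w, rfl⟩
    have : w ∈ N.comap s := by rw [h2]; trivial
    exact this
  refine ⟨s, hsi, hsoc, fun hcf => ?_⟩
  obtain ⟨f, hf⟩ := Q.P_of_cf hcf
  have := Q.P_proj l
  obtain ⟨h, hh⟩ := Module.projective_lifting_property (LinearMap.range s).mkQ f
    (Submodule.mkQ_surjective _)
  obtain ⟨q, hq, -, hfac⟩ := Q.std_quot l
  obtain ⟨h', hh'⟩ := hfac h hc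
  obtain ⟨p, hp, hpt, hpn⟩ := Q.std_top l
  have h3 : h' ∘ₗ (LinearMap.ker p).subtype = 0 := by
    by_contra hne
    exact hpn (cf_of_soc s hsi hsoc _ hne)
  obtain ⟨w, hw⟩ := (SES.ofSurj p hp).desc h' (fun a => congrArg (fun q => q a) h3)
  apply hf
  by_cases hw0 : w = 0
  · ext x
    rw [← hh, LinearMap.comp_apply, ← hh', ← hw, hw0]
    simp
  · have hle := hsoc (LinearMap.range w) (fun h => hw0 (LinearMap.range_eq_bot.1 h))
    have hwi := injective_of_ne_zero w hw0
    have htop : (LinearMap.range s).comap w = ⊤ := by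
      refine (eq_bot_or_eq_top _).resolve_left fun h0 => ?_
      obtain ⟨y, hy⟩ := exists_ne (0 : Q.L l)
      obtain ⟨z, hz⟩ := hle ⟨y, rfl⟩
      have : z ∈ (LinearMap.range s).comap w := ⟨y, hz.symm⟩
      rw [h0, Submodule.mem_bot] at this
      rw [this, map_zero] at hz
      exact hy (hsi (by rw [← hz, map_zero]))
    ext x
    rw [← hh, LinearMap.comp_apply, ← hh', ← hw]
    have : p (q x) ∈ (LinearMap.range s).comap w := by rw [htop]; trivial
    simpa using this

theorem QHData.costd_hom_cf {l : Λ} (f : M →ₗ[S] Q.costd l) (hf : f ≠ 0) :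
    CF (S := S) (Q.L l) M := by
  obtain ⟨p, hp, ht, -⟩ := Q.costd_soc l
  exact cf_of_soc p hp ht f hf

theorem QHData.proj_filt (l : Λ) : ∃ q : Q.P l →ₗ[S] Q.std l, Function.Surjective q ∧
    Filt Q.std (fun m => l < m) (ModuleCat.of S (LinearMap.ker q)) := by
  obtain ⟨n, f, g, hF, hg, hc⟩ := Q.projFilt l
  obtain ⟨π, hπ, hπt⟩ := Q.P_top l
  have hcard := Nat.card_eq_one_iff_unique.1 hc
  obtain ⟨⟨i0, hi0⟩⟩ := hcard.2
  have hn : n ≠ 0 := by rintro rfl; exact i0.elim0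
  obtain ⟨n, rfl⟩ := Nat.exists_eq_succ_of_ne_zero hn
  have hlt : f (Fin.last n).succ = ⊤ := hF.2.2.1
  obtain ⟨u, hu, hk⟩ := (subquot_iso_iff _ _).1 (hF.2.2.2 (Fin.last n))
  let t : Q.P l →ₗ[S] Q.std (g (Fin.last n)) := u ∘ₗ LinearMap.codRestrict (f (Fin.last n).succ)
    LinearMap.id (fun x => by rw [hlt]; trivial)
  have ht : Function.Surjective t := by
    intro y
    obtain ⟨x, rfl⟩ := hu y
    exact ⟨x.1, rfl⟩
  have hkt : LinearMap.ker t = f (Fin.last n).castSucc := by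
    ext x
    exact hk _
  have hgl : l = g (Fin.last n) := by
    obtain ⟨p, hp, -, -⟩ := Q.std_top (g (Fin.last n))
    refine Q.cf_L (Q.P_cf (p ∘ₗ t) fun h0 => ?_)
    have := Q.simpleL (g (Fin.last n))
    have : Nontrivial (Q.L (g (Fin.last n))) := IsSimpleModule.nontrivial S _
    obtain ⟨y, hy⟩ := exists_ne (0 : Q.L (g (Fin.last n)))
    obtain ⟨x, rfl⟩ := (hp.comp ht) y
    exact hy (congrArg (fun q => q x) h0)
  have hfil : Filt Q.std (fun m => l < m) (ModuleCat.of S (LinearMap.ker t)) := by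
    rw [hkt]
    refine Filt.of_sections hF _ fun i hi => lt_of_le_of_ne (hg i) fun h => ?_
    have := congrArg Subtype.val (hcard.1.elim ⟨i, h.symm⟩ ⟨Fin.last n, hgl.symm⟩)
    have : i = Fin.last n := this
    subst this
    exact lt_irrefl _ hi
  have : ∃ q : Q.P l →ₗ[S] Q.std (g (Fin.last n)), Function.Surjective q ∧
      Filt Q.std (fun m => l < m) (ModuleCat.of S (LinearMap.ker q)) := ⟨t, ht, hfil⟩
  rwa [← hgl] at this

theorem QHData.ev_std_of {l : Λ} (h : ∀ m, CF (S := S) (Q.L m) M → ¬ l < m) :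
    EV S (Q.std l) M 1 := by
  obtain ⟨q, hq, hf⟩ := Q.proj_filt l
  refine (SES.ofSurj q hq).ev_one_of_extend (EV.of_projective (Q.P_proj l) 0) fun u => ⟨0, ?_⟩
  have h0 : EV S (LinearMap.ker q) M 0 := hf.of_ses_ev_left fun m hm => EV.zero_iff.2 fun v => by
    by_contra hv
    exact h m (Q.std_hom_cf v hv) hm
  intro a
  rw [EV.zero_iff.1 h0 u]; rfl

theorem QHData.ev_costd_of {m : Λ} (h : ∀ l, CF (S := S) (Q.L l) M → l ≤ m) :
    EV S M (Q.costd m) 1 := by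
  obtain ⟨j, hj, hc, hmax⟩ := Q.costd_sub m
  refine (SES.ofInj j hj).ev_one_of_lift (EV.of_injective (Q.injHull m).1 0) fun u => ⟨0, ?_⟩
  intro x
  let W : Submodule S (Q.I m) := (LinearMap.range u).comap (LinearMap.range j).mkQ
  let w : W →ₗ[S] LinearMap.range u := (LinearMap.range j).mkQ.restrict (fun x hx => hx)
  have hw : Function.Surjective w := by
    rintro ⟨y, hy⟩
    obtain ⟨z, rfl⟩ := Submodule.mkQ_surjective _ y
    exact ⟨⟨z, hy⟩, rfl⟩
  obtain ⟨g, hg⟩ := hmax W.subtype (fun l hl => by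
    have := Q.simpleL l
    rcases CF.ses (SES.ofSurj w hw) hl with h1 | h1
    · refine hc l ?_
      obtain ⟨v, hv⟩ := (SES.ofInj j hj).factor (W.subtype ∘ₗ (LinearMap.ker w).subtype)
        (fun x => congrArg Subtype.val (show w x = 0 from x.2))
      refine h1.of_inj v fun a b hab => ?_
      have := hv a
      rw [hab, hv b] at this
      exact Subtype.ext (Subtype.ext this.symm)
    · exact h l (h1.of_surj u.rangeRestrict u.surjective_rangeRestrict))
  obtain ⟨z, hz⟩ := Submodule.mkQ_surjective _ (u x)
  have hzW : z ∈ W := ⟨x, hz.symm⟩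
  have h1 := hg ⟨z, hzW⟩
  have h2 : z ∈ LinearMap.range j := ⟨_, h1⟩
  rw [← hz, LinearMap.zero_apply, map_zero]
  exact ((Submodule.Quotient.mk_eq_zero _).2 h2).symm

theorem QHData.ev_std_costd_one (l m : Λ) : EV S (Q.std l) (Q.costd m) 1 := by
  by_cases h : l < m
  · exact Q.ev_costd_of fun _ hn => (Q.std_cf hn).trans h.le
  · exact Q.ev_std_of fun _ hn hln => h (lt_of_lt_of_le hln (Q.costd_cf hn))

theorem QHData.ev_std_costd (n : ℕ) : ∀ l m : Λ, EV S (Q.std l) (Q.costd m) (n + 1) := by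
  induction n with
  | zero => exact Q.ev_std_costd_one
  | succ n ih =>
    intro l m
    obtain ⟨q, hq, hf⟩ := Q.proj_filt l
    exact (SES.ofSurj q hq).ev_quot_left (hf.of_ses_ev_left fun i _ => ih i m)
      (EV.of_projective (Q.P_proj l) _)

theorem QHData.ev_std_std {l m : Λ} (h : ¬ l < m) : EV S (Q.std l) (Q.std m) 1 :=
  Q.ev_std_of fun _ hn hln => h (lt_of_lt_of_le hln (Q.std_cf hn))

theorem QHData.ev_costd_costd {l m : Λ} (h : l ≤ m) : EV S (Q.costd l) (Q.costd m) 1 :=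
  Q.ev_costd_of fun _ hn => (Q.costd_cf hn).trans h

theorem QHData.hom_std_costd {l m : Λ} (h : l ≠ m) (f : Q.std l →ₗ[S] Q.costd m) : f = 0 := by
  by_contra hf
  exact h (le_antisymm (Q.costd_cf (Q.std_hom_cf f hf)) (Q.std_cf (Q.costd_hom_cf f hf)))

theorem QHData.L_nontrivial (l : Λ) : Nontrivial (Q.L l) :=
  have := Q.simpleL l
  IsSimpleModule.nontrivial S _

theorem comp_ne_zero_of [Nontrivial C] (f : A →ₗ[S] C) (hf : Function.Surjective f)
    (g : C →ₗ[S] B) (hg : Function.Injective g) : g ∘ₗ f ≠ 0 := by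
  intro h0
  obtain ⟨y, hy⟩ := exists_ne (0 : C)
  obtain ⟨x, rfl⟩ := hf y
  exact hy (hg ((congrArg (fun q => q x) h0).trans (map_zero g).symm))

theorem QHData.hom_std_costd_ne (l : Λ) : ∃ f : Q.std l →ₗ[S] Q.costd l, f ≠ 0 := by
  obtain ⟨p, hp, -, -⟩ := Q.std_top l
  obtain ⟨s, hs, -, -⟩ := Q.costd_soc l
  have := Q.L_nontrivial l
  exact ⟨s ∘ₗ p, comp_ne_zero_of p hp s hs⟩

theorem QHData.ev_left_of_cf (n i : ℕ) : ∀ (M : Type) [AddCommGroup M] [Module S M],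
    Module.length S M ≤ n → Module.Finite S M →
    (∀ l, CF (S := S) (Q.L l) M → EV S (Q.L l) X i) → EV S M X i := by
  induction n with
  | zero =>
    intro M _ _ h _ _
    exact Filt.of_ses_ev_left (D := Q.L) (p := fun _ => False) (M := ModuleCat.of S M)
      (.zero _ (len_zero h)) (fun _ h => h.elim)
  | succ n ih =>
    intro M _ _ h hM hcf
    rcases subsingleton_or_nontrivial M with hs | hs
    · exact Filt.of_ses_ev_left (D := Q.L) (p := fun _ => False) (M := ModuleCat.of S M)
        (.zero _ hs) (fun _ h => h.elim)
    · obtain ⟨l, f, hf⟩ := Q.exists_quot hM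
      have := Q.L_nontrivial l
      refine (SES.ofSurj f hf).ev_mid_left (ih _ (len_sub (SES.ofSurj f hf) h) (fg_sub _ hM)
        fun m hm => hcf m (hm.of_inj _ (Submodule.injective_subtype _))) (hcf l (CF.of_quot f hf))

theorem QHData.ev_right_of_cf (n i : ℕ) : ∀ (M : Type) [AddCommGroup M] [Module S M],
    Module.length S M ≤ n → Module.Finite S M →
    (∀ l, CF (S := S) (Q.L l) M → EV S X (Q.L l) i) → EV S X M i := by
  induction n with
  | zero =>
    intro M _ _ h _ _
    exact Filt.of_ses_ev_right (D := Q.L) (p := fun _ => False) (M := ModuleCat.of S M)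
      (.zero _ (len_zero h)) (fun _ h => h.elim)
  | succ n ih =>
    intro M _ _ h hM hcf
    rcases subsingleton_or_nontrivial M with hs | hs
    · exact Filt.of_ses_ev_right (D := Q.L) (p := fun _ => False) (M := ModuleCat.of S M)
        (.zero _ hs) (fun _ h => h.elim)
    · obtain ⟨l, f, hf⟩ := Q.exists_quot hM
      have := Q.L_nontrivial l
      refine (SES.ofSurj f hf).ev_mid_right (ih _ (len_sub (SES.ofSurj f hf) h) (fg_sub _ hM)
        fun m hm => hcf m (hm.of_inj _ (Submodule.injective_subtype _))) (hcf l (CF.of_quot f hf))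

theorem exists_min (p : Λ → Prop) (h : ∃ l, p l) : ∃ l, p l ∧ ∀ m, m < l → ¬ p m := by
  obtain ⟨l, hl, hm⟩ := (wellFounded_lt (α := Λ)).has_min {l | p l} h
  exact ⟨l, hl, fun m hml hp => hm m hp hml⟩

theorem QHData.costdFilt_aux (n : ℕ) : ∀ (X : ModuleCat.{0} S),
    Module.length S X ≤ n → Module.Finite S X → (∀ l, EV S (Q.std l) X 1) →
    Filt Q.costd (fun _ => True) X := by
  induction n with
  | zero => intro X h _ _; exact .zero _ (len_zero h)
  | succ n ih =>
    intro X hlen hX hE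
    rcases subsingleton_or_nontrivial X with hs | hs
    · exact .zero _ hs
    have hhom : ∀ l (f : Q.L l →ₗ[S] X), Function.Injective f → ∃ f : Q.std l →ₗ[S] X, f ≠ 0 := by
      intro l f hf
      obtain ⟨p, hp, -, -⟩ := Q.std_top l
      have := Q.L_nontrivial l
      exact ⟨f ∘ₗ p, comp_ne_zero_of p hp f hf⟩
    obtain ⟨l, ⟨f, hf⟩, hmin⟩ := exists_min (fun l => ∃ f : Q.std l →ₗ[S] X, f ≠ 0) (by
      obtain ⟨l, f, hf⟩ := Q.exists_sub hX
      exact ⟨l, hhom l f hf⟩)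
    obtain ⟨l', g, hg, hcf⟩ := Q.hom_sub (Q.std_fg l) f hf
    have hl : l' = l := by
      by_contra hne
      exact hmin l' (lt_of_le_of_ne (Q.std_cf hcf) hne) (hhom l' g hg)
    subst hl
    have hL : ∀ m, m < l' → EV S (Q.L m) X 1 := by
      intro m hm
      obtain ⟨p, hp, -, -⟩ := Q.std_top m
      refine (SES.ofSurj p hp).ev_one_of_extend (hE m) fun u => ⟨0, fun a => ?_⟩
      have : u = 0 := by
        by_contra hu
        obtain ⟨c, v, hv, hc⟩ := Q.hom_sub (fg_sub _ (Q.std_fg m)) u hu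
        have hcm : c ≤ m := Q.std_cf (hc.of_inj _ (Submodule.injective_subtype _))
        exact hmin c (lt_of_le_of_lt hcm hm) (hhom c v hv)
      rw [this]; rfl
    obtain ⟨s, hs, hsoc, hscf⟩ := Q.costd_soc l'
    have hq := fg_surj _ (Submodule.mkQ_surjective (LinearMap.range s)) (Q.costd_fg l')
    obtain ⟨n', hn'⟩ := len_fin hq
    have hQ : EV S (Q.costd l' ⧸ LinearMap.range s) X 1 := by
      refine Q.ev_left_of_cf n' 1 _ hn' hq fun m hm => hL m (lt_of_le_of_ne ?_ ?_)
      · exact Q.costd_cf (hm.of_surj _ (Submodule.mkQ_surjective _))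
      · rintro rfl; exact hscf hm
    obtain ⟨v, hv⟩ := (SES.ofInj s hs).extend hQ g
    have hvi : Function.Injective v := by
      rw [← LinearMap.ker_eq_bot]
      by_contra hne
      have hle := hsoc _ hne
      have := Q.L_nontrivial l'
      obtain ⟨y, hy⟩ := exists_ne (0 : Q.L l')
      have h1 : v (s y) = 0 := hle ⟨y, rfl⟩
      rw [hv] at h1
      exact hy (hg (by rw [h1, map_zero]))
    have hses := SES.ofInj v hvi
    have hnt : Nontrivial (Q.costd l') := by
      have := Q.L_nontrivial l'
      exact hs.nontrivial
    refine Filt.ext (A := Q.costd l') (C := ModuleCat.of S (X ⧸ LinearMap.range v))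
      (ih _ ?_ ?_ ?_) hses (Filt.single l' trivial)
    · exact len_quot hses hlen
    · exact fg_surj _ (Submodule.mkQ_surjective _) hX
    · intro m
      exact hses.ev_quot_right (hE m) (Q.ev_std_costd 1 m l')

theorem QHData.costdFilt_of (X : ModuleCat.{0} S) (hX : Module.Finite S X)
    (h : ∀ l, EV S (Q.std l) X 1) : Filt Q.costd (fun _ => True) X := by
  obtain ⟨n, hn⟩ := len_fin hX
  exact Q.costdFilt_aux n X hn hX h

theorem QHData.stdFilt_aux (n : ℕ) : ∀ (X : ModuleCat.{0} S),
    Module.length S X ≤ n → Module.Finite S X → (∀ l, EV S X (Q.costd l) 1) →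
    Filt Q.std (fun _ => True) X := by
  induction n with
  | zero => intro X h _ _; exact .zero _ (len_zero h)
  | succ n ih =>
    intro X hlen hX hE
    rcases subsingleton_or_nontrivial X with hs | hs
    · exact .zero _ hs
    have hhom : ∀ l (f : X →ₗ[S] Q.L l), Function.Surjective f →
        ∃ f : X →ₗ[S] Q.costd l, f ≠ 0 := by
      intro l f hf
      obtain ⟨p, hp, -, -⟩ := Q.costd_soc l
      have := Q.L_nontrivial l
      exact ⟨p ∘ₗ f, comp_ne_zero_of f hf p hp⟩
    obtain ⟨l, ⟨f, hf⟩, hmin⟩ := exists_min (fun l => ∃ f : X →ₗ[S] Q.costd l, f ≠ 0) (by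
      obtain ⟨l, f, hf⟩ := Q.exists_quot hX
      exact ⟨l, hhom l f hf⟩)
    obtain ⟨l', g, hg, hcf⟩ := Q.hom_quot hX f hf
    have hl : l' = l := by
      by_contra hne
      exact hmin l' (lt_of_le_of_ne (Q.costd_cf hcf) hne) (hhom l' g hg)
    subst hl
    have hL : ∀ m, m < l' → EV S X (Q.L m) 1 := by
      intro m hm
      obtain ⟨p, hp, -, -⟩ := Q.costd_soc m
      refine (SES.ofInj p hp).ev_one_of_lift (hE m) fun u => ⟨0, fun a => ?_⟩
      have : u = 0 := by
        by_contra hu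
        obtain ⟨c, v, hv, hc⟩ := Q.hom_quot hX u hu
        have hcm : c ≤ m := Q.costd_cf (hc.of_surj _ (Submodule.mkQ_surjective _))
        exact hmin c (lt_of_le_of_lt hcm hm) (hhom c v hv)
      rw [this]; simp
    obtain ⟨p, hp, htop, hpcf⟩ := Q.std_top l'
    have hq := fg_sub (LinearMap.ker p) (Q.std_fg l')
    obtain ⟨n', hn'⟩ := len_fin hq
    have hQ : EV S X (LinearMap.ker p) 1 := by
      refine Q.ev_right_of_cf n' 1 _ hn' hq fun m hm => hL m (lt_of_le_of_ne ?_ ?_)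
      · exact Q.std_cf (hm.of_inj _ (Submodule.injective_subtype _))
      · rintro rfl; exact hpcf hm
    obtain ⟨v, hv⟩ := (SES.ofSurj p hp).lift hQ g
    have hvi : Function.Surjective v := by
      rw [← LinearMap.range_eq_top]
      by_contra hne
      have hle := htop _ hne
      have := Q.L_nontrivial l'
      obtain ⟨y, hy⟩ := exists_ne (0 : Q.L l')
      obtain ⟨x, rfl⟩ := hg y
      have h1 : p (v x) = 0 := hle ⟨x, rfl⟩
      rw [hv] at h1
      exact hy h1
    have hses := SES.ofSurj v hvi
    have hnt : Nontrivial (Q.std l') := by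
      have := Q.L_nontrivial l'
      exact hp.nontrivial
    refine Filt.step (ModuleCat.of S (LinearMap.ker v)) X l' trivial _ v hses (ih _ ?_ ?_ ?_)
    · exact len_sub hses hlen
    · exact fg_sub _ hX
    · intro m
      exact hses.ev_sub_left (hE m) (Q.ev_std_costd 1 l' m)

theorem QHData.stdFilt_of (X : ModuleCat.{0} S) (hX : Module.Finite S X)
    (h : ∀ l, EV S X (Q.costd l) 1) : Filt Q.std (fun _ => True) X := by
  obtain ⟨n, hn⟩ := len_fin hX
  exact Q.stdFilt_aux n X hn hX h

end QHLayer
end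
end QHPaper

namespace QHPaper
open CategoryTheory
noncomputable section
set_option linter.unusedSectionVars false

section ResLayer
variable {S : Type} [Ring S]
variable {A B C M N X Y : Type} [AddCommGroup A] [Module S A] [AddCommGroup B] [Module S B]
  [AddCommGroup C] [Module S C] [AddCommGroup M] [Module S M] [AddCommGroup N] [Module S N]
  [AddCommGroup X] [Module S X] [AddCommGroup Y] [Module S Y]

/-- Left resolutions of length `d` by modules in a class. -/
def Res (P : ModuleCat.{0} S → Prop) : ℕ → ModuleCat.{0} S → Prop
  | 0, X => ∃ C : ModuleCat.{0} S, P C ∧ Nonempty (C ≃ₗ[S] X)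
  | d + 1, X => ∃ (K C : ModuleCat.{0} S) (f : K →ₗ[S] C) (g : C →ₗ[S] X),
      SES f g ∧ P C ∧ Res P d K

/-- Right resolutions of length `d` by modules in a class. -/
def CoRes (P : ModuleCat.{0} S → Prop) : ℕ → ModuleCat.{0} S → Prop
  | 0, X => ∃ C : ModuleCat.{0} S, P C ∧ Nonempty (X ≃ₗ[S] C)
  | d + 1, X => ∃ (C K : ModuleCat.{0} S) (f : X →ₗ[S] C) (g : C →ₗ[S] K),
      SES f g ∧ P C ∧ CoRes P d K

variable {P : ModuleCat.{0} S → Prop}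

theorem SES.congr_right {f : A →ₗ[S] B} {g : B →ₗ[S] C} (h : SES f g) (e : C ≃ₗ[S] X) :
    SES f (e.toLinearMap ∘ₗ g) :=
  ⟨h.inj, e.surjective.comp h.surj, fun b => by simpa using h.ex b⟩

theorem SES.congr_left {f : A →ₗ[S] B} {g : B →ₗ[S] C} (h : SES f g) (e : X ≃ₗ[S] A) :
    SES (f ∘ₗ e.toLinearMap) g :=
  ⟨h.inj.comp e.injective, h.surj, fun b => by
    rw [h.ex]
    constructor
    · rintro ⟨a, ha⟩; exact ⟨e.symm a, by simpa using ha⟩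
    · rintro ⟨a, ha⟩; exact ⟨e a, ha⟩⟩

theorem Res.congr {d : ℕ} {X Y : ModuleCat.{0} S} (e : X ≃ₗ[S] Y) (h : Res P d X) :
    Res P d Y := by
  cases d with
  | zero =>
    obtain ⟨C, hC, ⟨e'⟩⟩ := h
    exact ⟨C, hC, ⟨e'.trans e⟩⟩
  | succ d =>
    obtain ⟨K, C, f, g, hs, hC, hK⟩ := h
    exact ⟨K, C, f, _, hs.congr_right e, hC, hK⟩

theorem CoRes.congr {d : ℕ} {X Y : ModuleCat.{0} S} (e : X ≃ₗ[S] Y) (h : CoRes P d X) :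
    CoRes P d Y := by
  cases d with
  | zero =>
    obtain ⟨C, hC, ⟨e'⟩⟩ := h
    exact ⟨C, hC, ⟨e.symm.trans e'⟩⟩
  | succ d =>
    obtain ⟨K, C, f, g, hs, hC, hK⟩ := h
    exact ⟨K, C, _, g, hs.congr_left e.symm, hC, hK⟩

theorem Res.of_seq {d : ℕ} {N : Fin (d + 2) → ModuleCat.{0} S}
    {f : ∀ i : Fin (d + 1), N i.castSucc →ₗ[S] N i.succ} (h : IsExactSeq S d N f)
    (hP : ∀ i : Fin (d + 1), P (N i.castSucc)) : Res P d (N (Fin.last (d + 1))) := by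
  obtain ⟨h0, h1, hex⟩ := h
  have key : ∀ j : Fin (d + 1), Res P j (ModuleCat.of S (LinearMap.range (f j))) := by
    intro j
    induction j using Fin.induction with
    | zero => exact ⟨N (Fin.castSucc 0), hP 0, ⟨LinearEquiv.ofInjective _ h0⟩⟩
    | succ i ih =>
      refine ⟨ModuleCat.of S (LinearMap.range (f i.castSucc)), N i.succ.castSucc,
        Submodule.subtype _, (f i.succ).rangeRestrict, ⟨Submodule.injective_subtype _,
        LinearMap.surjective_rangeRestrict _, fun b => ?_⟩, hP _, ih⟩
      have h3 : (f i.succ).rangeRestrict b = 0 ↔ b ∈ LinearMap.ker (f i.succ) :=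
        ⟨fun h => congrArg Subtype.val h, fun h => Subtype.ext h⟩
      rw [h3, ← hex i]
      exact ⟨fun h => ⟨⟨b, h⟩, rfl⟩, by rintro ⟨a, rfl⟩; exact a.2⟩
  have := key (Fin.last d)
  rw [LinearMap.range_eq_top.2 h1] at this
  exact this.congr (Submodule.topEquiv (R := S) (M := N (Fin.last (d + 1))))

theorem CoRes.of_seq {d : ℕ} {N : Fin (d + 2) → ModuleCat.{0} S}
    {f : ∀ i : Fin (d + 1), N i.castSucc →ₗ[S] N i.succ} (h : IsExactSeq S d N f)
    (hP : ∀ i : Fin (d + 1), P (N i.succ)) : CoRes P d (N 0) := by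
  obtain ⟨h0, h1, hex⟩ := h
  have key : ∀ j : Fin (d + 1), CoRes P (d - j) (ModuleCat.of S (LinearMap.range (f j))) := by
    intro j
    induction j using Fin.reverseInduction with
    | last =>
      have : d - (Fin.last d : ℕ) = 0 := by simp
      rw [this, LinearMap.range_eq_top.2 h1]
      exact ⟨_, hP (Fin.last d), ⟨Submodule.topEquiv⟩⟩
    | cast i ih =>
      have e1 : d - (i.castSucc : ℕ) = (d - (i.succ : ℕ)) + 1 := by
        have := i.2
        simp only [Fin.val_castSucc, Fin.val_succ]
        omega
      rw [e1]
      refine ⟨N i.succ.castSucc, ModuleCat.of S (LinearMap.range (f i.succ)),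
        Submodule.subtype _, (f i.succ).rangeRestrict, ⟨Submodule.injective_subtype _,
        LinearMap.surjective_rangeRestrict _, fun b => ?_⟩, hP i.castSucc, ih⟩
      have h3 : (f i.succ).rangeRestrict b = 0 ↔ b ∈ LinearMap.ker (f i.succ) :=
        ⟨fun h => congrArg Subtype.val h, fun h => Subtype.ext h⟩
      rw [h3, ← hex i]
      exact ⟨fun h => ⟨⟨b, h⟩, rfl⟩, by rintro ⟨a, rfl⟩; exact a.2⟩
  have := key 0
  exact this.congr (LinearEquiv.ofInjective _ h0).symm

theorem CoRes.exists_nat {d : ℕ} : ∀ {X : ModuleCat.{0} S}, CoRes P d X →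
    ∃ (N : ℕ → ModuleCat.{0} S) (f : ∀ i, N i →ₗ[S] N (i + 1)), N 0 = X ∧
      Function.Injective (f 0) ∧ Function.Surjective (f d) ∧
      (∀ i < d, LinearMap.range (f i) = LinearMap.ker (f (i + 1))) ∧ ∀ i ≤ d, P (N (i + 1)) := by
  induction d with
  | zero =>
    rintro X ⟨C, hC, ⟨e⟩⟩
    let N : ℕ → ModuleCat.{0} S := fun | 0 => X | _ + 1 => C
    let f : ∀ i, N i →ₗ[S] N (i + 1) := fun | 0 => e.toLinearMap | _ + 1 => LinearMap.id
    refine ⟨N, f, rfl, e.injective, e.surjective, fun i hi => absurd hi (by omega), fun i hi => ?_⟩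
    exact hC
  | succ d ih =>
    rintro X ⟨C, K, a, b, hs, hC, hK⟩
    obtain ⟨N, f, rfl, hi, hsu, hex, hP⟩ := ih hK
    let N' : ℕ → ModuleCat.{0} S := fun | 0 => X | 1 => C | i + 2 => N (i + 1)
    let f' : ∀ i, N' i →ₗ[S] N' (i + 1) := fun | 0 => a | 1 => f 0 ∘ₗ b | i + 2 => f (i + 1)
    refine ⟨N', f', rfl, hs.inj, ?_, ?_, ?_⟩
    · cases d with
      | zero => exact hsu.comp hs.surj
      | succ d => exact hsu
    · rintro (_ | _ | i) h
      · show LinearMap.range a = LinearMap.ker (f 0 ∘ₗ b)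
        ext x
        have : (f 0 ∘ₗ b) x = 0 ↔ b x = 0 := by
          rw [LinearMap.comp_apply]
          exact map_eq_zero_iff (f 0) hi
        rw [LinearMap.mem_ker, this, hs.ex]; rfl
      · show LinearMap.range (f 0 ∘ₗ b) = LinearMap.ker (f 1)
        rw [LinearMap.range_comp, LinearMap.range_eq_top.2 hs.surj, Submodule.map_top]
        exact hex 0 (by omega)
      · exact hex (i + 1) (by omega)
    · rintro (_ | i) h
      · exact hC
      · exact hP i (by omega)

theorem Res.exists_nat {d : ℕ} : ∀ {X : ModuleCat.{0} S}, Res P d X →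
    ∃ (N : ℕ → ModuleCat.{0} S) (f : ∀ i, N (i + 1) →ₗ[S] N i), N 0 = X ∧
      Function.Surjective (f 0) ∧ Function.Injective (f d) ∧
      (∀ i < d, LinearMap.range (f (i + 1)) = LinearMap.ker (f i)) ∧ ∀ i ≤ d, P (N (i + 1)) := by
  induction d with
  | zero =>
    rintro X ⟨C, hC, ⟨e⟩⟩
    let N : ℕ → ModuleCat.{0} S := fun | 0 => X | _ + 1 => C
    let f : ∀ i, N (i + 1) →ₗ[S] N i := fun | 0 => e.toLinearMap | _ + 1 => LinearMap.id
    refine ⟨N, f, rfl, e.surjective, e.injective, fun i hi => absurd hi (by omega), fun i hi => ?_⟩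
    exact hC
  | succ d ih =>
    rintro X ⟨K, C, a, b, hs, hC, hK⟩
    obtain ⟨N, f, rfl, hi, hsu, hex, hP⟩ := ih hK
    let N' : ℕ → ModuleCat.{0} S := fun | 0 => X | 1 => C | i + 2 => N (i + 1)
    let f' : ∀ i, N' (i + 1) →ₗ[S] N' i := fun | 0 => b | 1 => a ∘ₗ f 0 | i + 2 => f (i + 1)
    refine ⟨N', f', rfl, hs.surj, ?_, ?_, ?_⟩
    · cases d with
      | zero => exact hs.inj.comp hsu
      | succ d => exact hsu
    · rintro (_ | _ | i) h
      · show LinearMap.range (a ∘ₗ f 0) = LinearMap.ker b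
        rw [LinearMap.range_comp, LinearMap.range_eq_top.2 hi, Submodule.map_top]
        ext x
        rw [LinearMap.mem_ker, hs.ex]; rfl
      · show LinearMap.range (f 1) = LinearMap.ker (a ∘ₗ f 0)
        rw [LinearMap.ker_comp_of_ker_eq_bot _ (LinearMap.ker_eq_bot.2 hs.inj)]
        exact hex 0 (by omega)
      · exact hex (i + 1) (by omega)
    · rintro (_ | i) h
      · exact hC
      · exact hP i (by omega)

theorem CoRes.seq {d : ℕ} {X : ModuleCat.{0} S} (h : CoRes P d X) :
    ∃ (N : Fin (d + 2) → ModuleCat.{0} S)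
      (f : ∀ i : Fin (d + 1), N i.castSucc →ₗ[S] N i.succ),
      IsExactSeq S d N f ∧ N 0 = X ∧ ∀ i : Fin (d + 1), P (N i.succ) := by
  obtain ⟨N, f, h0, hi, hs, hex, hP⟩ := h.exists_nat
  refine ⟨fun i => N i, fun i => f i, ⟨hi, hs, fun i => hex i i.2⟩, h0, fun i => hP i (by omega)⟩

/-- reindexed map -/
def stepMap {N : ℕ → ModuleCat.{0} S} (f : ∀ i, N (i + 1) →ₗ[S] N i) (a b : ℕ) (h : a = b + 1) :
    N a →ₗ[S] N b := by
  subst h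
  exact f b

theorem Res.seq {d : ℕ} {X : ModuleCat.{0} S} (h : Res P d X) :
    ∃ (N : Fin (d + 2) → ModuleCat.{0} S)
      (f : ∀ i : Fin (d + 1), N i.castSucc →ₗ[S] N i.succ),
      IsExactSeq S d N f ∧ N (Fin.last (d + 1)) = X ∧ ∀ i : Fin (d + 1), P (N i.castSucc) := by
  obtain ⟨N, f, h0, hsu, hi, hex, hP⟩ := h.exists_nat
  have k1 : ∀ a b (h : a = b + 1), b = d → Function.Injective (stepMap f a b h) := by
    rintro _ b rfl rfl; exact hi
  have k2 : ∀ a b (h : a = b + 1), b = 0 → Function.Surjective (stepMap f a b h) := by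
    rintro _ b rfl rfl; exact hsu
  have k3 : ∀ a b c (h : a = b + 1) (h' : b = c + 1), c < d →
      LinearMap.range (stepMap f a b h) = LinearMap.ker (stepMap f b c h') := by
    rintro _ _ c rfl rfl hc; exact hex c hc
  refine ⟨fun i => N (d + 1 - i), fun i => stepMap f (d + 1 - i.castSucc) (d + 1 - i.succ) ?_,
    ⟨k1 _ _ _ ?_, k2 _ _ _ ?_, fun i => k3 _ _ _ _ _ ?_⟩, ?_, fun i => ?_⟩
  · have := i.2
    simp only [Fin.val_castSucc, Fin.val_succ]
    omega
  · simp
  · simp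
  · have := i.2
    simp only [Fin.val_succ]
    omega
  · simpa using h0
  · have := i.2
    have e : d + 1 - (i.castSucc : ℕ) = (d - i) + 1 := by
      simp only [Fin.val_castSucc]
      omega
    show P (N (d + 1 - (i.castSucc : ℕ)))
    rw [e]
    exact hP _ (by omega)

theorem res_iff {Z Cl : ModuleCat.{0} S → Prop}
    (h1 : ∀ C, P C → ∀ z, Z z → ∀ i, EV S C z (i + 1))
    (h0 : ∀ X, Cl X → (∀ z, Z z → EV S X z 1) → P X)
    (h2 : ∀ X, Cl X → ∃ (K C : ModuleCat.{0} S) (f : K →ₗ[S] C) (g : C →ₗ[S] X),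
      SES f g ∧ P C ∧ Cl K) (d : ℕ) :
    ∀ X, Cl X → (Res P d X ↔ ∀ z, Z z → ∀ i, EV S X z (d + 1 + i)) := by
  have fwd : ∀ d X, Res P d X → ∀ z, Z z → ∀ i, EV S X z (d + 1 + i) := by
    intro d
    induction d with
    | zero =>
      rintro X ⟨C, hC, ⟨e⟩⟩ z hz i
      rw [show 0 + 1 + i = i + 1 by omega]
      exact (h1 C hC z hz i).congr_left e.symm
    | succ d ih =>
      rintro X ⟨K, C, f, g, hs, hC, hK⟩ z hz i
      rw [show d + 1 + 1 + i = (d + 1 + i) + 1 by omega]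
      exact hs.ev_quot_left (ih K hK z hz i) (h1 C hC z hz _)
  induction d with
  | zero =>
    intro X hX
    refine ⟨fwd 0 X, fun h => ⟨X, h0 X hX fun z hz => h z hz 0, ⟨LinearEquiv.refl _ _⟩⟩⟩
  | succ d ih =>
    intro X hX
    refine ⟨fwd (d + 1) X, fun h => ?_⟩
    obtain ⟨K, C, f, g, hs, hC, hK⟩ := h2 X hX
    refine ⟨K, C, f, g, hs, hC, (ih K hK).2 fun z hz i => ?_⟩
    refine hs.ev_sub_left ?_ ?_
    · rw [show d + 1 + i = (d + i) + 1 by omega]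
      exact h1 C hC z hz _
    · rw [show d + 1 + i + 1 = d + 1 + 1 + i by omega]
      exact h z hz i

theorem coRes_iff {Z Cl : ModuleCat.{0} S → Prop}
    (h1 : ∀ C, P C → ∀ z, Z z → ∀ i, EV S z C (i + 1))
    (h0 : ∀ X, Cl X → (∀ z, Z z → EV S z X 1) → P X)
    (h2 : ∀ X, Cl X → ∃ (C K : ModuleCat.{0} S) (f : X →ₗ[S] C) (g : C →ₗ[S] K),
      SES f g ∧ P C ∧ Cl K) (d : ℕ) :
    ∀ X, Cl X → (CoRes P d X ↔ ∀ z, Z z → ∀ i, EV S z X (d + 1 + i)) := by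
  have fwd : ∀ d X, CoRes P d X → ∀ z, Z z → ∀ i, EV S z X (d + 1 + i) := by
    intro d
    induction d with
    | zero =>
      rintro X ⟨C, hC, ⟨e⟩⟩ z hz i
      rw [show 0 + 1 + i = i + 1 by omega]
      exact (h1 C hC z hz i).congr_right e
    | succ d ih =>
      rintro X ⟨C, K, f, g, hs, hC, hK⟩ z hz i
      rw [show d + 1 + 1 + i = (d + 1 + i) + 1 by omega]
      exact hs.ev_sub_right (ih K hK z hz i) (h1 C hC z hz _)
  induction d with
  | zero =>
    intro X hX
    refine ⟨fwd 0 X, fun h => ⟨X, h0 X hX fun z hz => h z hz 0, ⟨LinearEquiv.refl _ _⟩⟩⟩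
  | succ d ih =>
    intro X hX
    refine ⟨fwd (d + 1) X, fun h => ?_⟩
    obtain ⟨C, K, f, g, hs, hC, hK⟩ := h2 X hX
    refine ⟨C, K, f, g, hs, hC, (ih K hK).2 fun z hz i => ?_⟩
    refine hs.ev_quot_right ?_ ?_
    · rw [show d + 1 + i = (d + i) + 1 by omega]
      exact h1 C hC z hz _
    · rw [show d + 1 + i + 1 = d + 1 + 1 + i by omega]
      exact h z hz i

theorem projdimLE_iff (X : ModuleCat.{0} S) (d : ℕ) :
    ProjdimLE S X d ↔ ∀ z : ModuleCat.{0} S, ∀ i, EV S X z (d + 1 + i) := by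
  have key := res_iff (S := S) (P := fun C => Module.Projective S C) (Z := fun _ => True)
    (Cl := fun _ => True) (fun C hC z _ i => EV.of_projective hC i)
    (fun X _ h => projective_of_ev fun N _ _ => h (ModuleCat.of S N) trivial)
    (fun X _ => by
      have hs : Function.Surjective (Finsupp.linearCombination S (id : X → X)) :=
        fun m => ⟨Finsupp.single m 1, by simp⟩
      refine ⟨ModuleCat.of S (LinearMap.ker (Finsupp.linearCombination S (id : X → X))),
        ModuleCat.of S (X →₀ S), _, _, SES.ofSurj _ hs, ?_, trivial⟩
      show Module.Projective S (X →₀ S)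
      infer_instance) d X trivial
  rw [show (∀ z : ModuleCat.{0} S, ∀ i, EV S X z (d + 1 + i)) ↔
    (∀ z : ModuleCat.{0} S, True → ∀ i, EV S X z (d + 1 + i)) by simp, ← key]
  constructor
  · rintro ⟨N, f, h, rfl, hP⟩
    exact Res.of_seq h hP
  · intro h
    exact h.seq

theorem injdimLE_iff (X : ModuleCat.{0} S) (d : ℕ) :
    InjdimLE S X d ↔ ∀ z : ModuleCat.{0} S, ∀ i, EV S z X (d + 1 + i) := by
  have key := coRes_iff (S := S) (P := fun C => Module.Injective S C) (Z := fun _ => True)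
    (Cl := fun _ => True) (fun C hC z _ i => EV.of_injective hC i)
    (fun X _ h => injective_of_ev fun N _ _ => h (ModuleCat.of S N) trivial)
    (fun X _ => by
      obtain ⟨⟨J, hJ, f, hm⟩⟩ := EnoughInjectives.presentation X
      have hm : Function.Injective f.hom := (ModuleCat.mono_iff_injective _).1 hm
      exact ⟨J, ModuleCat.of S (J ⧸ LinearMap.range f.hom), _, _, SES.ofInj _ hm,
        (Module.injective_iff_injective_object S J).2 hJ, trivial⟩) d X trivial
  rw [show (∀ z : ModuleCat.{0} S, ∀ i, EV S z X (d + 1 + i)) ↔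
    (∀ z : ModuleCat.{0} S, True → ∀ i, EV S z X (d + 1 + i)) by simp, ← key]
  constructor
  · rintro ⟨N, f, h, rfl, hP⟩
    exact CoRes.of_seq h hP
  · intro h
    exact h.seq

end ResLayer

section QHLayer
variable {S : Type} [Ring S] [FD S] {Λ : Type} [Fintype Λ] [PartialOrder Λ] (Q : QHData S Λ)

theorem QHData.inStdFilt_iff (M : ModuleCat.{0} S) :
    InStdFilt S Q M ↔ Filt Q.std (fun _ => True) M :=
  ⟨fun ⟨_, _, _, h⟩ => Filt.of_hasFiltration h (fun _ => trivial), fun h => h.hasFiltration⟩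

theorem QHData.inCostdFilt_iff (M : ModuleCat.{0} S) :
    InCostdFilt S Q M ↔ Filt Q.costd (fun _ => True) M :=
  ⟨fun ⟨_, _, _, h⟩ => Filt.of_hasFiltration h (fun _ => trivial), fun h => h.hasFiltration⟩

theorem QHData.ev_filt {X Y : ModuleCat.{0} S} (hX : Filt Q.std (fun _ => True) X)
    (hY : Filt Q.costd (fun _ => True) Y) (i : ℕ) : EV S X Y (i + 1) :=
  hX.of_ses_ev_left fun l _ => hY.of_ses_ev_right fun m _ => Q.ev_std_costd i l m

theorem QHData.proj_stdFilt (X : ModuleCat.{0} S) (hX : Module.Finite S X)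
    (h : Module.Projective S X) : Filt Q.std (fun _ => True) X :=
  Q.stdFilt_of X hX fun _ => EV.of_projective h 0

theorem QHData.inj_costdFilt (X : ModuleCat.{0} S) (hX : Module.Finite S X)
    (h : Module.Injective S X) : Filt Q.costd (fun _ => True) X :=
  Q.costdFilt_of X hX fun _ => EV.of_injective h 0

theorem QHData.wfdLE_iff (X : ModuleCat.{0} S) (hX : Module.Finite S X) (d : ℕ) :
    WfdLE S Q X d ↔ ∀ l, ∀ i, EV S X (Q.costd l) (d + 1 + i) := by
  have key := res_iff (S := S) (P := fun C => InStdFilt S Q C) (Z := fun z => ∃ l, z = Q.costd l)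
    (Cl := fun X => Module.Finite S X)
    (fun C hC z ⟨l, hl⟩ i => hl ▸ Q.ev_filt ((Q.inStdFilt_iff C).1 hC) (Filt.single l trivial) i)
    (fun X hX h => (Q.inStdFilt_iff X).2 (Q.stdFilt_of X hX fun l => h _ ⟨l, rfl⟩))
    (fun X hX => by
      obtain ⟨n, f, hf⟩ := Module.Finite.exists_fin' S X
      have hfin : Module.Finite S (Fin n → S) := inferInstance
      refine ⟨ModuleCat.of S (LinearMap.ker f), ModuleCat.of S (Fin n → S), _, _,
        SES.ofSurj f hf, (Q.inStdFilt_iff _).2 (Q.proj_stdFilt _ hfin ?_), fg_sub _ hfin⟩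
      show Module.Projective S (Fin n → S)
      infer_instance) d X hX
  rw [show (∀ l, ∀ i, EV S X (Q.costd l) (d + 1 + i)) ↔
    (∀ z : ModuleCat.{0} S, (∃ l, z = Q.costd l) → ∀ i, EV S X z (d + 1 + i)) from
    ⟨fun h z ⟨l, hl⟩ i => hl ▸ h l i, fun h l i => h _ ⟨l, rfl⟩ i⟩, ← key]
  constructor
  · rintro ⟨N, f, h, rfl, hP⟩
    exact Res.of_seq h hP
  · intro h
    exact h.seq

theorem QHData.gfdLE_iff (X : ModuleCat.{0} S) (hX : Module.Finite S X) (d : ℕ) :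
    GfdLE S Q X d ↔ ∀ l, ∀ i, EV S (Q.std l) X (d + 1 + i) := by
  have key := coRes_iff (S := S) (P := fun C => InCostdFilt S Q C) (Z := fun z => ∃ l, z = Q.std l)
    (Cl := fun X => Module.Finite S X)
    (fun C hC z ⟨l, hl⟩ i => hl ▸ Q.ev_filt (Filt.single l trivial) ((Q.inCostdFilt_iff C).1 hC) i)
    (fun X hX h => (Q.inCostdFilt_iff X).2 (Q.costdFilt_of X hX fun l => h _ ⟨l, rfl⟩))
    (fun X hX => by
      obtain ⟨J, hJ, hJi, f, hf⟩ := FD.emb X hX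
      exact ⟨J, ModuleCat.of S (J ⧸ LinearMap.range f), _, _,
        SES.ofInj f hf, (Q.inCostdFilt_iff _).2 (Q.inj_costdFilt _ hJ hJi),
        fg_surj _ (Submodule.mkQ_surjective _) hJ⟩) d X hX
  rw [show (∀ l, ∀ i, EV S (Q.std l) X (d + 1 + i)) ↔
    (∀ z : ModuleCat.{0} S, (∃ l, z = Q.std l) → ∀ i, EV S z X (d + 1 + i)) from
    ⟨fun h z ⟨l, hl⟩ i => hl ▸ h l i, fun h l i => h _ ⟨l, rfl⟩ i⟩, ← key]
  constructor
  · rintro ⟨N, f, h, rfl, hP⟩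
    exact CoRes.of_seq h hP
  · intro h
    exact h.seq

end QHLayer
end
end QHPaper

namespace QHPaper
open CategoryTheory
noncomputable section
set_option linter.unusedSectionVars false

section Approx
variable {S : Type} [Ring S] [FD S] {Λ : Type} [Fintype Λ] [PartialOrder Λ] (Q : QHData S Λ)
variable {A B C M N X Y : Type} [AddCommGroup A] [Module S A] [AddCommGroup B] [Module S B]
  [AddCommGroup C] [Module S C] [AddCommGroup M] [Module S M] [AddCommGroup N] [Module S N]
  [AddCommGroup X] [Module S X] [AddCommGroup Y] [Module S Y]

/-- A monomorphism along which all maps to costandard modules extend. -/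
def QHData.Good (j : X →ₗ[S] M) : Prop :=
  Function.Injective j ∧ ∀ (m : Λ) (u : X →ₗ[S] Q.costd m), ∃ v : M →ₗ[S] Q.costd m,
    ∀ x, v (j x) = u x

theorem QHData.Good.comp {j : X →ₗ[S] M} {j' : M →ₗ[S] N} (h : Q.Good j) (h' : Q.Good j') :
    Q.Good (j' ∘ₗ j) := by
  refine ⟨h'.1.comp h.1, fun m u => ?_⟩
  obtain ⟨v, hv⟩ := h.2 m u
  obtain ⟨w, hw⟩ := h'.2 m v
  exact ⟨w, fun x => by simp [hw, hv]⟩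

theorem QHData.Good.of_retract {j : X →ₗ[S] M} (r : M →ₗ[S] X) (h : ∀ x, r (j x) = x) :
    Q.Good j :=
  ⟨Function.LeftInverse.injective h, fun m u => ⟨u ∘ₗ r, fun x => by simp [h]⟩⟩

theorem QHData.Good.of_ses {f : A →ₗ[S] B} {g : B →ₗ[S] C} (h : SES f g)
    (hC : ∀ m, EV S C (Q.costd m) 1) : Q.Good f :=
  ⟨h.inj, fun m u => h.extend (hC m) u⟩

/-- the cokernel of a good monomorphism into a standardly filtered module -/
theorem QHData.Good.coker {j : X →ₗ[S] M} (h : Q.Good j) (hM : Module.Finite S M)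
    (hE : ∀ m, EV S M (Q.costd m) 1) :
    Filt Q.std (fun _ => True) (ModuleCat.of S (M ⧸ LinearMap.range j)) :=
  Q.stdFilt_of _ (fg_surj _ (Submodule.mkQ_surjective _) hM) fun m =>
    (SES.ofInj j h.1).ev_one_of_extend (hE m) (h.2 m)

theorem QHData.ev_std_filt {X : ModuleCat.{0} S} (hX : Filt Q.std (fun _ => True) X) (m : Λ)
    (i : ℕ) : EV S X (Q.costd m) (i + 1) :=
  hX.of_ses_ev_left fun l _ => Q.ev_std_costd i l m

theorem QHData.filt_std_of_hom {p q : Λ → Prop} {M : ModuleCat.{0} S} (hM : Filt Q.std q M)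
    (hp : ∀ m, (∃ f : M →ₗ[S] Q.costd m, f ≠ 0) → p m) :
    Filt Q.std (fun m => q m ∧ p m) M := by
  induction hM with
  | zero M h => exact .zero _ h
  | step A M i hi f g h hA ih =>
    refine .step A M i ⟨hi, hp i ?_⟩ f g h (ih fun m => ?_)
    · obtain ⟨w, hw⟩ := Q.hom_std_costd_ne i
      refine ⟨w ∘ₗ g, fun h0 => hw (LinearMap.ext fun x => ?_)⟩
      obtain ⟨y, rfl⟩ := h.surj x
      exact LinearMap.congr_fun h0 y
    · rintro ⟨w, hw⟩
      obtain ⟨v, hv⟩ := h.extend (Q.ev_std_costd 0 i m) w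
      refine hp m ⟨v, fun h0 => hw (LinearMap.ext fun x => ?_)⟩
      rw [← hv, h0]; rfl

theorem QHData.exists_good_std {l : Λ} {M : ModuleCat.{0} S} (hM : Filt Q.std (fun m => m ≤ l) M)
    (hl : ∃ f : M →ₗ[S] Q.costd l, f ≠ 0) : ∃ j : Q.std l →ₗ[S] M, Q.Good j := by
  induction hM with
  | zero M h =>
    obtain ⟨f, hf⟩ := hl
    exact absurd (LinearMap.ext fun x => by rw [Subsingleton.elim x 0]; simp) hf
  | step A M i hi f g h hA ih =>
    by_cases hA0 : ∃ f : A →ₗ[S] Q.costd l, f ≠ 0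
    · obtain ⟨j, hj⟩ := ih hA0
      exact ⟨_, hj.comp Q (QHData.Good.of_ses Q h fun m => Q.ev_std_costd 0 i m)⟩
    · have hA' := Q.filt_std_of_hom (p := fun m => m ≠ l) hA (by
        rintro m hm rfl; exact hA0 hm)
      obtain ⟨w, hw⟩ := hl
      push Not at hA0
      obtain ⟨v, hv⟩ := h.desc w (fun a => LinearMap.congr_fun (hA0 (w ∘ₗ f)) a)
      have hil : i = l := by
        by_contra hne
        refine hw (LinearMap.ext fun x => ?_)
        rw [← hv, Q.hom_std_costd hne v]; rfl
      subst hil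
      obtain ⟨s, hs⟩ := (h.split (hA'.of_ses_ev_right fun m hm =>
        Q.ev_std_std (not_lt_of_ge hm.1))).2
      exact ⟨s, QHData.Good.of_retract Q g hs⟩

/-- approximations by powers of `T` -/
theorem QHData.exists_good_pow {T : ModuleCat.{0} S} (hT : Filt Q.costd (fun _ => True) T)
    (hj : ∀ l, ∃ j : Q.std l →ₗ[S] T, Q.Good j) {X : ModuleCat.{0} S}
    (hX : Filt Q.std (fun _ => True) X) : ∃ (n : ℕ) (i : X →ₗ[S] (Fin n → T)), Q.Good i := by
  induction hX with
  | zero X h =>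
    exact ⟨0, 0, Function.injective_of_subsingleton _,
      fun m u => ⟨0, fun x => by rw [Subsingleton.elim x 0]; simp⟩⟩
  | step A X l hl f g h hA ih =>
    obtain ⟨n, iA, hiA⟩ := ih
    obtain ⟨j, hj⟩ := hj l
    have hex : ∀ k, ∃ a : X →ₗ[S] T, ∀ x, a (f x) = iA x k := fun k =>
      h.extend (hT.of_ses_ev_right fun m _ => Q.ev_std_costd 0 l m) (LinearMap.proj k ∘ₗ iA)
    choose a ha using hex
    refine ⟨n + 1, LinearMap.pi (Fin.cons (j ∘ₗ g) a), ?_, fun m u => ?_⟩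
    · refine (injective_iff_map_eq_zero _).2 fun x hx => ?_
      have h0 : j (g x) = 0 := congrFun hx 0
      have h1 := hj.1 (h0.trans (map_zero j).symm)
      obtain ⟨y, rfl⟩ := (h.ex x).1 h1
      have h2 : iA y = 0 := funext fun k => by
        have := congrFun hx k.succ
        rw [← ha]
        exact this
      rw [hiA.1 (h2.trans (map_zero iA).symm), map_zero]
    · obtain ⟨v, hv⟩ := hiA.2 m (u ∘ₗ f)
      obtain ⟨w, hw⟩ := h.desc (u - v ∘ₗ LinearMap.pi a) (fun x => by
        have : LinearMap.pi a (f x) = iA x := funext fun k => ha k x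
        simp [this, hv])
      obtain ⟨w', hw'⟩ := hj.2 m w
      refine ⟨w' ∘ₗ LinearMap.proj 0 + v ∘ₗ LinearMap.funLeft S T Fin.succ, fun x => ?_⟩
      have e1 : LinearMap.funLeft S T Fin.succ (LinearMap.pi (Fin.cons (j ∘ₗ g) a) x) =
        LinearMap.pi a x := rfl
      have e2 : (LinearMap.pi (Fin.cons (j ∘ₗ g) a) x : Fin (n + 1) → T) 0 = j (g x) := rfl
      simp only [LinearMap.add_apply, LinearMap.comp_apply, e1, LinearMap.proj_apply, e2, hw', hw]
      simp

end Approx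

section Approx2
variable {S : Type} [Ring S] [FD S] {Λ : Type} [Fintype Λ] [PartialOrder Λ] (Q : QHData S Λ)

theorem QHData.exists_good_T {T : ModuleCat.{0} S} (hT : Filt Q.std (fun _ => True) T)
    (hf : Module.Finite S T) (Q' : QHData (RingelDualRing S T) Λᵒᵈ) [FD (RingelDualRing S T)]
    (hQ' : ∀ lam : Λ, Nonempty
      (↥(Q'.std (OrderDual.toDual lam)) ≃ₗ[RingelDualRing S T] (↥T →ₗ[S] ↥(Q.costd lam))))
    (l : Λ) : ∃ j : Q.std l →ₗ[S] T, Q.Good j := by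
  obtain ⟨π, hπ, hπt⟩ := Q'.P_top (OrderDual.toDual l)
  have hL := Q'.L_nontrivial (OrderDual.toDual l)
  have hproj := Q'.P_proj (OrderDual.toDual l)
  have hsim := Q'.simpleL (OrderDual.toDual l)
  obtain ⟨y, hy⟩ := exists_ne (0 : Q'.L (OrderDual.toDual l))
  obtain ⟨p, hp⟩ := hπ y
  let r : RingelDualRing S T →ₗ[RingelDualRing S T] Q'.P (OrderDual.toDual l) :=
    LinearMap.toSpanSingleton _ _ p
  have hr : Function.Surjective r := by
    rw [← LinearMap.range_eq_top]
    by_contra hne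
    have h1 : π (r 1) = 0 := hπt _ hne ⟨1, rfl⟩
    simp [r, hp, hy] at h1
  obtain ⟨i, hi⟩ := (SES.ofSurj r hr).lift (EV.of_projective hproj 0) LinearMap.id
  replace hi : ∀ x, r (i x) = x := hi
  set e' : RingelDualRing S T := i p with he'
  have hr1 : r 1 = p := by simp [r]
  have hrs : ∀ s, r s = s • p := fun s => rfl
  have hee : e' * e' = e' := by
    have : e' • p = p := by rw [← hrs, hi]
    calc e' * e' = e' • i p := rfl
      _ = i (e' • p) := (map_smul i e' p).symm
      _ = e' := by rw [this]
  set e : Module.End S T := e'.unop with he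
  have hidem : ∀ x, e (e x) = e x := fun x => by
    have : e * e = e := congrArg MulOpposite.unop hee
    exact LinearMap.congr_fun this x
  -- maps to costandard modules
  have h1 : ∀ m (t : T →ₗ[S] Q.costd m), t ∘ₗ e ≠ 0 → m ≤ l := by
    intro m t ht
    obtain ⟨ε⟩ := hQ' m
    let F : Q'.P (OrderDual.toDual l) →ₗ[RingelDualRing S T] (T →ₗ[S] Q.costd m) :=
      LinearMap.toSpanSingleton _ _ t ∘ₗ i
    have hF : ε.symm.toLinearMap ∘ₗ F ≠ 0 := by
      intro h0
      have h2 : ε.symm (F p) = 0 := LinearMap.congr_fun h0 p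
      rw [LinearEquiv.map_eq_zero_iff] at h2
      exact ht h2
    have := Q'.std_cf (Q'.P_cf _ hF)
    exact this
  have h2 : ∃ t : T →ₗ[S] Q.costd l, t ∘ₗ e ≠ 0 := by
    obtain ⟨ε⟩ := hQ' l
    obtain ⟨q, hq, -⟩ := Q'.std_quot (OrderDual.toDual l)
    refine ⟨ε (q p), fun h0 => ?_⟩
    have h3 : e' • ε (q p) = 0 := h0
    have h4 : e' • p = p := by rw [← hrs, hi]
    rw [← map_smul, ← map_smul, h4, LinearEquiv.map_eq_zero_iff] at h3
    obtain ⟨pp, hpp, -⟩ := Q'.std_top (OrderDual.toDual l)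
    obtain ⟨z, hz⟩ := hpp y
    obtain ⟨z, rfl⟩ := hq z
    obtain ⟨s, rfl⟩ := hr z
    rw [hrs, map_smul, h3] at hz
    simp at hz
    exact hy hz.symm
  let T1 : ModuleCat.{0} S := ModuleCat.of S (LinearMap.range e)
  let inc : T1 →ₗ[S] T := (LinearMap.range e).subtype
  let ret : T →ₗ[S] T1 := e.rangeRestrict
  have hret : ∀ x, ret (inc x) = x := by
    rintro ⟨_, x, rfl⟩
    exact Subtype.ext (hidem x)
  have hT1 : Filt Q.std (fun _ => True) T1 :=
    Q.stdFilt_of T1 (fg_sub _ hf) fun m =>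
      (Q.ev_std_filt hT m 0).retract_left inc ret hret
  have hT2 := Q.filt_std_of_hom (p := fun m => m ≤ l) hT1 (by
    rintro m ⟨f, hf⟩
    refine h1 m (f ∘ₗ ret) fun h0 => hf (LinearMap.ext fun x => ?_)
    have h3 := LinearMap.congr_fun h0 (inc x)
    have h5 : ret (e (inc x)) = x := by
      obtain ⟨_, x, rfl⟩ := x
      exact Subtype.ext ((congrArg e (hidem x)).trans (hidem x))
    have h4 : f (ret (e (inc x))) = 0 := h3
    rw [h5] at h4
    simpa using h4)
  obtain ⟨t, ht⟩ := h2
  obtain ⟨j, hj⟩ := Q.exists_good_std (l := l) (hT2.mono fun m h => h.2) ⟨t ∘ₗ inc, fun h0 =>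
    ht (LinearMap.ext fun x => LinearMap.congr_fun h0 (ret x))⟩
  exact ⟨_, hj.comp Q (QHData.Good.of_retract Q ret hret)⟩

end Approx2
end
end QHPaper

namespace QHPaper
open CategoryTheory
noncomputable section
set_option linter.unusedSectionVars false

section Coind
variable (k S : Type) [Field k] [Ring S] [Algebra k S]

/-- The coinduced module `Hom_k(S, M)`. -/
def Coind (M : Type) [AddCommGroup M] [Module k M] : Type := S →ₗ[k] M

variable {M : Type} [AddCommGroup M] [Module k M]

instance : AddCommGroup (Coind k S M) := inferInstanceAs (AddCommGroup (S →ₗ[k] M))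
instance : Module k (Coind k S M) := inferInstanceAs (Module k (S →ₗ[k] M))

instance coindModule : Module S (Coind k S M) where
  smul s φ := (show S →ₗ[k] M from φ) ∘ₗ LinearMap.mulRight k s
  one_smul φ := LinearMap.ext fun x => congrArg (show S →ₗ[k] M from φ) (mul_one x)
  mul_smul a b φ := LinearMap.ext fun x =>
    congrArg (show S →ₗ[k] M from φ) (mul_assoc x a b).symm
  smul_zero a := rfl
  smul_add a φ ψ := rfl
  add_smul a b φ := LinearMap.ext fun x =>
    (congrArg (show S →ₗ[k] M from φ) (mul_add x a b)).trans (map_add (show S →ₗ[k] M from φ) _ _)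
  zero_smul φ := LinearMap.ext fun x =>
    (congrArg (show S →ₗ[k] M from φ) (mul_zero x)).trans (map_zero (show S →ₗ[k] M from φ))

theorem coind_smul_apply (s : S) (φ : Coind k S M) (x : S) :
    (show S →ₗ[k] M from s • φ) x = (show S →ₗ[k] M from φ) (x * s) := rfl

theorem exists_extend_k {k X Y M : Type} [Field k] [AddCommGroup X] [Module k X] [AddCommGroup Y]
    [Module k Y] [AddCommGroup M] [Module k M] (f : X →ₗ[k] Y) (hf : Function.Injective f)
    (u : X →ₗ[k] M) : ∃ v : Y →ₗ[k] M, ∀ x, v (f x) = u x := by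
  obtain ⟨r, hr⟩ := f.exists_leftInverse_of_injective (LinearMap.ker_eq_bot.2 hf)
  exact ⟨u ∘ₗ r, fun x => by simpa using congrArg u (LinearMap.congr_fun hr x)⟩

theorem coind_injective : Module.Injective S (Coind k S M) := by
  constructor
  intro X Y _ _ _ _ f hf g
  letI : Module k X := Module.compHom X (algebraMap k S)
  letI : Module k Y := Module.compHom Y (algebraMap k S)
  haveI : IsScalarTower k S X := ⟨fun a b x => by rw [Algebra.smul_def, mul_smul]; rfl⟩
  haveI : IsScalarTower k S Y := ⟨fun a b x => by rw [Algebra.smul_def, mul_smul]; rfl⟩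
  let θ : X →ₗ[k] M :=
    { toFun := fun x => (show S →ₗ[k] M from g x) 1
      map_add' := fun x y => by rw [map_add]; rfl
      map_smul' := fun c x => by
        have h1 : c • x = (algebraMap k S c) • x := rfl
        rw [h1, map_smul, coind_smul_apply, one_mul, Algebra.algebraMap_eq_smul_one, map_smul]
        rfl }
  obtain ⟨Θ, hΘ⟩ := exists_extend_k (f.restrictScalars k) hf θ
  let G : Y →ₗ[S] Coind k S M :=
    { toFun := fun y => (show S →ₗ[k] M from Θ ∘ₗ (LinearMap.toSpanSingleton S Y y).restrictScalars k)
      map_add' := fun x y => LinearMap.ext fun s => by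
        show Θ (s • (x + y)) = Θ (s • x) + Θ (s • y)
        rw [smul_add, map_add]
      map_smul' := fun a y => LinearMap.ext fun s => by
        show Θ (s • (a • y)) = Θ ((s * a) • y)
        rw [mul_smul] }
  refine ⟨G, fun x => LinearMap.ext fun s => ?_⟩
  show Θ (s • f x) = _
  rw [← map_smul]
  refine (hΘ (s • x)).trans ?_
  show (show S →ₗ[k] M from g (s • x)) 1 = _
  rw [map_smul, coind_smul_apply, one_mul]

theorem fd_of_algebra [FiniteDimensional k S] : FD S where
  noeth := IsNoetherianRing.of_finite k S
  art := IsArtinianRing.of_finite k S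
  emb := by
    intro M hM
    letI : Module k M := Module.compHom M (algebraMap k S)
    haveI : IsScalarTower k S M := ⟨fun a b x => by rw [Algebra.smul_def, mul_smul]; rfl⟩
    haveI : Module.Finite k M := Module.Finite.trans S M
    haveI : Module.Finite k (Coind k S M) := inferInstanceAs (Module.Finite k (S →ₗ[k] M))
    haveI : IsScalarTower k S (Coind k S M) := ⟨fun a b x => LinearMap.ext fun s => by
      show (show S →ₗ[k] M from x) (s * (a • b)) = a • (show S →ₗ[k] M from x) (s * b)
      rw [mul_smul_comm, map_smul]⟩
    refine ⟨ModuleCat.of S (Coind k S M), Module.Finite.of_restrictScalars_finite k S _,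
      coind_injective k S, ?_⟩
    refine ⟨{ toFun := fun y => (show S →ₗ[k] M from (LinearMap.toSpanSingleton S M y).restrictScalars k)
              map_add' := fun x y => LinearMap.ext fun s => smul_add s x y
              map_smul' := fun a y => LinearMap.ext fun s => (mul_smul s a y).symm }, ?_⟩
    intro x y hxy
    have : (1 : S) • x = (1 : S) • y := LinearMap.congr_fun hxy (1 : S)
    simpa using this

end Coind

section HomFunctor
variable (k : Type) {S : Type} [Field k] [Ring S] [Algebra k S] [FiniteDimensional k S]
variable (T : ModuleCat.{0} S) [Module k T] [IsScalarTower k S T]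

theorem fd_ringel [Module.Finite k T] : FiniteDimensional k (RingelDualRing S T) := by
  have h : FiniteDimensional k (Module.End S T) := by
    let f : Module.End S T →ₗ[k] (T →ₗ[k] T) :=
      { toFun := fun u => u.restrictScalars k
        map_add' := fun _ _ => rfl
        map_smul' := fun _ _ => rfl }
    refine Module.Finite.of_injective f fun u v h => LinearMap.ext fun x => ?_
    exact LinearMap.congr_fun h x
  exact Module.Finite.equiv (MulOpposite.opLinearEquiv k)

theorem hom_fd [Module.Finite k T] (X : Type) [AddCommGroup X] [Module S X]
    (hX : Module.Finite S X) : FiniteDimensional k (X →ₗ[S] T) := by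
  obtain ⟨n, f, hf⟩ := Module.Finite.exists_fin' S X
  let F : (X →ₗ[S] T) →ₗ[k] (Fin n → T) :=
    { toFun := fun u j => u (f (Pi.single j 1))
      map_add' := fun _ _ => rfl
      map_smul' := fun _ _ => rfl }
  refine Module.Finite.of_injective F fun u v h => ?_
  have h2 : u ∘ₗ f = v ∘ₗ f := by
    refine LinearMap.pi_ext' fun j => LinearMap.ext_ring ?_
    exact congrFun h j
  refine LinearMap.ext fun x => ?_
  obtain ⟨y, rfl⟩ := hf x
  exact LinearMap.congr_fun h2 y

/-- The functor `X ↦ Hom_S(X, T)^*`. -/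
def GM (X : Type) [AddCommGroup X] [Module S X] : Type := (X →ₗ[S] T) →ₗ[k] k

variable {X Y Z M : Type} [AddCommGroup X] [Module S X] [AddCommGroup Y] [Module S Y]
  [AddCommGroup Z] [Module S Z] [AddCommGroup M] [Module S M]

instance : AddCommGroup (GM k T X) := inferInstanceAs (AddCommGroup ((X →ₗ[S] T) →ₗ[k] k))
instance : Module k (GM k T X) := inferInstanceAs (Module k ((X →ₗ[S] T) →ₗ[k] k))

/-- evaluation -/
def GM.ev (φ : GM k T X) : (X →ₗ[S] T) →ₗ[k] k := φ

variable {k T}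

theorem GM.ext {φ ψ : GM k T X} (h : ∀ t, φ.ev k T t = ψ.ev k T t) : φ = ψ := LinearMap.ext h

variable (k T)

/-- postcomposition with an endomorphism of `T` -/
def postc (X : Type) [AddCommGroup X] [Module S X] (a : Module.End S T) :
    (X →ₗ[S] T) →ₗ[k] (X →ₗ[S] T) where
  toFun h := a ∘ₗ h
  map_add' h h' := LinearMap.comp_add _ _ _
  map_smul' c h := LinearMap.ext fun x => by
    show a (c • h x) = c • a (h x)
    exact (a.restrictScalars k).map_smul c (h x)

instance gmModule : Module (RingelDualRing S T) (GM k T X) where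
  smul a φ := φ.ev k T ∘ₗ postc k T X a.unop
  one_smul φ := rfl
  mul_smul a b φ := rfl
  smul_zero a := rfl
  smul_add a φ ψ := rfl
  add_smul a b φ := GM.ext fun h => by
    show φ.ev k T ((a.unop + b.unop) ∘ₗ h) = φ.ev k T (a.unop ∘ₗ h) + φ.ev k T (b.unop ∘ₗ h)
    rw [LinearMap.add_comp, map_add]
  zero_smul φ := GM.ext fun h => by
    show φ.ev k T ((0 : Module.End S T) ∘ₗ h) = 0
    rw [LinearMap.zero_comp, map_zero]

theorem gm_smul (a : RingelDualRing S T) (φ : GM k T X) (h : X →ₗ[S] T) :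
    (a • φ).ev k T h = φ.ev k T (a.unop ∘ₗ h) := rfl
theorem gm_add (φ ψ : GM k T X) (h : X →ₗ[S] T) :
    (φ + ψ).ev k T h = φ.ev k T h + ψ.ev k T h := rfl
theorem gm_zero (h : X →ₗ[S] T) : (0 : GM k T X).ev k T h = 0 := rfl

instance : IsScalarTower k (RingelDualRing S T) (GM k T X) := ⟨fun a b x => GM.ext fun h => by
  show x.ev k T ((a • b.unop) ∘ₗ h) = a • x.ev k T (b.unop ∘ₗ h)
  rw [← map_smul]; rfl⟩

theorem gm_finite [Module.Finite k T] (hX : Module.Finite S X) :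
    Module.Finite (RingelDualRing S T) (GM k T X) := by
  have := hom_fd k T X hX
  have : Module.Finite k (GM k T X) := inferInstanceAs (Module.Finite k ((X →ₗ[S] T) →ₗ[k] k))
  exact Module.Finite.of_restrictScalars_finite k _ _

/-- precomposition -/
def prec (f : X →ₗ[S] Y) : (Y →ₗ[S] T) →ₗ[k] (X →ₗ[S] T) where
  toFun h := h ∘ₗ f
  map_add' _ _ := rfl
  map_smul' _ _ := rfl

/-- functoriality -/
def gmap (f : X →ₗ[S] Y) : GM k T X →ₗ[RingelDualRing S T] GM k T Y where
  toFun φ := φ.ev k T ∘ₗ prec k T f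
  map_add' _ _ := rfl
  map_smul' _ _ := rfl

theorem gmap_apply (f : X →ₗ[S] Y) (φ : GM k T X) (h : Y →ₗ[S] T) :
    (gmap k T f φ).ev k T h = φ.ev k T (h ∘ₗ f) := rfl

theorem gm_ses {f : X →ₗ[S] Y} {g : Y →ₗ[S] Z} (h : SES f g) (hZ : EV S Z T 1) :
    SES (gmap k T f) (gmap k T g) := by
  have hs : SES (prec k T g) (prec k T f) := by
    refine ⟨?_, ?_, ?_⟩
    · intro u v huv
      refine LinearMap.ext fun z => ?_
      obtain ⟨y, rfl⟩ := h.surj z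
      exact LinearMap.congr_fun huv y
    · intro u
      obtain ⟨v, hv⟩ := h.extend hZ u
      exact ⟨v, LinearMap.ext hv⟩
    · intro b
      constructor
      · intro hb
        obtain ⟨v, hv⟩ := h.desc b (fun a => LinearMap.congr_fun hb a)
        exact ⟨v, LinearMap.ext hv⟩
      · rintro ⟨v, rfl⟩
        refine LinearMap.ext fun x => ?_
        show v (g (f x)) = 0
        rw [h.comp_zero, map_zero]
  refine ⟨?_, ?_, ?_⟩
  · intro φ ψ hφ
    refine GM.ext fun t => ?_
    obtain ⟨v, rfl⟩ := hs.surj t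
    exact LinearMap.congr_fun hφ v
  · intro ψ
    obtain ⟨v, hv⟩ := exists_extend_k _ hs.inj (ψ.ev k T)
    exact ⟨v, GM.ext hv⟩
  · intro φ
    constructor
    · intro hφ
      obtain ⟨v, hv⟩ := hs.desc (φ.ev k T) (fun a => LinearMap.congr_fun hφ a)
      exact ⟨v, GM.ext hv⟩
    · rintro ⟨ψ, rfl⟩
      refine GM.ext fun t => ?_
      show ψ.ev k T (prec k T f (prec k T g t)) = 0
      rw [hs.comp_zero, map_zero]

/-- `G(T^n)` is injective. -/
theorem gm_pow_injective (n : ℕ) :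
    Module.Injective (RingelDualRing S T) (GM k T (Fin n → T)) := by
  constructor
  intro X Y _ _ _ _ f hf g
  letI : Module k X := Module.compHom X (algebraMap k (RingelDualRing S T))
  letI : Module k Y := Module.compHom Y (algebraMap k (RingelDualRing S T))
  haveI : IsScalarTower k (RingelDualRing S T) X :=
    ⟨fun a b x => by rw [Algebra.smul_def, mul_smul]; rfl⟩
  haveI : IsScalarTower k (RingelDualRing S T) Y :=
    ⟨fun a b x => by rw [Algebra.smul_def, mul_smul]; rfl⟩
  let θ : Fin n → X →ₗ[k] k := fun j =>
    { toFun := fun x => (g x).ev k T (LinearMap.proj j)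
      map_add' := fun x y => by rw [map_add]; rfl
      map_smul' := fun c x => by
        have h1 : g (c • x) = c • g x := (g.restrictScalars k).map_smul c x
        rw [h1]; rfl }
  have hex : ∀ j, ∃ Θ : Y →ₗ[k] k, ∀ x, Θ (f x) = θ j x := fun j =>
    exists_extend_k (f.restrictScalars k) hf (θ j)
  choose Θ hΘ using hex
  let comp (j : Fin n) (h : (Fin n → T) →ₗ[S] T) : RingelDualRing S T :=
    MulOpposite.op (h ∘ₗ LinearMap.single S (fun _ => T) j)
  let G : Y →ₗ[RingelDualRing S T] GM k T (Fin n → T) :=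
    { toFun := fun y => (show ((Fin n → T) →ₗ[S] T) →ₗ[k] k from
        { toFun := fun h => ∑ j, Θ j (comp j h • y)
          map_add' := fun h h' => by
            rw [← Finset.sum_add_distrib]
            refine Finset.sum_congr rfl fun j _ => ?_
            rw [← map_add, ← add_smul]; rfl
          map_smul' := fun c h => by
            rw [Finset.smul_sum]
            refine Finset.sum_congr rfl fun j _ => ?_
            rw [← map_smul, ← smul_assoc]; rfl })
      map_add' := fun x y => GM.ext fun h => by
        show ∑ j, Θ j (comp j h • (x + y)) = ∑ j, Θ j (comp j h • x) + ∑ j, Θ j (comp j h • y)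
        simp only [smul_add, map_add, Finset.sum_add_distrib]
      map_smul' := fun a y => GM.ext fun h => by
        show ∑ j, Θ j (comp j h • (a • y)) = ∑ j, Θ j (comp j (a.unop ∘ₗ h) • y)
        refine Finset.sum_congr rfl fun j _ => ?_
        rw [← mul_smul]; rfl }
  refine ⟨G, fun x => GM.ext fun h => ?_⟩
  show ∑ j, Θ j (comp j h • f x) = _
  have h1 : ∀ j, Θ j (comp j h • f x) =
      (g x).ev k T ((h ∘ₗ LinearMap.single S (fun _ => T) j) ∘ₗ LinearMap.proj j) := fun j => by
    rw [← map_smul, hΘ]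
    show (g (comp j h • x)).ev k T (LinearMap.proj j) = _
    rw [map_smul]; rfl
  simp only [h1]
  rw [← map_sum]
  congr 1
  refine LinearMap.ext fun y => ?_
  rw [LinearMap.sum_apply]
  show ∑ j, h (Pi.single j (y j)) = h y
  rw [← map_sum, Finset.univ_sum_single]

end HomFunctor
end
end QHPaper

namespace QHPaper
open CategoryTheory
noncomputable section
set_option linter.unusedSectionVars false

theorem Filt.pow {S : Type} [Ring S] {ι : Type} {D : ι → ModuleCat.{0} S} {p : ι → Prop}
    {T : ModuleCat.{0} S} (hT : Filt D p T) (n : ℕ) : Filt D p (ModuleCat.of S (Fin n → T)) := by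
  induction n with
  | zero => exact .zero _ (inferInstanceAs (Subsingleton (Fin 0 → T)))
  | succ n ih =>
    refine ih.ext (A := T) (B := ModuleCat.of S (Fin (n + 1) → T))
      (f := LinearMap.single S (fun _ => T) (0 : Fin (n + 1)))
      (g := LinearMap.funLeft S T Fin.succ) ⟨?_, ?_, ?_⟩ hT
    · exact Pi.single_injective (M := fun _ => T) (0 : Fin (n + 1))
    · intro y
      exact ⟨Fin.cons 0 y, funext fun j => rfl⟩
    · intro b
      constructor
      · intro hb
        refine ⟨b 0, funext fun j => ?_⟩
        refine Fin.cases ?_ (fun j => ?_) j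
        · simp
        · have h1 : b j.succ = 0 := congrFun hb j
          simpa using h1.symm
      · rintro ⟨a, rfl⟩
        refine funext fun j => ?_
        show (Pi.single 0 a : Fin (n + 1) → T) j.succ = 0
        simp

section Main
variable (k : Type) {S : Type} [Field k] [Ring S] [Algebra k S] [FiniteDimensional k S]
variable {Λ : Type} [Fintype Λ] [PartialOrder Λ] (Q : QHData S Λ)
variable (T : ModuleCat.{0} S) [Module k T] [IsScalarTower k S T] [Module.Finite k T]
variable [FD S] [FD (RingelDualRing S T)]

/-- The hypotheses on `T` over `S`. -/
structure QHData.TSetup : Prop where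
  fs : Filt Q.std (fun _ => True) T
  fc : Filt Q.costd (fun _ => True) T
  fin : Module.Finite S T
  good : ∀ l, ∃ j : Q.std l →ₗ[S] T, Q.Good j

variable {Q T}

theorem QHData.TSetup.copres (hT : Q.TSetup T) {X : ModuleCat.{0} S} (hX : Filt Q.std (fun _ => True) X) :
    ∃ (n : ℕ) (C : ModuleCat.{0} S) (i : X →ₗ[S] (Fin n → T)) (π : (Fin n → T) →ₗ[S] C),
      SES i π ∧ Filt Q.std (fun _ => True) C := by
  obtain ⟨n, i, hi⟩ := Q.exists_good_pow hT.fc hT.good hX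
  have := hT.fin
  refine ⟨n, ModuleCat.of S ((Fin n → T) ⧸ LinearMap.range i), i, _, SES.ofInj i hi.1,
    hi.coker Q inferInstance fun m => Q.ev_std_filt (hT.fs.pow n) m 0⟩

theorem QHData.TSetup.ev_T (hT : Q.TSetup T) {X : ModuleCat.{0} S} (hX : Filt Q.std (fun _ => True) X) (i : ℕ) :
    EV S X T (i + 1) := Q.ev_filt hX hT.fc i

/-- faithfulness -/
theorem QHData.TSetup.faithful (hT : Q.TSetup T) {X : ModuleCat.{0} S} (hX : Filt Q.std (fun _ => True) X)
    (f : X →ₗ[S] X) (hf : ∀ φ : GM k T X, gmap k T f φ = φ) (x : X) : f x = x := by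
  obtain ⟨n, C, i, π, h, hC⟩ := hT.copres hX
  apply h.inj
  refine funext fun j => ?_
  have h1 : (LinearMap.proj j ∘ₗ i : X →ₗ[S] T) ∘ₗ f = LinearMap.proj j ∘ₗ i := by
    rw [← sub_eq_zero, ← Module.forall_dual_apply_eq_zero_iff k]
    intro φ
    have h2 : φ ((LinearMap.proj j ∘ₗ i : X →ₗ[S] T) ∘ₗ f) = φ (LinearMap.proj j ∘ₗ i) :=
      congrArg (fun z => GM.ev k T z ((LinearMap.proj j : (Fin n → T) →ₗ[S] T) ∘ₗ i)) (hf φ)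
    rw [map_sub, h2, sub_self]
  exact LinearMap.congr_fun h1 x

/-- fullness -/
theorem QHData.TSetup.full (hT : Q.TSetup T) {M C : ModuleCat.{0} S} (hC : Filt Q.std (fun _ => True) C)
    (hM : Module.Finite S M) (u : GM k T M →ₗ[RingelDualRing S T] GM k T C) :
    ∃ g : M →ₗ[S] C, u = gmap k T g := by
  obtain ⟨n, C2, i, π, h, hC2⟩ := hT.copres hC
  obtain ⟨m, C3, i', π', h', hC3⟩ := hT.copres hC2
  have := hom_fd k T M hM
  have huk : ∀ (c : k) (y : GM k T M), u (c • y) = c • u y := fun c y =>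
    (u.restrictScalars k).map_smul c y
  have hex : ∀ t : C →ₗ[S] T, ∃ s : M →ₗ[S] T, ∀ y : GM k T M, (u y).ev k T t = y.ev k T s := by
    intro t
    let F : Module.Dual k (Module.Dual k (M →ₗ[S] T)) :=
      { toFun := fun y => (u y).ev k T t
        map_add' := fun x y =>
          congrArg (fun z => GM.ev k T z t) (map_add u (show GM k T M from x) (show GM k T M from y))
        map_smul' := fun c x =>
          congrArg (fun z => GM.ev k T z t) (huk c (show GM k T M from x)) }
    refine ⟨(Module.evalEquiv k (M →ₗ[S] T)).symm F, fun y => ?_⟩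
    have h1 := (Module.evalEquiv k (M →ₗ[S] T)).apply_symm_apply F
    exact (LinearMap.congr_fun h1 y).symm
  choose φ hφ using hex
  have huniq : ∀ s s' : M →ₗ[S] T, (∀ y : GM k T M, y.ev k T s = y.ev k T s') → s = s' :=
    fun s s' hs => (Module.evalEquiv k (M →ₗ[S] T)).injective (LinearMap.ext hs)
  have hadd : ∀ (J : Type) [Fintype J] (t : J → C →ₗ[S] T), φ (∑ j, t j) = ∑ j, φ (t j) := by
    intro J _ t
    refine huniq _ _ fun y => ?_
    rw [← hφ, map_sum, map_sum]
    exact Finset.sum_congr rfl fun j _ => hφ _ _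
  have hcomp : ∀ (a : Module.End S T) t, φ (a ∘ₗ t) = a ∘ₗ φ t := by
    intro a t
    refine huniq _ _ fun y => ?_
    rw [← hφ]
    have h1 : (u y).ev k T (a ∘ₗ t) = (u (MulOpposite.op a • y)).ev k T t := by
      rw [map_smul]; rfl
    rw [h1, hφ]; rfl
  have hzero : φ 0 = 0 := by simpa using hadd Empty (fun _ => 0)
  -- decomposition
  have hdec : ∀ (v : (Fin n → T) →ₗ[S] T), φ (v ∘ₗ i) =
      v ∘ₗ LinearMap.pi (fun j => φ (LinearMap.proj j ∘ₗ i)) := by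
    intro v
    have h1 : ∀ (W : Type) [AddCommGroup W] [Module S W] (w : W →ₗ[S] (Fin n → T)),
        v ∘ₗ w = ∑ j, (v ∘ₗ LinearMap.single S (fun _ => T) j) ∘ₗ (LinearMap.proj j ∘ₗ w) := by
      intro W _ _ w
      refine LinearMap.ext fun x => ?_
      rw [LinearMap.sum_apply]
      show v (w x) = ∑ j, v (Pi.single j (w x j))
      rw [← map_sum, Finset.univ_sum_single]
    rw [h1 C i, hadd, h1 M]
    refine Finset.sum_congr rfl fun j _ => ?_
    exact hcomp _ _
  obtain ⟨g, hg⟩ := h.factor (LinearMap.pi (fun j => φ (LinearMap.proj j ∘ₗ i))) (by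
    intro x
    apply h'.inj
    rw [map_zero]
    refine funext fun j => ?_
    have h1 := hdec (LinearMap.proj j ∘ₗ i' ∘ₗ π)
    have h2 : (LinearMap.proj j ∘ₗ i' ∘ₗ π) ∘ₗ i = (0 : C →ₗ[S] T) := by
      refine LinearMap.ext fun x => ?_
      show i' (π (i x)) j = 0
      rw [h.comp_zero, map_zero]; rfl
    rw [h2, hzero] at h1
    exact (LinearMap.congr_fun h1 x).symm)
  refine ⟨g, LinearMap.ext fun y => GM.ext fun t => ?_⟩
  rw [gmap_apply, hφ]
  congr 1
  obtain ⟨v, hv⟩ := h.extend (hT.ev_T hC2 0) t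
  have hvt : v ∘ₗ i = t := LinearMap.ext hv
  rw [← hvt, hdec]
  refine LinearMap.ext fun x => ?_
  show v _ = v (i (g x))
  rw [hg]

/-- maps from `Hom(T, M)` to `G C` -/
theorem QHData.TSetup.full_hom (hT : Q.TSetup T) {M C : ModuleCat.{0} S} [Module k M] [IsScalarTower k S M]
    (hC : Filt Q.std (fun _ => True) C) (hM : Filt Q.costd (fun _ => True) M)
    (u : (T →ₗ[S] M) →ₗ[RingelDualRing S T] GM k T C) :
    ∃ θ : (C →ₗ[S] M) →ₗ[k] k, ∀ t h, (u t).ev k T h = θ (t ∘ₗ h) := by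
  obtain ⟨n, C2, i, π, h, hC2⟩ := hT.copres hC
  obtain ⟨m, C3, i', π', h', hC3⟩ := hT.copres hC2
  have huk : ∀ (c : k) (t : T →ₗ[S] M), u (c • t) = c • u t := fun c t => by
    have e1 : c • t = (c • (1 : RingelDualRing S T)) • t := LinearMap.ext fun x => by
      show c • t x = t (c • x)
      exact ((t.restrictScalars k).map_smul c x).symm
    rw [e1, map_smul, smul_assoc, one_smul]
  have hucomp : ∀ (t : T →ₗ[S] M) (a : Module.End S T) (s : C →ₗ[S] T),
      (u (t ∘ₗ a)).ev k T s = (u t).ev k T (a ∘ₗ s) := fun t a s => by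
    have e1 : t ∘ₗ a = MulOpposite.op a • t := rfl
    rw [e1, map_smul]; rfl
  let R : ((Fin n → T) →ₗ[S] M) →ₗ[k] (C →ₗ[S] M) :=
    { toFun := fun v => v ∘ₗ i, map_add' := fun _ _ => rfl, map_smul' := fun _ _ => rfl }
  have hR : Function.Surjective R := fun w => by
    obtain ⟨v, hv⟩ := h.extend (Q.ev_filt hC2 hM 0) w
    exact ⟨v, LinearMap.ext hv⟩
  let Θ : ((Fin n → T) →ₗ[S] M) →ₗ[k] k :=
    { toFun := fun v => ∑ j, (u (v ∘ₗ LinearMap.single S (fun _ => T) j)).ev k T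
        (LinearMap.proj j ∘ₗ i)
      map_add' := fun v w => by
        rw [← Finset.sum_add_distrib]
        refine Finset.sum_congr rfl fun j _ => ?_
        rw [LinearMap.add_comp, map_add]; rfl
      map_smul' := fun c v => by
        rw [Finset.smul_sum]
        refine Finset.sum_congr rfl fun j _ => ?_
        rw [LinearMap.smul_comp, huk]; rfl }
  have hΘ : ∀ (t : T →ₗ[S] M) (v : (Fin n → T) →ₗ[S] T), Θ (t ∘ₗ v) = (u t).ev k T (v ∘ₗ i) := by
    intro t v
    show ∑ j, (u ((t ∘ₗ v) ∘ₗ LinearMap.single S (fun _ => T) j)).ev k T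
        (LinearMap.proj j ∘ₗ i) = _
    have h1 : v ∘ₗ i = ∑ j, (v ∘ₗ LinearMap.single S (fun _ => T) j) ∘ₗ (LinearMap.proj j ∘ₗ i) := by
      refine LinearMap.ext fun x => ?_
      rw [LinearMap.sum_apply]
      show v (i x) = ∑ j, v (Pi.single j (i x j))
      rw [← map_sum, Finset.univ_sum_single]
    rw [h1, map_sum]
    refine Finset.sum_congr rfl fun j _ => ?_
    rw [← hucomp]; rfl
  obtain ⟨θ, hθ⟩ := (SES.ofSurj R hR).desc Θ (by
    rintro ⟨v, hv⟩
    show Θ v = 0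
    obtain ⟨w, hw⟩ := h.desc v (fun a => LinearMap.congr_fun hv a)
    obtain ⟨b, hb⟩ := h'.extend (Q.ev_filt hC3 hM 0) w
    have e1 : v = ∑ l, (b ∘ₗ LinearMap.single S (fun _ => T) l) ∘ₗ
        (LinearMap.proj l ∘ₗ i' ∘ₗ π) := by
      refine LinearMap.ext fun x => ?_
      rw [LinearMap.sum_apply]
      show v x = ∑ l, b (Pi.single l (i' (π x) l))
      rw [← map_sum, Finset.univ_sum_single, hb, hw]
    rw [e1, map_sum]
    refine Finset.sum_eq_zero fun l _ => ?_
    rw [hΘ]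
    have e2 : (LinearMap.proj l ∘ₗ i' ∘ₗ π) ∘ₗ i = (0 : C →ₗ[S] T) := by
      refine LinearMap.ext fun x => ?_
      show i' (π (i x)) l = 0
      rw [h.comp_zero, map_zero]; rfl
    rw [e2, map_zero])
  refine ⟨θ, fun t s => ?_⟩
  obtain ⟨v, hv⟩ := h.extend (hT.ev_T hC2 0) s
  have hvt : v ∘ₗ i = s := LinearMap.ext hv
  rw [← hvt, ← hΘ, ← hθ]
  rfl

end Main
end
end QHPaper

namespace QHPaper
open CategoryTheory
noncomputable section
set_option linter.unusedSectionVars false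

section Main
variable (k : Type) {S : Type} [Field k] [Ring S] [Algebra k S] [FiniteDimensional k S]
variable {Λ : Type} [Fintype Λ] [PartialOrder Λ] {Q : QHData S Λ}
variable {T : ModuleCat.{0} S} [Module k T] [IsScalarTower k S T] [Module.Finite k T]
variable [FD S] [FD (RingelDualRing S T)]

theorem QHData.TSetup.gses (hT : Q.TSetup T) {A B C : ModuleCat.{0} S} {f : A →ₗ[S] B}
    {g : B →ₗ[S] C} (h : SES f g) (hC : Filt Q.std (fun _ => True) C) :
    SES (gmap k T f) (gmap k T g) := gm_ses k T h (hT.ev_T hC 0)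

theorem QHData.TSetup.stdfin {X : ModuleCat.{0} S}
    (hX : Filt Q.std (fun _ => True) X) : Module.Finite S X := hX.finite Q.std_fg

theorem QHData.TSetup.ev_gm_gm (hT : Q.TSetup T) {M N : ModuleCat.{0} S}
    (hN : Filt Q.std (fun _ => True) N) (hM : Module.Finite S M) (h1 : EV S M N 1) :
    EV (RingelDualRing S T) (GM k T M) (GM k T N) 1 := by
  obtain ⟨n, C, i, π, h, hC⟩ := hT.copres hN
  have hG := gm_ses k T h (hT.ev_T hC 0)
  refine hG.ev_one_of_lift (EV.of_injective (gm_pow_injective k T n) 0) fun u => ?_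
  obtain ⟨g, rfl⟩ := hT.full k hC hM u
  obtain ⟨v, hv⟩ := h.lift h1 g
  refine ⟨gmap k T v, fun y => GM.ext fun t => ?_⟩
  rw [gmap_apply, gmap_apply, gmap_apply]
  congr 1
  exact LinearMap.ext fun x => congrArg t (hv x)

variable (Q' : QHData (RingelDualRing S T) Λᵒᵈ)
    (hQ' : ∀ lam : Λ, Nonempty
      (↥(Q'.std (OrderDual.toDual lam)) ≃ₗ[RingelDualRing S T] (↥T →ₗ[S] ↥(Q.costd lam))))

theorem QHData.TSetup.ev_std_gm (hT : Q.TSetup T) (hQ' : ∀ lam : Λ, Nonempty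
      (↥(Q'.std (OrderDual.toDual lam)) ≃ₗ[RingelDualRing S T] (↥T →ₗ[S] ↥(Q.costd lam))))
    {X : ModuleCat.{0} S} (hX : Filt Q.std (fun _ => True) X) (m : Λ) :
    EV (RingelDualRing S T) (Q'.std (OrderDual.toDual m)) (GM k T X) 1 := by
  obtain ⟨ε⟩ := hQ' m
  refine EV.congr_left ε ?_
  let : Module k (Q.costd m) := Module.compHom _ (algebraMap k S)
  have : IsScalarTower k S (Q.costd m) := ⟨fun a b x => by rw [Algebra.smul_def, mul_smul]; rfl⟩
  obtain ⟨n, C, i, π, h, hC⟩ := hT.copres hX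
  have hG := gm_ses k T h (hT.ev_T hC 0)
  refine hG.ev_one_of_lift (EV.of_injective (gm_pow_injective k T n) 0) fun u => ?_
  obtain ⟨θ, hθ⟩ := hT.full_hom k hC (Filt.single m trivial) u
  let R : (C →ₗ[S] Q.costd m) →ₗ[k] ((Fin n → T) →ₗ[S] Q.costd m) :=
    { toFun := fun v => v ∘ₗ π, map_add' := fun _ _ => rfl, map_smul' := fun _ _ => rfl }
  have hR : Function.Injective R := fun v w hvw => LinearMap.ext fun x => by
    obtain ⟨y, rfl⟩ := h.surj x
    exact LinearMap.congr_fun hvw y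
  obtain ⟨Θ, hΘ⟩ := exists_extend_k R hR θ
  let v : (T →ₗ[S] Q.costd m) →ₗ[RingelDualRing S T] GM k T (Fin n → T) :=
    { toFun := fun t => (show ((Fin n → T) →ₗ[S] T) →ₗ[k] k from
        { toFun := fun h => Θ (t ∘ₗ h)
          map_add' := fun h h' => by rw [LinearMap.comp_add, map_add]
          map_smul' := fun c h => by
            rw [← map_smul]
            congr 1
            exact LinearMap.ext fun x => (t.restrictScalars k).map_smul c (h x) })
      map_add' := fun t t' => GM.ext fun h => by
        show Θ ((t + t') ∘ₗ h) = Θ (t ∘ₗ h) + Θ (t' ∘ₗ h)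
        rw [LinearMap.add_comp, map_add]
      map_smul' := fun a t => GM.ext fun h => rfl }
  refine ⟨v, fun t => GM.ext fun s => ?_⟩
  rw [hθ, ← hΘ]
  rfl

theorem QHData.TSetup.gm_costdFilt (hT : Q.TSetup T) (hQ' : ∀ lam : Λ, Nonempty
      (↥(Q'.std (OrderDual.toDual lam)) ≃ₗ[RingelDualRing S T] (↥T →ₗ[S] ↥(Q.costd lam))))
    {X : ModuleCat.{0} S} (hX : Filt Q.std (fun _ => True) X) :
    Filt Q'.costd (fun _ => True) (ModuleCat.of (RingelDualRing S T) (GM k T X)) :=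
  Q'.costdFilt_of _ (gm_finite k T (TSetup.stdfin hX)) fun m => hT.ev_std_gm k Q' hQ' hX m.ofDual

theorem QHData.filt_costd_of_hom {R : Type} [Ring R] [FD R] {Λ : Type} [Fintype Λ] [PartialOrder Λ]
    (Q : QHData R Λ) {p q : Λ → Prop} {M : ModuleCat.{0} R} (hM : Filt Q.costd q M)
    (hp : ∀ m, (∃ f : Q.std m →ₗ[R] M, f ≠ 0) → p m) :
    Filt Q.costd p M := by
  induction hM with
  | zero M h => exact .zero _ h
  | step A M i hi f g h hA ih =>
    refine .step A M i (hp i ?_) f g h (ih fun m => ?_)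
    · obtain ⟨w, hw⟩ := Q.hom_std_costd_ne i
      obtain ⟨v, hv⟩ := h.lift (hA.of_ses_ev_right fun m _ => Q.ev_std_costd 0 i m) w
      refine ⟨v, fun h0 => hw (LinearMap.ext fun x => ?_)⟩
      rw [← hv, h0]
      simp
    · rintro ⟨w, hw⟩
      refine hp m ⟨f ∘ₗ w, fun h0 => hw (LinearMap.ext fun x => h.inj ?_)⟩
      simpa using LinearMap.congr_fun h0 x

theorem QHData.TSetup.gm_std_filt (hT : Q.TSetup T) (hQ' : ∀ lam : Λ, Nonempty
      (↥(Q'.std (OrderDual.toDual lam)) ≃ₗ[RingelDualRing S T] (↥T →ₗ[S] ↥(Q.costd lam))))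
    (l : Λ) : Filt Q'.costd (fun m => m = OrderDual.toDual l)
      (ModuleCat.of (RingelDualRing S T) (GM k T (Q.std l))) := by
  have hX : Filt Q.std (fun _ => True) (Q.std l) := Filt.single l trivial
  refine Q'.filt_costd_of_hom (hT.gm_costdFilt k Q' hQ' hX) ?_
  rintro m ⟨f, hf⟩
  by_contra hne
  obtain ⟨ε⟩ := hQ' m.ofDual
  let : Module k (Q.costd m.ofDual) := Module.compHom _ (algebraMap k S)
  have : IsScalarTower k S (Q.costd m.ofDual) :=
    ⟨fun a b x => by rw [Algebra.smul_def, mul_smul]; rfl⟩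
  obtain ⟨θ, hθ⟩ := hT.full_hom k hX (Filt.single m.ofDual trivial) (f ∘ₗ ε.symm.toLinearMap)
  refine hf (LinearMap.ext fun x => GM.ext fun t => ?_)
  have h1 := hθ (ε x) t
  have h2 : (f ∘ₗ ε.symm.toLinearMap) (ε x) = f x :=
    congrArg f (ε.symm_apply_apply x)
  have h3 : (ε x) ∘ₗ t = 0 := Q.hom_std_costd (fun h => hne (by rw [h]; rfl)) _
  rw [h2, h3, map_zero] at h1
  exact h1

theorem QHData.TSetup.gm_std_retract (hT : Q.TSetup T) (hQ' : ∀ lam : Λ, Nonempty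
      (↥(Q'.std (OrderDual.toDual lam)) ≃ₗ[RingelDualRing S T] (↥T →ₗ[S] ↥(Q.costd lam))))
    (l : Λ) : ∃ (i : Q'.costd (OrderDual.toDual l) →ₗ[RingelDualRing S T] GM k T (Q.std l))
      (r : GM k T (Q.std l) →ₗ[RingelDualRing S T] Q'.costd (OrderDual.toDual l)),
      ∀ x, r (i x) = x := by
  have hF := hT.gm_std_filt k Q' hQ' l
  obtain ⟨j, hj⟩ := hT.good l
  have hjne : j ≠ 0 := by
    obtain ⟨w, hw⟩ := Q.hom_std_costd_ne l
    rintro rfl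
    refine hw (LinearMap.ext fun x => ?_)
    have : x = 0 := hj.1 (by simp)
    rw [this, map_zero, map_zero]
  have hnt : ¬ Subsingleton (GM k T (Q.std l)) := by
    intro hs
    refine hjne ((Module.forall_dual_apply_eq_zero_iff k j).1 fun φ => ?_)
    have h1 : (show GM k T (Q.std l) from φ) = 0 := Subsingleton.elim _ _
    exact congrArg (fun z => GM.ev k T z j) h1
  revert hF hnt
  generalize hY : ModuleCat.of (RingelDualRing S T) (GM k T (Q.std l)) = Y
  intro hF hnt
  have key : ∃ (i : Q'.costd (OrderDual.toDual l) →ₗ[RingelDualRing S T] Y)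
      (r : Y →ₗ[RingelDualRing S T] Q'.costd (OrderDual.toDual l)), ∀ x, r (i x) = x := by
    cases hF with
    | zero _ h => subst hY; exact absurd h hnt
    | step A _ i hi f g h hA =>
      subst hi
      obtain ⟨s, hs⟩ := (h.split (hA.of_ses_ev_right fun m hm => by
        subst hm; exact Q'.ev_costd_costd le_rfl)).2
      exact ⟨s, g, hs⟩
  subst hY
  exact key

/-- images of projective modules are standardly filtered -/
theorem QHData.TSetup.gm_proj (hT : Q.TSetup T) (hQ' : ∀ lam : Λ, Nonempty
      (↥(Q'.std (OrderDual.toDual lam)) ≃ₗ[RingelDualRing S T] (↥T →ₗ[S] ↥(Q.costd lam))))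
    {X : ModuleCat.{0} S} (hX : Module.Finite S X) (hP : Module.Projective S X) :
    Filt Q'.std (fun _ => True) (ModuleCat.of (RingelDualRing S T) (GM k T X)) := by
  refine Q'.stdFilt_of _ (gm_finite k T hX) fun m => ?_
  obtain ⟨i, r, hir⟩ := hT.gm_std_retract k Q' hQ' m.ofDual
  exact EV.retract_right i r hir (hT.ev_gm_gm k (Filt.single m.ofDual trivial) hX
    (EV.of_projective hP 0))

theorem QHData.exists_pres {X : ModuleCat.{0} S} (hX : Filt Q.std (fun _ => True) X) :
    ∃ (K P : ModuleCat.{0} S) (f : K →ₗ[S] P) (g : P →ₗ[S] X), SES f g ∧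
      Module.Projective S P ∧ Module.Finite S P ∧ Filt Q.std (fun _ => True) P ∧
      Filt Q.std (fun _ => True) K := by
  have hXf := TSetup.stdfin hX
  obtain ⟨n, g, hg⟩ := Module.Finite.exists_fin' S X
  have hP : Module.Projective S (Fin n → S) := inferInstance
  have hPf : Module.Finite S (Fin n → S) := inferInstance
  have h := SES.ofSurj g hg
  refine ⟨ModuleCat.of S (LinearMap.ker g), ModuleCat.of S (Fin n → S), _, g, h, hP, hPf,
    Q.proj_stdFilt _ hPf hP, Q.stdFilt_of _ (fg_sub _ hPf) fun m => ?_⟩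
  exact h.ev_sub_left (EV.of_projective hP 0) (Q.ev_std_filt hX m 1)

theorem QHData.TSetup.main1 (hT : Q.TSetup T) (hQ' : ∀ lam : Λ, Nonempty
      (↥(Q'.std (OrderDual.toDual lam)) ≃ₗ[RingelDualRing S T] (↥T →ₗ[S] ↥(Q.costd lam))))
    (d : ℕ) : ∀ {X : ModuleCat.{0} S}, Filt Q.std (fun _ => True) X →
    ((∀ z : ModuleCat.{0} S, ∀ i, EV S X z (d + 1 + i)) ↔
      ∀ m i, EV (RingelDualRing S T) (GM k T X) (Q'.costd m) (d + 1 + i)) := by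
  induction d with
  | zero =>
    intro X hX
    constructor
    · intro h m i
      have hP : Module.Projective S X := projective_of_ev fun N _ _ => h (ModuleCat.of S N) 0
      have h1 := Q'.ev_std_filt (hT.gm_proj k Q' hQ' (TSetup.stdfin hX) hP) m i
      rw [show 0 + 1 + i = i + 1 by omega]
      exact h1
    · intro h z i
      obtain ⟨K, P, f, g, hs, hP, hPf, hPF, hK⟩ := QHData.exists_pres hX
      have hG := hT.gses k hs hX
      have hev : EV (RingelDualRing S T) (GM k T X) (GM k T K) 1 :=
        (hT.gm_costdFilt k Q' hQ' hK).of_ses_ev_right fun m _ => h m 0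
      obtain ⟨s, hss⟩ := (hG.split hev).2
      obtain ⟨t, rfl⟩ := hT.full k hPF (TSetup.stdfin hX) s
      have ht := hT.faithful k hX (g ∘ₗ t) hss
      rw [show 0 + 1 + i = i + 1 by omega]
      exact EV.retract_left t g ht (EV.of_projective hP i)
  | succ d ih =>
    intro X hX
    obtain ⟨K, P, f, g, hs, hP, hPf, hPF, hK⟩ := QHData.exists_pres hX
    have hG := hT.gses k hs hX
    have hGP := hT.gm_proj k Q' hQ' hPf hP
    have ihK := ih hK
    have e : ∀ i, d + 1 + 1 + i = (d + 1 + i) + 1 := fun i => by omega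
    have e' : ∀ i, d + 1 + i = (d + i) + 1 := fun i => by omega
    constructor
    · intro h m i
      rw [e]
      refine hG.ev_quot_left (ihK.1 (fun z i => ?_) m i) (Q'.ev_std_filt hGP m _)
      have h2 := h z i
      rw [e] at h2
      refine hs.ev_sub_left ?_ h2
      rw [e']
      exact EV.of_projective hP _
    · intro h z i
      rw [e]
      refine hs.ev_quot_left (ihK.2 (fun m i => ?_) z i) (EV.of_projective hP _)
      have h2 := h m i
      rw [e] at h2
      refine hG.ev_sub_left ?_ h2
      rw [e']
      exact Q'.ev_std_filt hGP m _

theorem QHData.TSetup.main2 (hT : Q.TSetup T) (d : ℕ) :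
    ∀ {X : ModuleCat.{0} S}, Filt Q.std (fun _ => True) X →
    ((∀ l i, EV S (Q.std l) X (d + 1 + i)) ↔
      ∀ z : ModuleCat.{0} (RingelDualRing S T), ∀ i,
        EV (RingelDualRing S T) z (GM k T X) (d + 1 + i)) := by
  have hTn : ∀ n l i, EV S (Q.std l) (Fin n → T) (i + 1) := fun n l i =>
    (hT.fc.pow n).of_ses_ev_right fun m _ => Q.ev_std_costd i l m
  induction d with
  | zero =>
    intro X hX
    obtain ⟨n, C, f, g, hs, hC⟩ := hT.copres hX
    have hTF := hT.fs.pow n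
    have hG := gm_ses k T hs (hT.ev_T hC 0)
    have e : ∀ i, 0 + 1 + i = i + 1 := fun i => by omega
    constructor
    · intro h z i
      obtain ⟨r, hr⟩ := (hs.split (hC.of_ses_ev_left fun l _ => h l 0)).1
      rw [e]
      refine EV.retract_right (gmap k T f) (gmap k T r) (fun φ => GM.ext fun t => ?_)
        (EV.of_injective (gm_pow_injective k T n) i)
      rw [gmap_apply, gmap_apply]
      congr 1
      exact LinearMap.ext fun x => congrArg t (hr x)
    · intro h l i
      obtain ⟨r, hr⟩ := (hG.split (h (ModuleCat.of _ (GM k T C)) 0)).1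
      have hfin : Module.Finite S (Fin n → T) := TSetup.stdfin hTF
      obtain ⟨t, ht⟩ := hT.full k (M := ModuleCat.of S (Fin n → T)) hX hfin r
      subst ht
      have ht := hT.faithful k hX (t ∘ₗ f) hr
      rw [e]
      exact EV.retract_right f t ht (hTn n l i)
  | succ d ih =>
    intro X hX
    obtain ⟨n, C, f, g, hs, hC⟩ := hT.copres hX
    have hG := gm_ses k T hs (hT.ev_T hC 0)
    have hinj := gm_pow_injective k T n
    have ihC := ih hC
    have e : ∀ i, d + 1 + 1 + i = (d + 1 + i) + 1 := fun i => by omega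
    have e' : ∀ i, d + 1 + i = (d + i) + 1 := fun i => by omega
    constructor
    · intro h z i
      rw [e]
      refine hG.ev_sub_right (ihC.1 (fun l i => ?_) z i) (EV.of_injective hinj _)
      have h2 := h l i
      rw [e] at h2
      refine hs.ev_quot_right ?_ h2
      rw [e']
      exact hTn n l _
    · intro h l i
      rw [e]
      refine hs.ev_sub_right (ihC.2 (fun z i => ?_) l i) (hTn n l _)
      have h2 := h z i
      rw [e] at h2
      refine hG.ev_quot_right ?_ h2
      rw [e']
      exact EV.of_injective hinj _

end Main
end

end QHPaper

open QHPaper in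
/-- Let `S` be a quasi-hereditary algebra with Ringel dual `S'`. For every
`lam ∈ Λ⁺`, the projective dimension of the standard module `Δ(lam)` of `S` equals the
Δ-filtration dimension of the costandard module `∇'(lam)` of `S'`, and the ∇-filtration
dimension of `Δ(lam)` equals the injective dimension of `∇'(lam)`. -/
theorem stmt7 (k S Λ : Type) [Field k] [Ring S] [Algebra k S] [FiniteDimensional k S]
    [Fintype Λ] [PartialOrder Λ]
    (QH : QHData S Λ) (T : ModuleCat.{0} S)
    (QH' : QHData (RingelDualRing S T) Λᵒᵈ)
    (hRD : IsRingelDualData S QH T QH') (lam : Λ) :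
    projdim S (QH.std lam) =
      wfd (RingelDualRing S T) QH' (QH'.costd (OrderDual.toDual lam)) ∧
    gfd S QH (QH.std lam) =
      injdim (RingelDualRing S T) (QH'.costd (OrderDual.toDual lam)) := by
  obtain ⟨⟨⟨hs, hc⟩, hfin, -⟩, hQ'⟩ := hRD
  let : Module k T := Module.compHom _ (algebraMap k S)
  have : IsScalarTower k S T := ⟨fun a b x => by rw [Algebra.smul_def, mul_smul]; rfl⟩
  have : Module.Finite k T := Module.Finite.trans S T
  have hFD : FD S := fd_of_algebra k S
  have := fd_ringel k T
  have hFD' : FD (RingelDualRing S T) := fd_of_algebra k _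
  rw [QH.inStdFilt_iff] at hs
  rw [QH.inCostdFilt_iff] at hc
  have hT : QH.TSetup T := ⟨hs, hc, hfin, QH.exists_good_T hs hfin QH' hQ'⟩
  have hX : Filt QH.std (fun _ => True) (QH.std lam) := Filt.single lam trivial
  have hF := hT.gm_std_filt k QH' hQ' lam
  obtain ⟨i, r, hir⟩ := hT.gm_std_retract k QH' hQ' lam
  constructor
  · unfold projdim wfd
    congr 1
    ext d
    show ProjdimLE S _ d ↔ WfdLE _ QH' _ d
    rw [projdimLE_iff, QH'.wfdLE_iff _ (QH'.costd_fg _), hT.main1 k QH' hQ' d hX]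
    constructor
    · intro h m j
      exact EV.retract_left i r hir (h m j)
    · intro h m j
      exact hF.of_ses_ev_left fun l hl => by subst hl; exact h m j
  · unfold gfd injdim
    congr 1
    ext d
    show GfdLE S QH _ d ↔ InjdimLE _ _ d
    rw [injdimLE_iff, QH.gfdLE_iff _ (QH.std_fg _), hT.main2 k d hX]
    constructor
    · intro h z j
      exact EV.retract_right i r hir (h z j)
    · intro h z j
      exact hF.of_ses_ev_right fun l hl => by subst hl; exact h z j
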